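/- arXiv:1409.6714 — 3 statements merged into one kernel-verified Lean document; each statement's English description precedes it below -/
import Mathlib

section
/- Let D ⊆ ℝ^d be a Borel set, ρ a probability density on D, and H a Hilbert space of real-valued functions on D with reproducing kernel K : D × D → ℝ (that is, K(·,y) ∈ H and ⟨f, K(·,y)⟩_H = f(y) for all f ∈ H, y ∈ D). Assume K(x,y) ≥ 0 for all x, y ∈ D, that C_init := ( ∫_D ∫_D K(x,y) ρ(x) ρ(y) dx dy )^{1/2} < ∞, that the functional S(f) = ∫_D f(x) ρ(x) dx is continuous on H, and that there is no subset of D of positive measure on which all functions of H vanish. Then there exists a probability density τ on D with τ > 0 such that for every n ≥ 1 and every f ∈ H with ‖f‖_H ≤ 1, if x_1,…,x_n are independent random points each distributed with density τ, then E[ ( S(f) − (1/n) Σ_{j=1}^n f(x_j) ρ(x_j)/τ(x_j) )² ] ≤ (π/2) · (1/n) · C_init². -/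
/-!
Write `h(x) = ∫_D K(x,y) ρ(y) dy`, so that `∫_D h ρ = C_init²`. By a Schur test, nonnegativity of the
kernel gives `∫_D f² ρ / h ≤ ‖f‖²` for all `f ∈ H`: for a test function `g`,
`(∫ f g ρ)² ≤ ‖f‖² ∬ K(x,y) g(x) g(y) ρ(x) ρ(y) ≤ ‖f‖² ∫ g² h ρ`,
where the last step is `2 g(x) g(y) ≤ g(x)² + g(y)²`, and `g = f / h` is the right choice.
Importance sampling with `τ = ρ h / C_init²` therefore has second moment
`∫ f² ρ² / τ ≤ C_init²`, so the constant `1` would do in place of `π/2`. The room left by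
`1 < π/2` is spent on perturbing `τ` to `(ρ (h + δ) + δ w) / Z` with an integrable `w > 0`, which is
positive everywhere. If `C_init = 0`, the estimate `∫ f² ρ / (h + ε) ≤ ‖f‖²` for all `ε > 0` forces
`f ρ = 0` almost everywhere, and the error vanishes.

The estimate is `lintegral_sq_div_le`, applied to the feature map `x ↦ K(·,x)` with values in the
completion of `H`; the passage to `n` samples is `lintegral_sq_sub_average_le`.
-/

open MeasureTheory Set
open scoped ENNReal

section Schur

variable {X V : Type*} [MeasurableSpace X] [NormedAddCommGroup V] [InnerProductSpace ℝ V]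
  [CompleteSpace V]

/-- Schur-type estimate for the weak integral of `g • Φ`: since the kernel is nonnegative,
`‖∫ g • Φ‖² = ∬ K(x,y) g(x) g(y) ≤ ∬ K(x,y) (g(x)² + g(y)²)/2 = ∫ g(x)² (∫ K(x,y) dy) dx`.
The map `Φ` need not be measurable into `V`; the a.e. bound `hbd`, with an exceptional set
depending on `v`, is enough to form the weak integral by Riesz representation. -/
lemma sq_integral_inner_mul_le (ν : Measure X) [IsFiniteMeasure ν] (Φ : X → V)
    (hmeas : ∀ v : V, AEMeasurable (fun x => inner ℝ v (Φ x)) ν)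
    (N : ℝ) (hbd : ∀ v : V, ∀ᵐ x ∂ν, |inner ℝ v (Φ x)| ≤ N * ‖v‖)
    (hpos : ∀ x y, 0 ≤ inner ℝ (Φ x) (Φ y))
    (hK : Integrable (fun z : X × X => inner ℝ (Φ z.1) (Φ z.2)) (ν.prod ν))
    (g : X → ℝ) (hg : AEStronglyMeasurable g ν) (B : ℝ) (hgB : ∀ᵐ x ∂ν, |g x| ≤ B) (v : V) :
    (∫ x, inner ℝ v (Φ x) * g x ∂ν) ^ 2
      ≤ ‖v‖ ^ 2 * ∫ x, g x ^ 2 * (∫ y, inner ℝ (Φ x) (Φ y) ∂ν) ∂ν := by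
  have hgint : Integrable g ν := Integrable.of_bound hg B hgB
  have hint : ∀ v : V, Integrable (fun x => inner ℝ v (Φ x) * g x) ν := fun v =>
    hgint.bdd_mul (hmeas v).aestronglyMeasurable (hbd v)
  let L₀ : V →ₗ[ℝ] ℝ :=
    { toFun := fun v => ∫ x, inner ℝ v (Φ x) * g x ∂ν
      map_add' := fun a b => by
        rw [← integral_add (hint a) (hint b)]
        simp only [inner_add_left, add_mul]
      map_smul' := fun c a => by
        simp only [inner_smul_left, RingHom.id_apply, smul_eq_mul, mul_assoc,
          integral_const_mul]
        simp }
  let L : StrongDual ℝ V := L₀.mkContinuous (N * ∫ x, |g x| ∂ν) fun v => by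
    have h1 : ‖L₀ v‖ ≤ ∫ x, (N * ‖v‖) * |g x| ∂ν := by
      refine norm_integral_le_of_norm_le (hgint.abs.const_mul _) ?_
      filter_upwards [hbd v] with x hx
      rw [norm_mul]
      exact mul_le_mul_of_nonneg_right hx (norm_nonneg _)
    rw [integral_const_mul] at h1
    linarith [h1]
  have hL : ∀ w : V, L w = ∫ x, inner ℝ w (Φ x) * g x ∂ν := fun w => rfl
  -- the Riesz representer of `v ↦ ∫ ⟨v, Φ x⟩ g x`, i.e. the weak integral of `g • Φ`
  let u : V := (InnerProductSpace.toDual ℝ V).symm L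
  have hu : ∀ w : V, inner ℝ u w = L w := fun w => InnerProductSpace.toDual_symm_apply
  have hg1 : AEStronglyMeasurable (fun z : X × X => g z.1) (ν.prod ν) := hg.comp_fst
  have hg2 : AEStronglyMeasurable (fun z : X × X => g z.2) (ν.prod ν) := hg.comp_snd
  have hb1 : ∀ᵐ z ∂(ν.prod ν), |g z.1| ≤ B := Measure.quasiMeasurePreserving_fst.ae hgB
  have hb2 : ∀ᵐ z ∂(ν.prod ν), |g z.2| ≤ B := Measure.quasiMeasurePreserving_snd.ae hgB
  have i12 : Integrable (fun z : X × X => g z.1 * (g z.2 * inner ℝ (Φ z.1) (Φ z.2)))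
      (ν.prod ν) := (hK.bdd_mul hg2 hb2).bdd_mul hg1 hb1
  have i11 : Integrable (fun z : X × X => g z.1 * (g z.1 * inner ℝ (Φ z.1) (Φ z.2)))
      (ν.prod ν) := (hK.bdd_mul hg1 hb1).bdd_mul hg1 hb1
  have i22 : Integrable (fun z : X × X => g z.2 * (g z.2 * inner ℝ (Φ z.1) (Φ z.2)))
      (ν.prod ν) := (hK.bdd_mul hg2 hb2).bdd_mul hg2 hb2
  have hnorm : ‖u‖ ^ 2 = ∫ z, g z.1 * (g z.2 * inner ℝ (Φ z.1) (Φ z.2)) ∂(ν.prod ν) := by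
    rw [← real_inner_self_eq_norm_sq, hu, hL, integral_prod _ i12]
    refine integral_congr_ae (Filter.Eventually.of_forall fun x => ?_)
    simp only
    rw [hu, hL, integral_const_mul, mul_comm]
    congr 1
    refine integral_congr_ae (Filter.Eventually.of_forall fun y => ?_)
    simp only
    ring
  have e11 : ∫ z, g z.1 * (g z.1 * inner ℝ (Φ z.1) (Φ z.2)) ∂(ν.prod ν)
      = ∫ x, g x ^ 2 * (∫ y, inner ℝ (Φ x) (Φ y) ∂ν) ∂ν := by
    rw [integral_prod _ i11]
    refine integral_congr_ae (Filter.Eventually.of_forall fun x => ?_)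
    simp only [integral_const_mul]
    ring
  have e22 : ∫ z, g z.2 * (g z.2 * inner ℝ (Φ z.1) (Φ z.2)) ∂(ν.prod ν)
      = ∫ x, g x ^ 2 * (∫ y, inner ℝ (Φ x) (Φ y) ∂ν) ∂ν := by
    rw [← e11, ← integral_prod_swap]
    refine integral_congr_ae (Filter.Eventually.of_forall fun z => ?_)
    simp only [Prod.fst_swap, Prod.snd_swap, real_inner_comm]
  have hle : ‖u‖ ^ 2 ≤ ∫ x, g x ^ 2 * (∫ y, inner ℝ (Φ x) (Φ y) ∂ν) ∂ν := by
    have h2 : 2 * ∫ z, g z.1 * (g z.2 * inner ℝ (Φ z.1) (Φ z.2)) ∂(ν.prod ν)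
        ≤ (∫ z, g z.1 * (g z.1 * inner ℝ (Φ z.1) (Φ z.2)) ∂(ν.prod ν))
          + ∫ z, g z.2 * (g z.2 * inner ℝ (Φ z.1) (Φ z.2)) ∂(ν.prod ν) := by
      rw [← integral_const_mul, ← integral_add i11 i22]
      refine integral_mono (i12.const_mul 2) (i11.add i22) fun z => ?_
      nlinarith [mul_nonneg (sq_nonneg (g z.1 - g z.2)) (hpos z.1 z.2)]
    rw [e11, e22] at h2
    rw [hnorm]
    linarith
  have hcs : |inner ℝ u v| ≤ ‖u‖ * ‖v‖ := abs_real_inner_le_norm u v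
  rw [hu, hL] at hcs
  calc (∫ x, inner ℝ v (Φ x) * g x ∂ν) ^ 2
      = |∫ x, inner ℝ v (Φ x) * g x ∂ν| ^ 2 := (sq_abs _).symm
    _ ≤ (‖u‖ * ‖v‖) ^ 2 := pow_le_pow_left₀ (abs_nonneg _) hcs 2
    _ = ‖v‖ ^ 2 * ‖u‖ ^ 2 := by ring
    _ ≤ _ := mul_le_mul_of_nonneg_left hle (sq_nonneg _)

/-- The choice `g = ⟨v, Φ⟩ / (h + δ)` in `sq_integral_inner_mul_le` gives `I² ≤ ‖v‖² I` for the
integral `I` in question, hence `I ≤ ‖v‖²`. -/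
lemma lintegral_sq_div_le_of_bounded (ν : Measure X) [IsFiniteMeasure ν] (Φ : X → V)
    (hmeas : ∀ v : V, AEMeasurable (fun x => inner ℝ v (Φ x)) ν)
    (N : ℝ) (hbd : ∀ v : V, ∀ᵐ x ∂ν, |inner ℝ v (Φ x)| ≤ N * ‖v‖)
    (hpos : ∀ x y, 0 ≤ inner ℝ (Φ x) (Φ y))
    (hK : Integrable (fun z : X × X => inner ℝ (Φ z.1) (Φ z.2)) (ν.prod ν))
    (h : X → ℝ) (hh : Measurable h) (hh0 : ∀ x, 0 ≤ h x)
    (hle : ∀ᵐ x ∂ν, ∫ y, inner ℝ (Φ x) (Φ y) ∂ν ≤ h x) (δ : ℝ) (hδ : 0 < δ) (v : V) :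
    ∫⁻ x, ENNReal.ofReal (inner ℝ v (Φ x) ^ 2 / (h x + δ)) ∂ν ≤ ENNReal.ofReal (‖v‖ ^ 2) := by
  have hp : ∀ x, 0 < h x + δ := fun x => by linarith [hh0 x]
  set f : X → ℝ := fun x => inner ℝ v (Φ x) with hf
  have hgm : AEMeasurable (fun x => f x / (h x + δ)) ν :=
    (hmeas v).div (hh.add_const δ).aemeasurable
  have hgB : ∀ᵐ x ∂ν, |f x / (h x + δ)| ≤ N * ‖v‖ / δ := by
    filter_upwards [hbd v] with x hx
    rw [abs_div, abs_of_pos (hp x)]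
    exact div_le_div₀ ((abs_nonneg _).trans hx) hx hδ (by linarith [hh0 x])
  have key := sq_integral_inner_mul_le ν Φ hmeas N hbd hpos hK _ hgm.aestronglyMeasurable _ hgB v
  have hI : Integrable (fun x => f x ^ 2 / (h x + δ)) ν := by
    have := (Integrable.of_bound hgm.aestronglyMeasurable _ hgB).bdd_mul
      (hmeas v).aestronglyMeasurable (hbd v)
    refine this.congr (Filter.Eventually.of_forall fun x => ?_)
    simp only [hf]; ring
  have e1 : ∫ x, inner ℝ v (Φ x) * (f x / (h x + δ)) ∂ν = ∫ x, f x ^ 2 / (h x + δ) ∂ν := by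
    congr 1; ext x; simp only [hf]; ring
  have e2 : ∫ x, (f x / (h x + δ)) ^ 2 * (∫ y, inner ℝ (Φ x) (Φ y) ∂ν) ∂ν
      ≤ ∫ x, f x ^ 2 / (h x + δ) ∂ν := by
    refine integral_mono_of_nonneg (Filter.Eventually.of_forall fun x =>
      mul_nonneg (sq_nonneg _) (integral_nonneg fun y => hpos x y)) hI ?_
    filter_upwards [hle] with x hx
    calc (f x / (h x + δ)) ^ 2 * (∫ y, inner ℝ (Φ x) (Φ y) ∂ν)
        ≤ (f x / (h x + δ)) ^ 2 * (h x + δ) :=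
          mul_le_mul_of_nonneg_left (by linarith) (sq_nonneg _)
      _ = f x ^ 2 / (h x + δ) := by have := (hp x).ne'; field_simp
  have hnn : ∀ x, 0 ≤ f x ^ 2 / (h x + δ) := fun x => div_nonneg (sq_nonneg _) (hp x).le
  rw [e1] at key
  rw [← ofReal_integral_eq_lintegral_ofReal hI (Filter.Eventually.of_forall hnn)]
  refine ENNReal.ofReal_le_ofReal ?_
  have h0 : 0 ≤ ∫ x, f x ^ 2 / (h x + δ) ∂ν := integral_nonneg hnn
  have key2 := key.trans (mul_le_mul_of_nonneg_left e2 (sq_nonneg ‖v‖))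
  by_contra hlt
  push Not at hlt
  nlinarith [sq_nonneg ‖v‖]

/-- The boundedness assumption of `lintegral_sq_div_le_of_bounded` is removed by exhausting `X`
with the sets `{‖Φ‖ ≤ N}`. These may fail to be measurable (`V` is not assumed separable), but each
function `⟨v, Φ⟩` is still bounded by `N ‖v‖` almost everywhere for the restricted measure. -/
lemma lintegral_sq_div_le (μ : Measure X) [IsFiniteMeasure μ] (Φ : X → V)
    (hmeas : ∀ v : V, AEMeasurable (fun x => inner ℝ v (Φ x)) μ)
    (hpos : ∀ x y, 0 ≤ inner ℝ (Φ x) (Φ y))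
    (hK : Integrable (fun z : X × X => inner ℝ (Φ z.1) (Φ z.2)) (μ.prod μ))
    (h : X → ℝ) (hh : Measurable h) (hh0 : ∀ x, 0 ≤ h x)
    (hle : ∀ᵐ x ∂μ, ∫ y, inner ℝ (Φ x) (Φ y) ∂μ ≤ h x) (δ : ℝ) (hδ : 0 < δ) (v : V) :
    ∫⁻ x, ENNReal.ofReal (inner ℝ v (Φ x) ^ 2 / (h x + δ)) ∂μ ≤ ENNReal.ofReal (‖v‖ ^ 2) := by
  let s : ℕ → Set X := fun N => {x | ‖Φ x‖ ≤ N}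
  have hmono : Monotone s := fun a b hab x (hx : ‖Φ x‖ ≤ a) =>
    hx.trans (Nat.cast_le.mpr hab)
  have hU : ⋃ N, s N = univ := by
    refine eq_univ_of_forall fun x => mem_iUnion.2 ?_
    exact exists_nat_ge ‖Φ x‖
  rw [← setLIntegral_univ, ← hU, setLIntegral_iUnion_of_directed _ hmono.directed_le]
  refine iSup_le fun N => ?_
  have hm : ∀ v : V, AEMeasurable (fun x => inner ℝ v (Φ x)) (μ.restrict (s N)) :=
    fun v => (hmeas v).restrict
  refine lintegral_sq_div_le_of_bounded (μ.restrict (s N)) Φ hm N (fun w => ?_) hpos ?_ h hh hh0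
    ?_ δ hδ v
  · refine (ae_restrict_iff₀ (nullMeasurableSet_le
      (continuous_abs.measurable.comp_aemeasurable (hm w)) aemeasurable_const)).2 ?_
    refine Filter.Eventually.of_forall fun x (hx : ‖Φ x‖ ≤ N) => ?_
    calc |inner ℝ w (Φ x)| ≤ ‖w‖ * ‖Φ x‖ := abs_real_inner_le_norm _ _
      _ ≤ ‖w‖ * N := mul_le_mul_of_nonneg_left hx (norm_nonneg _)
      _ = N * ‖w‖ := mul_comm _ _
  · rw [Measure.prod_restrict]
    exact hK.restrict
  · refine ae_mono Measure.restrict_le_self ?_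
    filter_upwards [hle, hK.prod_right_ae] with x hx hxi
    refine le_trans (integral_mono_measure Measure.restrict_le_self
      (Filter.Eventually.of_forall fun y => hpos x y) hxi) hx

end Schur

/-- The mean square error of the Monte Carlo average of `n` independent samples is at most the
second moment of the integrand divided by `n`. -/
lemma lintegral_sq_sub_average_le {X : Type*} [MeasurableSpace X] (P : Measure X)
    [IsProbabilityMeasure P] (F : X → ℝ) (hF : AEStronglyMeasurable F P) (M : ℝ) (hM : 0 ≤ M)
    (hFM : ∫⁻ x, ENNReal.ofReal (F x ^ 2) ∂P ≤ ENNReal.ofReal M) (n : ℕ) (hn : 1 ≤ n) :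
    ∫⁻ x : Fin n → X, ENNReal.ofReal (((∫ y, F y ∂P) - (1 / n : ℝ) * ∑ j, F (x j)) ^ 2)
        ∂(Measure.pi fun _ : Fin n => P)
      ≤ ENNReal.ofReal (M * (1 / n)) := by
  have hsq : Integrable (fun x => F x ^ 2) P := by
    refine ⟨hF.pow 2, ?_⟩
    rw [hasFiniteIntegral_iff_ofReal (Filter.Eventually.of_forall fun x => sq_nonneg _)]
    exact hFM.trans_lt ENNReal.ofReal_lt_top
  have hL : MemLp F 2 P := (memLp_two_iff_integrable_sq hF).2 hsq
  have hL1 : Integrable F P := hL.integrable (by norm_num)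
  have hn0 : (0 : ℝ) < n := by exact_mod_cast hn
  have hvar : ProbabilityTheory.variance F P ≤ M := by
    refine (ProbabilityTheory.variance_le_expectation_sq hF).trans ?_
    rw [← ofReal_integral_eq_lintegral_ofReal hsq
      (Filter.Eventually.of_forall fun x => sq_nonneg _)] at hFM
    exact (ENNReal.ofReal_le_ofReal_iff hM).1 hFM
  have hLj : ∀ j : Fin n, MemLp (fun x : Fin n → X => F (x j)) 2 (Measure.pi fun _ => P) :=
    fun j => hL.comp_measurePreserving (measurePreserving_eval (fun _ : Fin n => P) j)
  let Y : (Fin n → X) → ℝ := ∑ j, fun x => F (x j)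
  have hYval : ∀ x, Y x = ∑ j, F (x j) := fun x => by simp [Y]
  have hY : MemLp Y 2 (Measure.pi fun _ : Fin n => P) := memLp_finsetSum' _ fun j _ => hLj j
  have hvY : ProbabilityTheory.variance Y (Measure.pi fun _ : Fin n => P)
      = n * ProbabilityTheory.variance F P := by
    have := ProbabilityTheory.variance_sum_pi (μ := fun _ : Fin n => P) (X := fun _ => F)
      (fun _ => hL)
    simpa using this
  have hEY : ∫ x, Y x ∂(Measure.pi fun _ : Fin n => P) = n * ∫ y, F y ∂P := by
    simp only [hYval]
    rw [integral_finsetSum _ fun j _ => (hLj j).integrable (by norm_num)]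
    simp only [integral_comp_eval (μ := fun _ : Fin n => P) hF]
    simp
  have e : ∀ x : Fin n → X, ENNReal.ofReal (((∫ y, F y ∂P) - (1 / n : ℝ) * ∑ j, F (x j)) ^ 2)
      = ENNReal.ofReal ((1 / n : ℝ) ^ 2) * ENNReal.ofReal
        ((Y x - ∫ x, Y x ∂(Measure.pi fun _ : Fin n => P)) ^ 2) := fun x => by
    rw [← ENNReal.ofReal_mul (sq_nonneg _), hEY, hYval]
    congr 1
    field_simp
    ring
  simp only [e]
  rw [lintegral_const_mul' _ _ ENNReal.ofReal_ne_top,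
    ← ProbabilityTheory.evariance_eq_lintegral_ofReal,
    ← ProbabilityTheory.ofReal_variance hY, hvY, ← ENNReal.ofReal_mul (sq_nonneg _)]
  refine ENNReal.ofReal_le_ofReal ?_
  calc (1 / n : ℝ) ^ 2 * (n * ProbabilityTheory.variance F P)
      = ProbabilityTheory.variance F P * (1 / n) := by field_simp
    _ ≤ M * (1 / n) := mul_le_mul_of_nonneg_right hvar (by positivity)

/-- Hinrichs: let `H` be a reproducing kernel Hilbert space of real functions on a
Borel set `D ⊆ ℝ^d` (realized by a linear embedding `T : H →ₗ ((Fin d → ℝ) → ℝ)`,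
kernel sections `KH y ∈ H` with `T (KH y) = K(·,y)` and the reproducing property
`⟨f, KH y⟩ = T f y` on `D`), with pointwise nonnegative integrable kernel `K`, let
`ρ` be a probability density on `D` such that `S f = ∫_D (T f) ρ` is continuous on
`H`, and assume no subset of `D` of positive measure exists on which all functions
of `H` vanish.  Then there is a positive probability density `τ` on `D` such that for
all `n ≥ 1` and all `f` in the unit ball of `H`, importance sampling with `n` i.i.d.
points drawn from `τ` has mean square error at most `(π/2)·(1/n)·C_init²`, where
`C_init² = ∫_D ∫_D K(x,y) ρ(x) ρ(y) dx dy`. -/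
theorem stmt7 (d : ℕ) (D : Set (Fin d → ℝ)) (hD : MeasurableSet D)
    (ρ : (Fin d → ℝ) → ℝ) (hρmeas : Measurable ρ) (hρ0 : ∀ x ∈ D, 0 ≤ ρ x)
    (hρ1 : (∫ x in D, ρ x) = 1)
    (H : Type) [NormedAddCommGroup H] [InnerProductSpace ℝ H]
    (T : H →ₗ[ℝ] ((Fin d → ℝ) → ℝ))
    (hTinj : Function.Injective T)
    (K : (Fin d → ℝ) → (Fin d → ℝ) → ℝ) (KH : (Fin d → ℝ) → H)
    (hKH : ∀ y ∈ D, ∀ x ∈ D, T (KH y) x = K x y)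
    (hrepr : ∀ (f : H), ∀ y ∈ D, inner (𝕜 := ℝ) f (KH y) = T f y)
    (hKpos : ∀ x ∈ D, ∀ y ∈ D, 0 ≤ K x y)
    (hKint : IntegrableOn
      (fun z : (Fin d → ℝ) × (Fin d → ℝ) => K z.1 z.2 * ρ z.1 * ρ z.2) (D ×ˢ D))
    (hSint : ∀ f : H, IntegrableOn (fun x => T f x * ρ x) D)
    (hScont : Continuous fun f : H => ∫ x in D, T f x * ρ x)
    (hnondeg : ∀ E : Set (Fin d → ℝ), E ⊆ D → MeasurableSet E → 0 < volume E →
      ∃ f : H, ∃ x ∈ E, T f x ≠ 0) :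
    ∃ τ : (Fin d → ℝ) → ℝ, Measurable τ ∧ (∀ x ∈ D, 0 < τ x) ∧
      (∫ x in D, τ x) = 1 ∧
      ∀ n : ℕ, 1 ≤ n → ∀ f : H, ‖f‖ ≤ 1 →
        (∫⁻ X : Fin n → Fin d → ℝ,
            ENNReal.ofReal
              (((∫ x in D, T f x * ρ x) -
                  (1 / n : ℝ) * ∑ j, T f (X j) * ρ (X j) / τ (X j)) ^ 2)
            ∂(Measure.pi fun _ : Fin n =>
                (volume.restrict D).withDensity fun x => ENNReal.ofReal (τ x)))
          ≤ ENNReal.ofReal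
              ((Real.pi / 2) * (1 / n) * ∫ x in D, ∫ y in D, K x y * ρ x * ρ y) := by
  classical
  let W := UniformSpace.Completion H
  let Φ : (Fin d → ℝ) → W := fun x => if x ∈ D then ((KH x : H) : W) else 0
  set lam : Measure (Fin d → ℝ) := volume.restrict D with hlam
  have hDae : ∀ᵐ x ∂lam, x ∈ D := ae_restrict_mem hD
  have hΦ : ∀ (f : H), ∀ x ∈ D, inner ℝ (f : W) (Φ x) = T f x := fun f x hx => by
    simp only [Φ, if_pos hx]
    rw [UniformSpace.Completion.inner_coe]
    exact hrepr f x hx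
  have hΦK : ∀ x ∈ D, ∀ y ∈ D, inner ℝ (Φ x) (Φ y) = K x y := fun x hx y hy => by
    rw [real_inner_comm, show Φ y = ((KH y : H) : W) from if_pos hy, hΦ _ x hx, hKH y hy x hx]
  have hpos : ∀ x y, 0 ≤ inner ℝ (Φ x) (Φ y) := fun x y => by
    by_cases hx : x ∈ D
    · by_cases hy : y ∈ D
      · rw [hΦK x hx y hy]
        exact hKpos x hx y hy
      · rw [show Φ y = 0 from if_neg hy, inner_zero_right]
    · rw [show Φ x = 0 from if_neg hx, inner_zero_left]
  have hρint : Integrable ρ lam := by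
    by_contra hc
    rw [integral_undef hc] at hρ1
    exact zero_ne_one hρ1
  let r : (Fin d → ℝ) → NNReal := fun x => (ρ x).toNNReal
  have hr : Measurable r := hρmeas.real_toNNReal
  have hrD : ∀ x ∈ D, (r x : ℝ) = ρ x := fun x hx => Real.coe_toNNReal _ (hρ0 x hx)
  let μ : Measure (Fin d → ℝ) := lam.withDensity fun x => (r x : ℝ≥0∞)
  have hμfin : IsFiniteMeasure μ := isFiniteMeasure_withDensity_ofReal hρint.2
  have hμac : μ ≪ lam := withDensity_absolutelyContinuous _ _
  have hμD : ∀ᵐ x ∂μ, x ∈ D := hμac.ae_le hDae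
  have hμρ : ∀ᵐ x ∂μ, ρ x ≠ 0 := by
    refine (ae_withDensity_iff hr.coe_nnreal_ennreal).2
      (Filter.Eventually.of_forall fun x hx h0 => ?_)
    simp [r, h0] at hx
  have hμI : ∀ G : (Fin d → ℝ) → ℝ, ∫ x, G x ∂μ = ∫ x in D, G x * ρ x := fun G => by
    rw [integral_withDensity_eq_integral_smul hr]
    refine setIntegral_congr_fun hD fun x hx => ?_
    simp only [NNReal.smul_def, smul_eq_mul, hrD x hx, mul_comm]
  -- measurability of `x ↦ ⟨v, Φ x⟩` passes from the dense subspace `H` to its completion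
  have hmeasT : ∀ f : H, AEMeasurable (fun x => inner ℝ (f : W) (Φ x)) μ := fun f => by
    have h1 : AEMeasurable (fun x => T f x * ρ x / ρ x) μ :=
      ((hSint f).aemeasurable.mono_ac hμac).div hρmeas.aemeasurable
    refine h1.congr ?_
    filter_upwards [hμD, hμρ] with x hx hx0
    rw [hΦ f x hx, mul_div_cancel_right₀ _ hx0]
  have hmeas : ∀ v : W, AEMeasurable (fun x => inner ℝ v (Φ x)) μ := fun v => by
    obtain ⟨t, ht, htv⟩ := mem_closure_iff_seq_limit.1
      (UniformSpace.Completion.denseRange_coe (α := H) v)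
    choose u hu using ht
    obtain rfl : (fun n => (u n : W)) = t := funext hu
    refine aemeasurable_of_tendsto_metrizable_ae Filter.atTop (fun n => hmeasT (u n))
      (Filter.Eventually.of_forall fun x => ?_)
    exact htv.inner tendsto_const_nhds
  have hK : Integrable (fun z : (Fin d → ℝ) × (Fin d → ℝ) => inner ℝ (Φ z.1) (Φ z.2))
      (μ.prod μ) := by
    have e : μ.prod μ = (volume.restrict (D ×ˢ D)).withDensity
        fun z : (Fin d → ℝ) × (Fin d → ℝ) => ((r z.1 * r z.2 : NNReal) : ℝ≥0∞) := by
      rw [Measure.volume_eq_prod, ← Measure.prod_restrict,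
        prod_withDensity hr.coe_nnreal_ennreal hr.coe_nnreal_ennreal]
      simp only [ENNReal.coe_mul, hlam]
    have hrr : Measurable fun z : (Fin d → ℝ) × (Fin d → ℝ) => r z.1 * r z.2 :=
      (hr.comp measurable_fst).mul (hr.comp measurable_snd)
    rw [e, integrable_withDensity_iff_integrable_smul hrr]
    refine hKint.congr ?_
    filter_upwards [ae_restrict_mem (hD.prod hD)] with z hz
    rw [NNReal.smul_def, NNReal.coe_mul, hrD _ hz.1, hrD _ hz.2, hΦK _ hz.1 _ hz.2, smul_eq_mul]
    ring
  let h₀ : (Fin d → ℝ) → ℝ := fun x => ∫ y, inner ℝ (Φ x) (Φ y) ∂μ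
  have hh₀ : Integrable h₀ μ := hK.integral_prod_left
  have hh₀0 : ∀ x, 0 ≤ h₀ x := fun x => integral_nonneg fun y => hpos x y
  let h : (Fin d → ℝ) → ℝ := fun x => max (hh₀.aestronglyMeasurable.mk h₀ x) 0
  have hh : Measurable h :=
    hh₀.aestronglyMeasurable.stronglyMeasurable_mk.measurable.max measurable_const
  have hh0 : ∀ x, 0 ≤ h x := fun x => le_max_right _ _
  have hheq : h₀ =ᵐ[μ] h := by
    filter_upwards [hh₀.aestronglyMeasurable.ae_eq_mk] with x hx
    simp only [h, ← hx, max_eq_left (hh₀0 x)]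
  have hhint : Integrable h μ := hh₀.congr hheq
  set C : ℝ := ∫ x in D, ∫ y in D, K x y * ρ x * ρ y with hC
  have hCh : ∫ x, h x ∂μ = C := by
    rw [← integral_congr_ae hheq, hμI]
    refine setIntegral_congr_fun hD fun x hx => ?_
    simp only [h₀]
    rw [hμI, ← integral_mul_const]
    refine setIntegral_congr_fun hD fun y hy => ?_
    simp only [hΦK x hx y hy]
    ring
  have hC0 : 0 ≤ C := hCh ▸ integral_nonneg hh0
  have hschur : ∀ ε : ℝ, 0 < ε → ∀ f : H, ‖f‖ ≤ 1 →
      ∫⁻ x, ENNReal.ofReal (inner ℝ (f : W) (Φ x) ^ 2 / (h x + ε)) ∂μ ≤ 1 := fun ε hε f hf => by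
    refine (lintegral_sq_div_le μ Φ hmeas hpos hK h hh hh0 hheq.le ε hε (f : W)).trans ?_
    rw [UniformSpace.Completion.norm_coe, ENNReal.ofReal_le_one]
    exact pow_le_one₀ (norm_nonneg _) hf
  obtain ⟨δ, hδ, hδC⟩ : ∃ δ : ℝ, 0 < δ ∧ (C ≠ 0 → C + 2 * δ ≤ Real.pi / 2 * C) := by
    by_cases hc : C = 0
    · exact ⟨1, one_pos, fun h => absurd hc h⟩
    · have : 0 < C := lt_of_le_of_ne hC0 (Ne.symm hc)
      exact ⟨C / 4, by positivity, fun _ => by nlinarith [Real.pi_gt_three]⟩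
  obtain ⟨w, hw0, hwm, hw1⟩ := exists_pos_lintegral_lt_of_sigmaFinite lam one_ne_zero
  have hwint : Integrable (fun x => (w x : ℝ)) lam := by
    refine ⟨hwm.coe_nnreal_real.aestronglyMeasurable, ?_⟩
    rw [hasFiniteIntegral_iff_ofReal (Filter.Eventually.of_forall fun x => NNReal.coe_nonneg (w x))]
    simp only [ENNReal.ofReal_coe_nnreal]
    exact hw1.trans ENNReal.one_lt_top
  have hw1' : ∫ x, (w x : ℝ) ∂lam ≤ 1 := by
    rw [← ENNReal.ofReal_le_one, ofReal_integral_eq_lintegral_ofReal hwint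
      (Filter.Eventually.of_forall fun x => NNReal.coe_nonneg (w x))]
    simpa only [ENNReal.ofReal_coe_nnreal] using hw1.le
  have hw0' : 0 ≤ ∫ x, (w x : ℝ) ∂lam := integral_nonneg fun x => NNReal.coe_nonneg (w x)
  let q : (Fin d → ℝ) → ℝ := fun x => ρ x * (h x + δ) + δ * w x
  have hhρ : Integrable (fun x => h x * ρ x) lam := by
    refine ((integrable_withDensity_iff_integrable_smul hr).1 hhint).congr ?_
    filter_upwards [hDae] with x hx
    rw [NNReal.smul_def, hrD x hx, smul_eq_mul, mul_comm]
  have hqsum : ∀ x, q x = h x * ρ x + δ * ρ x + δ * w x := fun x => by simp only [q]; ring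
  have hhδ : Integrable (fun x => h x * ρ x + δ * ρ x) lam := hhρ.add (hρint.const_mul δ)
  have hqint : Integrable q lam := by
    simp only [funext hqsum]
    exact hhδ.add (hwint.const_mul δ)
  set Z : ℝ := ∫ x, q x ∂lam with hZ
  have hZval : Z = C + δ + δ * ∫ x, (w x : ℝ) ∂lam := by
    rw [hZ]
    simp only [hqsum]
    rw [integral_add hhδ (hwint.const_mul δ),
      integral_add hhρ (hρint.const_mul δ), integral_const_mul, integral_const_mul, hρ1,
      ← hμI h, hCh, mul_one]
  have hZpos : 0 < Z := by rw [hZval]; nlinarith [mul_nonneg hδ.le hw0']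
  have hZle : Z ≤ C + 2 * δ := by rw [hZval]; nlinarith
  have hqm : Measurable q :=
    (hρmeas.mul (hh.add_const δ)).add (hwm.coe_nnreal_real.const_mul δ)
  have hqpos : ∀ x ∈ D, 0 < q x := fun x hx =>
    add_pos_of_nonneg_of_pos (mul_nonneg (hρ0 x hx) (by linarith [hh0 x]))
      (mul_pos hδ (NNReal.coe_pos.2 (hw0 x)))
  let τ : (Fin d → ℝ) → ℝ := fun x => q x / Z
  have hτm : Measurable τ := hqm.div_const Z
  have hτpos : ∀ x ∈ D, 0 < τ x := fun x hx => div_pos (hqpos x hx) hZpos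
  have hτint : Integrable τ lam := hqint.div_const Z
  have hτ1 : ∫ x, τ x ∂lam = 1 := by
    simp only [τ]
    rw [integral_div, ← hZ, div_self hZpos.ne']
  refine ⟨τ, hτm, hτpos, hτ1, fun n hn f hf => ?_⟩
  set P : Measure (Fin d → ℝ) := lam.withDensity fun x => ENNReal.ofReal (τ x) with hP
  have hτ0 : 0 ≤ᵐ[lam] τ := by
    filter_upwards [hDae] with x hx using (hτpos x hx).le
  have hPprob : IsProbabilityMeasure P := by
    refine ⟨?_⟩
    rw [hP, withDensity_apply _ MeasurableSet.univ, setLIntegral_univ,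
      ← ofReal_integral_eq_lintegral_ofReal hτint hτ0, hτ1, ENNReal.ofReal_one]
  have hPac : P ≪ lam := withDensity_absolutelyContinuous _ _
  let F : (Fin d → ℝ) → ℝ := fun x => T f x * ρ x / τ x
  have hFlam : AEMeasurable F lam := (hSint f).aemeasurable.div hτm.aemeasurable
  have hFP : AEStronglyMeasurable F P := (hFlam.mono_ac hPac).aestronglyMeasurable
  have hFmean : ∫ x, F x ∂P = ∫ x in D, T f x * ρ x := by
    rw [hP, integral_withDensity_eq_integral_toReal_smul hτm.ennreal_ofReal
      (Filter.Eventually.of_forall fun x => ENNReal.ofReal_lt_top)]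
    refine setIntegral_congr_fun hD fun x hx => ?_
    have := (hτpos x hx).ne'
    simp only [F, smul_eq_mul, ENNReal.toReal_ofReal (hτpos x hx).le]
    field_simp
  -- the defining inequality `Z τ ≥ ρ (h + δ)` transfers the weighted bound to the sampling density
  have hFle : ∫⁻ x, ENNReal.ofReal (F x ^ 2) ∂P ≤ ENNReal.ofReal Z *
      ∫⁻ x, ENNReal.ofReal (inner ℝ (f : W) (Φ x) ^ 2 / (h x + δ)) ∂μ := by
    have hm : AEMeasurable
        (fun x => ENNReal.ofReal (inner ℝ (f : W) (Φ x) ^ 2 / (h x + δ))) μ :=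
      (((hmeasT f).pow_const 2).div (hh.add_const δ).aemeasurable).ennreal_ofReal
    rw [hP, lintegral_withDensity_eq_lintegral_mul₀ hτm.ennreal_ofReal.aemeasurable
      (hFlam.pow_const 2).ennreal_ofReal,
      lintegral_withDensity_eq_lintegral_mul₀' hr.coe_nnreal_ennreal.aemeasurable hm,
      ← lintegral_const_mul' _ _ ENNReal.ofReal_ne_top]
    refine lintegral_mono_ae ?_
    filter_upwards [hDae] with x hx
    have hτx := hτpos x hx
    have hhx : 0 < h x + δ := by linarith [hh0 x]
    simp only [Pi.mul_apply]
    rw [← ENNReal.ofReal_mul hτx.le, show (r x : ℝ≥0∞) = ENNReal.ofReal (ρ x) from rfl,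
      ← ENNReal.ofReal_mul (hρ0 x hx), ← ENNReal.ofReal_mul hZpos.le, hΦ f x hx]
    refine ENNReal.ofReal_le_ofReal ?_
    have hq : ρ x * (h x + δ) ≤ Z * τ x := by
      simp only [τ, mul_div_cancel₀ _ hZpos.ne', q]
      have := mul_nonneg hδ.le (NNReal.coe_nonneg (w x))
      linarith
    have e1 : τ x * F x ^ 2 = (T f x ^ 2 * ρ x) * ρ x / τ x := by
      simp only [F]
      field_simp
    have e2 : Z * (ρ x * (T f x ^ 2 / (h x + δ))) = (T f x ^ 2 * ρ x) * Z / (h x + δ) := by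
      field_simp
    rw [e1, e2, div_le_div_iff₀ hτx hhx, mul_assoc (T f x ^ 2 * ρ x),
      mul_assoc (T f x ^ 2 * ρ x)]
    exact mul_le_mul_of_nonneg_left hq (mul_nonneg (sq_nonneg _) (hρ0 x hx))
  have hFM : ∫⁻ x, ENNReal.ofReal (F x ^ 2) ∂P ≤ ENNReal.ofReal (Real.pi / 2 * C) := by
    by_cases hc : C = 0
    · -- `h` vanishes a.e., and letting `ε → 0` in the weighted bound forces `f = 0` a.e.
      have hhz : h =ᵐ[μ] 0 := (integral_eq_zero_iff_of_nonneg hh0 hhint).1 (hCh.trans hc)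
      have hz : ∫⁻ x, ENNReal.ofReal (inner ℝ (f : W) (Φ x) ^ 2) ∂μ = 0 := by
        refine le_antisymm (ENNReal.le_of_forall_pos_le_add fun ε hε _ => ?_) zero_le
        have hε' : (0 : ℝ) < ε := hε
        calc ∫⁻ x, ENNReal.ofReal (inner ℝ (f : W) (Φ x) ^ 2) ∂μ
            = ∫⁻ x, ENNReal.ofReal ε *
                ENNReal.ofReal (inner ℝ (f : W) (Φ x) ^ 2 / (h x + ε)) ∂μ := by
              refine lintegral_congr_ae ?_
              filter_upwards [hhz] with x hx
              rw [hx, ← ENNReal.ofReal_mul hε'.le, Pi.zero_apply, zero_add,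
                mul_div_cancel₀ _ hε'.ne']
          _ ≤ ENNReal.ofReal ε * 1 := by
              rw [lintegral_const_mul' _ _ ENNReal.ofReal_ne_top]
              gcongr
              exact hschur ε hε' f hf
          _ = 0 + ε := by simp
      have hz' := (lintegral_eq_zero_iff' ((hmeasT f).pow_const 2).ennreal_ofReal).1 hz
      have hz'' : ∫⁻ x, ENNReal.ofReal (inner ℝ (f : W) (Φ x) ^ 2 / (h x + δ)) ∂μ = 0 := by
        rw [← lintegral_zero (μ := μ)]
        refine lintegral_congr_ae ?_
        filter_upwards [hz'] with x hx
        rw [ENNReal.ofReal_div_of_pos (by linarith [hh0 x]), hx]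
        simp
      rw [hz'', mul_zero] at hFle
      exact hFle.trans zero_le
    · refine hFle.trans ((mul_le_mul_right (hschur δ hδ f hf) _).trans ?_)
      rw [mul_one]
      exact ENNReal.ofReal_le_ofReal (hZle.trans (hδC hc))
  have hmain := lintegral_sq_sub_average_le P F hFP (Real.pi / 2 * C)
    (mul_nonneg (by positivity) hC0) hFM n hn
  rw [hFmean] at hmain
  refine hmain.trans_eq ?_
  congr 1
  ring
end

section
/- Let k, d ∈ ℕ and let W = { f : [0,1]^d → ℝ : for every multi-index α ∈ ℕ_0^d with max_i α_i ≤ k, the mixed partial derivative D^α f exists, is continuous on [0,1]^d, and satisfies ‖D^α f‖_{L_2([0,1]^d)} ≤ 1 }. Then there exists a constant C > 0 (depending on k and d) such that for every n ≥ 2 there exist points x_1,…,x_n ∈ [0,1]^d and weights a_1,…,a_n ∈ ℝ with sup_{f ∈ W} | ∫_{[0,1]^d} f(x) dx − Σ_{i=1}^n a_i f(x_i) | ≤ C · n^{−k} (log n)^{(d−1)(k+1/2)}. -/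
open MeasureTheory Set
open scoped ENNReal

/-!
The rule is the Smolyak algorithm built from composite Newton–Cotes rules; its error is estimated
through an `L²` kernel.

*Representation.* Averaging Taylor's formula over the base point gives, on `[0,1]`,
`f x = ∑_{a ≤ k} ∫ f^(a)(t) tker k a x t dt`, and tensorization yields
`f x = ∑_β ∫ D^β f(t) ∏ tker k (β i) (x i) (t i) dt` on the cube (`mDeriv_rep`). Hence the error of
any quadrature rule is a sum over `β` of pairings of `D^β f` with an error kernel, and by
Cauchy–Schwarz it suffices to bound the `L²` norms of these kernels.

*One dimension.* Let `b = 2k` and consider the composite rule on `b^j` cells with `2k + 1`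
equidistant nodes per cell, exact for degree `2k`. Applied to `tker k a · t` it is correct up to
`O(b^{-kj})` (`cquad_tker_error`), so the kernel `h_j` of the increment between levels `j - 1` and
`j` is `O(b^{-kj})`. Moreover `h_j` and `h_{j'}` are orthogonal when `|j - j'| ≥ 2`: the Gram
function of the kernels is piecewise polynomial of degree at most `2k` with a single break point
(`tgram_poly`), and if that point is a node of the coarse rule it lies on the grid of the fine
rules, which are then exact (`tgram_cquad`). These facts are collected in `oneD`.

*Tail.* The error kernel of the Smolyak rule of level `m` is `∑_{|j|₁ > m} ∏ h_{j i}`. By almost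
orthogonality (`sq_bound`) its squared norm is `≲ ∑_{|j|₁ > m} b^{-2k|j|₁} ≲ b^{-2km} (m+1)^{d-1}`;
summing squares instead of norms is what produces the exponent `1/2` in the power of the logarithm.
The rule has `≲ b^m (m+1)^{d-1}` points (`smolyak`). Choosing `m` maximal for given `n`
(`exists_level`, `rate_bound`) gives the claim.
-/

/-- First-order partial derivative in direction `i`, taken within the cube `[0,1]^d`. -/
noncomputable def pd (d : ℕ) (i : Fin d) (f : (Fin d → ℝ) → ℝ) : (Fin d → ℝ) → ℝ :=
  fun x => fderivWithin ℝ f (Set.Icc 0 1) x (Pi.single i 1)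

/-- `m`-fold partial derivative in direction `i` within the cube. -/
noncomputable def pdIter (d : ℕ) (i : Fin d) : ℕ → ((Fin d → ℝ) → ℝ) → ((Fin d → ℝ) → ℝ)
  | 0, f => f
  | m + 1, f => pd d i (pdIter d i m f)

/-- The mixed partial derivative `D^α f` for a multi-index `α`, within the cube. -/
noncomputable def mDeriv {d : ℕ} (α : Fin d → ℕ) (f : (Fin d → ℝ) → ℝ) : (Fin d → ℝ) → ℝ :=
  (List.finRange d).foldr (fun i g => pdIter d i (α i) g) f

/-- Membership in the unit ball of the Sobolev class of dominating mixed smoothness `k`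
in `L₂` on `[0,1]^d`: all mixed partial derivatives `D^α f` with `max_i α_i ≤ k`
exist, are continuous on the cube, and have `L₂` norm at most 1. -/
def memWMix2 (d k : ℕ) (f : (Fin d → ℝ) → ℝ) : Prop :=
  ContDiffOn ℝ (k * d) f (Set.Icc 0 1) ∧
    ∀ α : Fin d → ℕ, (∀ i, α i ≤ k) →
      ContinuousOn (mDeriv α f) (Set.Icc 0 1) ∧
      (∫⁻ x in Set.Icc (0 : Fin d → ℝ) 1, ENNReal.ofReal (|mDeriv α f x| ^ (2 : ℝ))) ≤ 1

/-! ### Averaged Taylor formula on the unit interval -/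

/-- Lebesgue measure on `[0,1]`, as a measure on `ℝ`. -/
noncomputable def unitMeas : Measure ℝ := volume.restrict (Icc 0 1)

instance : IsProbabilityMeasure unitMeas := ⟨by simp [unitMeas]⟩

/-- The kernel of the averaged Taylor formula of order `k`, see `taylor_avg`: the Taylor monomial
`(x - t)^a / a!` for `a < k`, and the remainder kernel for the derivative of order `k`. All orders
`a ≥ k` share the remainder kernel, but only `a = k` is meaningful. -/
noncomputable def tker (k a : ℕ) (x t : ℝ) : ℝ :=
  if a < k then (x - t) ^ a / a.factorial
  else (x - t) ^ (k - 1) / (k - 1).factorial * (t - if x < t then 1 else 0)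

lemma integral_unitMeas (f : ℝ → ℝ) : ∫ t, f t ∂unitMeas = ∫ t in (0:ℝ)..1, f t := by
  rw [unitMeas, integral_Icc_eq_integral_Ioc, intervalIntegral.integral_of_le zero_le_one]

/-- The Taylor polynomial at `x`, as a function of the base point `t`, has a telescoping derivative.
Here `F a` plays the role of the `a`-th derivative of `F 0`. -/
lemma taylor_hasDeriv (F : ℕ → ℝ → ℝ) (x t : ℝ) (s : Set ℝ) (k : ℕ)
    (hF : ∀ a < k + 1, HasDerivWithinAt (F a) (F (a + 1) t) s t) :
    HasDerivWithinAt (fun t => ∑ a ∈ Finset.range (k + 1), F a t * ((x - t) ^ a / a.factorial))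
      (F (k + 1) t * ((x - t) ^ k / k.factorial)) s t := by
  induction k with
  | zero => simpa using hF 0 (by simp)
  | succ k ih =>
    have h1 := ih (fun a ha => hF a (by omega))
    have h2 : HasDerivWithinAt (fun t => (x - t) ^ (k + 1) / ((k + 1).factorial : ℝ))
        (-((x - t) ^ k / k.factorial)) s t := by
      have h3 : HasDerivWithinAt (fun t : ℝ => x - t) (-1) s t :=
        (hasDerivWithinAt_id t s).const_sub x
      refine ((h3.pow (k + 1)).div_const ((k + 1).factorial : ℝ)).congr_deriv ?_
      rw [Nat.factorial_succ]
      push_cast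
      have : (k.factorial : ℝ) ≠ 0 := by positivity
      field_simp
    have h4 := h1.add ((hF (k + 1) (by omega)).mul h2)
    refine (h4.congr_deriv ?_).congr (fun y _ => ?_) ?_
    · ring
    · rw [Finset.sum_range_succ]; rfl
    · rw [Finset.sum_range_succ]; rfl

/-- Averaged Taylor formula. The Taylor expansion with integral remainder is averaged over all base
points in `[0,1]`, so that `F 0 x` becomes a sum of `L²` pairings of the derivatives with kernels
bounded by `1` and no boundary terms appear. -/
lemma taylor_avg (k : ℕ) (hk : 1 ≤ k) (F : ℕ → ℝ → ℝ)
    (hF : ∀ a < k, ∀ t ∈ Icc (0:ℝ) 1, HasDerivWithinAt (F a) (F (a + 1) t) (Icc 0 1) t)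
    (hc : ∀ a ≤ k, ContinuousOn (F a) (Icc 0 1)) (x : ℝ) (hx : x ∈ Icc (0:ℝ) 1) :
    F 0 x = ∑ a ∈ Finset.range (k + 1), ∫ t, F a t * tker k a x t ∂unitMeas := by
  obtain ⟨k, rfl⟩ : ∃ l, k = l + 1 := ⟨k - 1, by omega⟩
  set φ : ℝ → ℝ := fun t => ∑ a ∈ Finset.range (k + 1), F a t * ((x - t) ^ a / a.factorial) with hφ
  set ψ : ℝ → ℝ := fun t => F (k + 1) t * ((x - t) ^ k / k.factorial) with hψ
  have hd : ∀ t ∈ Icc (0:ℝ) 1, HasDerivWithinAt φ (ψ t) (Icc 0 1) t := fun t ht =>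
    taylor_hasDeriv F x t _ k (fun a ha => hF a ha t ht)
  have hφc : ContinuousOn φ (Icc 0 1) := fun t ht => (hd t ht).continuousWithinAt
  have hψc : ContinuousOn ψ (Icc 0 1) := (hc _ le_rfl).mul (by fun_prop)
  have hφx : φ x = F 0 x := by
    simp only [hφ]
    rw [Finset.sum_eq_single 0]
    · simp
    · intro b _ hb; simp [hb]
    · simp
  -- integration of `((t - c) φ)′ = φ + (t - c) ψ`, used on `[0,x]` with `c = 0` and on `[x,1]` with
  -- `c = 1`, so that only the values at `x` survive
  have key : ∀ c u v : ℝ, 0 ≤ u → u ≤ v → v ≤ 1 →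
      (∫ t in u..v, φ t + (t - c) * ψ t) = (v - c) * φ v - (u - c) * φ u := by
    intro c u v hu huv hv
    have hsub : Icc u v ⊆ Icc (0:ℝ) 1 := Icc_subset_Icc hu hv
    refine intervalIntegral.integral_eq_sub_of_hasDeriv_right_of_le (f := fun t => (t - c) * φ t)
      huv ?_ ?_ ?_
    · exact ((continuous_id.sub continuous_const).continuousOn).mul (hφc.mono hsub)
    · intro t ht
      have hd1 : HasDerivAt φ (ψ t) t := (hd t (hsub (Ioo_subset_Icc_self ht))).hasDerivAt
        (Icc_mem_nhds (by linarith [ht.1]) (by linarith [ht.2]))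
      have := ((hasDerivAt_id t).sub_const c).mul hd1
      refine (this.congr_deriv ?_).hasDerivWithinAt
      simp
    · apply ContinuousOn.intervalIntegrable
      rw [uIcc_of_le huv]
      exact (hφc.mono hsub).add
        (((continuous_id.sub continuous_const).continuousOn).mul (hψc.mono hsub))
  have k1 := key 0 0 x le_rfl hx.1 hx.2
  have k2 := key 1 x 1 hx.1 hx.2 le_rfl
  have e1 : (∫ t in (0:ℝ)..1, φ t + (t - if x < t then 1 else 0) * ψ t)
      = φ x := by
    have i1 : (∫ t in (0:ℝ)..x, φ t + (t - if x < t then 1 else 0) * ψ t)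
      = ∫ t in (0:ℝ)..x, φ t + (t - 0) * ψ t := by
      apply intervalIntegral.integral_congr
      intro t ht
      rw [uIcc_of_le hx.1] at ht
      simp [not_lt.2 ht.2]
    have i2 : ∀ᵐ t, t ∈ uIoc x 1 → φ t + (t - if x < t then 1 else 0) * ψ t
      = φ t + (t - 1) * ψ t := by
      refine Filter.Eventually.of_forall fun t ht => ?_
      rw [uIoc_of_le hx.2] at ht
      simp [ht.1]
    have j1 : IntervalIntegrable (fun t => φ t + (t - if x < t then 1 else 0) * ψ t) volume 0 x := by
      have : IntervalIntegrable (fun t => φ t + (t - 0) * ψ t) volume 0 x := by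
        apply ContinuousOn.intervalIntegrable
        rw [uIcc_of_le hx.1]
        have hsub : Icc 0 x ⊆ Icc (0:ℝ) 1 := Icc_subset_Icc le_rfl hx.2
        exact (hφc.mono hsub).add
          (((continuous_id.sub continuous_const).continuousOn).mul (hψc.mono hsub))
      refine this.congr fun t ht => ?_
      rw [uIoc_of_le hx.1] at ht
      simp [not_lt.2 ht.2]
    have j2 : IntervalIntegrable (fun t => φ t + (t - if x < t then 1 else 0) * ψ t) volume x 1 := by
      have : IntervalIntegrable (fun t => φ t + (t - 1) * ψ t) volume x 1 := by
        apply ContinuousOn.intervalIntegrable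
        rw [uIcc_of_le hx.2]
        have hsub : Icc x 1 ⊆ Icc (0:ℝ) 1 := Icc_subset_Icc hx.1 le_rfl
        exact (hφc.mono hsub).add
          (((continuous_id.sub continuous_const).continuousOn).mul (hψc.mono hsub))
      refine this.congr fun t ht => ?_
      rw [uIoc_of_le hx.2] at ht
      simp [ht.1]
    rw [← intervalIntegral.integral_add_adjacent_intervals j1 j2, i1,
      intervalIntegral.integral_congr_ae i2, k1, k2]
    ring
  have hInt : ∀ a ≤ k + 1, Integrable (fun t => F a t * tker (k + 1) a x t) unitMeas := by
    intro a ha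
    have hFi : Integrable (F a) unitMeas := (hc a ha).integrableOn_compact isCompact_Icc
    by_cases hak : a < k + 1
    · simp only [tker, hak, if_true]
      exact ((hc a ha).mul (by fun_prop)).integrableOn_compact isCompact_Icc
    · simp only [tker, hak, if_false]
      have : Integrable (fun t => F a t * ((x - t) ^ (k + 1 - 1) / (k + 1 - 1).factorial)) unitMeas :=
        ((hc a ha).mul (by fun_prop)).integrableOn_compact isCompact_Icc
      have h2 := this.mul_bdd (c := 2) (g := fun t => t - if x < t then 1 else 0) ?_ ?_
      · refine h2.congr (Filter.Eventually.of_forall fun t => ?_)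
        simp only; ring
      · refine Measurable.aestronglyMeasurable ?_
        exact measurable_id.sub (Measurable.ite measurableSet_Ioi measurable_const measurable_const)
      · refine (ae_restrict_iff' measurableSet_Icc).2 (Filter.Eventually.of_forall fun t ht => ?_)
        rw [Real.norm_eq_abs, abs_le]
        split_ifs <;> constructor <;> linarith [ht.1, ht.2]
  rw [← integral_finsetSum _ (fun a ha => hInt a (by simpa [Nat.lt_succ_iff] using ha)),
    integral_unitMeas, ← hφx, ← e1]
  apply intervalIntegral.integral_congr
  intro t _
  simp only
  rw [Finset.sum_range_succ]
  congr 1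
  · simp only [hφ]
    refine Finset.sum_congr rfl fun a ha => ?_
    simp [tker, Finset.mem_range.1 ha]
  · simp [tker, hψ]; ring

/-! ### Tensor product representation on the cube -/

/-- Lebesgue measure on `[0,1]^d`, written as a product measure so that Fubini applies coordinatewise;
see `cubeMeas_eq`. -/
noncomputable abbrev cubeMeas (d : ℕ) : Measure (Fin d → ℝ) := Measure.pi fun _ => unitMeas

lemma cubeMeas_eq (d : ℕ) : cubeMeas d = volume.restrict (Icc 0 1) := by
  rw [cubeMeas, volume_pi, ← pi_univ_Icc, Measure.restrict_pi_pi]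
  rfl

lemma ae_cube (d : ℕ) : ∀ᵐ t ∂cubeMeas d, t ∈ Icc (0 : Fin d → ℝ) 1 := by
  rw [cubeMeas_eq]
  exact ae_restrict_mem measurableSet_Icc

lemma ae_unit : ∀ᵐ t ∂unitMeas, t ∈ Icc (0 : ℝ) 1 := ae_restrict_mem measurableSet_Icc

lemma cont_integrable {d : ℕ} {g : (Fin d → ℝ) → ℝ} (hg : ContinuousOn g (Icc 0 1)) :
    Integrable g (cubeMeas d) := by
  rw [cubeMeas_eq]
  exact hg.integrableOn_compact isCompact_Icc

lemma tker_measurable (k a : ℕ) : Measurable (fun p : ℝ × ℝ => tker k a p.1 p.2) := by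
  unfold tker
  split_ifs
  · fun_prop
  · refine Measurable.mul (by fun_prop) (measurable_snd.sub ?_)
    exact Measurable.ite (measurableSet_lt measurable_fst measurable_snd)
      measurable_const measurable_const

lemma tker_measurable_right (k a : ℕ) (x : ℝ) : Measurable (tker k a x) :=
  (tker_measurable k a).comp (measurable_const.prodMk measurable_id)

lemma pow_div_fact_le {u : ℝ} (hu : |u| ≤ 1) (a : ℕ) : |u ^ a / a.factorial| ≤ 1 := by
  rw [abs_div, abs_pow, Nat.abs_cast]
  have h1 : (1:ℝ) ≤ a.factorial := by exact_mod_cast Nat.factorial_pos a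
  rw [div_le_one (by linarith)]
  exact (pow_le_one₀ (abs_nonneg _) hu).trans h1

lemma tker_bound (k a : ℕ) {x t : ℝ} (hx : x ∈ Icc (0:ℝ) 1) (ht : t ∈ Icc (0:ℝ) 1) :
    |tker k a x t| ≤ 1 := by
  have hu : |x - t| ≤ 1 := by rw [abs_le]; constructor <;> linarith [hx.1, hx.2, ht.1, ht.2]
  unfold tker
  split_ifs with h1 h2
  · exact pow_div_fact_le hu a
  all_goals
    rw [abs_mul]
    refine mul_le_one₀ (pow_div_fact_le hu _) (abs_nonneg _) ?_
    rw [abs_le]; constructor <;> linarith [ht.1, ht.2]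

lemma mem_cube {d : ℕ} {x : Fin d → ℝ} : x ∈ Icc (0 : Fin d → ℝ) 1 ↔ ∀ i, x i ∈ Icc (0:ℝ) 1 := by
  simp [Set.mem_Icc, Pi.le_def, forall_and]

lemma prod_tker_bound {d : ℕ} (k : ℕ) (β : Fin d → ℕ) {x t : Fin d → ℝ}
    (hx : x ∈ Icc (0 : Fin d → ℝ) 1) (ht : t ∈ Icc (0 : Fin d → ℝ) 1) :
    |∏ i, tker k (β i) (x i) (t i)| ≤ 1 := by
  rw [Finset.abs_prod]
  exact Finset.prod_le_one (fun _ _ => abs_nonneg _)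
    fun i _ => tker_bound k _ (mem_cube.1 hx i) (mem_cube.1 ht i)

lemma prod_tker_measurable {d : ℕ} (k : ℕ) (β : Fin d → ℕ) :
    Measurable (fun p : (Fin d → ℝ) × (Fin d → ℝ) => ∏ i, tker k (β i) (p.1 i) (p.2 i)) := by
  refine Finset.measurable_prod _ fun i _ => ?_
  exact (tker_measurable k (β i)).comp
    (by fun_prop : Measurable fun p : (Fin d → ℝ) × (Fin d → ℝ) => (p.1 i, p.2 i))

lemma rep_integrable {d : ℕ} (k : ℕ) (β : Fin d → ℕ) {g : (Fin d → ℝ) → ℝ}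
    (hg : ContinuousOn g (Icc 0 1)) {x : Fin d → ℝ} (hx : x ∈ Icc (0 : Fin d → ℝ) 1) :
    Integrable (fun t => g t * ∏ i, tker k (β i) (x i) (t i)) (cubeMeas d) := by
  refine (cont_integrable hg).mul_bdd (c := 1) ?_ ?_
  · exact ((prod_tker_measurable k β).comp
      (measurable_const.prodMk measurable_id)).aestronglyMeasurable
  · filter_upwards [ae_cube d] with t ht
    exact prod_tker_bound k β hx ht

lemma snoc_mem_cube {d : ℕ} {x : Fin d → ℝ} {s : ℝ} (hx : x ∈ Icc (0 : Fin d → ℝ) 1)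
    (hs : s ∈ Icc (0:ℝ) 1) : (Fin.snoc x s : Fin (d + 1) → ℝ) ∈ Icc (0 : Fin (d + 1) → ℝ) 1 := by
  rw [mem_cube] at hx ⊢
  intro i
  refine Fin.lastCases ?_ (fun i => ?_) i
  · simpa using hs
  · simpa using hx i

lemma snoc_continuous (d : ℕ) :
    Continuous (fun p : ℝ × (Fin d → ℝ) => (Fin.snoc p.2 p.1 : Fin (d + 1) → ℝ)) := by
  refine continuous_pi fun i => ?_
  refine Fin.lastCases ?_ (fun i => ?_) i
  · simpa using continuous_fst
  · simp only [Fin.snoc_castSucc]; fun_prop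

/-- Fubini on the cube, splitting off the last coordinate. -/
lemma integral_snoc {d : ℕ} (g : (Fin (d + 1) → ℝ) → ℝ) (hg : Integrable g (cubeMeas (d + 1))) :
    Integrable (fun s => ∫ t, g (Fin.snoc t s) ∂cubeMeas d) unitMeas ∧
    ∫ t, g t ∂cubeMeas (d + 1) = ∫ s, ∫ t, g (Fin.snoc t s) ∂cubeMeas d ∂unitMeas := by
  have mp := (measurePreserving_piFinSuccAbove (fun _ : Fin (d + 1) => unitMeas) (Fin.last d)).symm
  have e : ∀ p : ℝ × (Fin d → ℝ),
      (MeasurableEquiv.piFinSuccAbove (fun _ : Fin (d + 1) => ℝ) (Fin.last d)).symm p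
        = Fin.snoc p.2 p.1 := by
    intro p
    simp [MeasurableEquiv.piFinSuccAbove, Fin.insertNthEquiv, Fin.insertNth_last']
  have hi := (mp.integrable_comp_emb (MeasurableEquiv.measurableEmbedding _)).2 hg
  rw [← mp.integral_comp', integral_prod _ (by exact hi)]
  refine ⟨?_, ?_⟩
  · simpa only [Function.comp_def, e] using hi.integral_prod_left
  · simp_rw [e]

/-- Tensor product of the averaged Taylor formula, for a family `D β` behaving like the mixed
derivatives of `D 0`. Differentiation in direction `i` is assumed only at orders `β` vanishing in
all earlier coordinates: this is the order in which `mDeriv` takes derivatives, and it suffices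
because the induction expands the last coordinate first. -/
theorem rep (k : ℕ) (hk : 1 ≤ k) : ∀ (d : ℕ) (D : (Fin d → ℕ) → (Fin d → ℝ) → ℝ),
    (∀ β, (∀ i, β i ≤ k) → ContinuousOn (D β) (Icc 0 1)) →
    (∀ β i, (∀ i, β i ≤ k) → β i < k → (∀ j < i, β j = 0) → ∀ t ∈ Icc (0 : Fin d → ℝ) 1,
      HasDerivWithinAt (fun s => D β (Function.update t i s))
        (D (Function.update β i (β i + 1)) t) (Icc 0 1) (t i)) →
    ∀ x ∈ Icc (0 : Fin d → ℝ) 1,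
      D 0 x = ∑ β : Fin d → Fin (k + 1),
        ∫ t, D (fun i => β i) t * ∏ i, tker k (β i) (x i) (t i) ∂cubeMeas d := by
  intro d
  induction d with
  | zero =>
    intro D _ _ x _
    simp only [Finset.univ_unique, Finset.sum_singleton, Finset.univ_eq_empty, Finset.prod_empty,
      mul_one, cubeMeas]
    rw [Measure.pi_of_empty _ x, integral_dirac]
    congr 1
    exact Subsingleton.elim _ _
  | succ d ih =>
    intro D hc hD x hx
    obtain ⟨x', s', rfl⟩ : ∃ (x' : Fin d → ℝ) (s' : ℝ), x = Fin.snoc x' s' :=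
      ⟨Fin.init x, x (Fin.last d), (Fin.snoc_init_self x).symm⟩
    have hx' : x' ∈ Icc (0 : Fin d → ℝ) 1 := by
      rw [mem_cube] at hx ⊢
      intro i; simpa using hx i.castSucc
    have hs' : s' ∈ Icc (0:ℝ) 1 := by simpa using (mem_cube.1 hx) (Fin.last d)
    have hle : ∀ (β' : Fin d → ℕ) (a : ℕ), (∀ i, β' i ≤ k) → a ≤ k →
        ∀ i, (Fin.snoc β' a : Fin (d + 1) → ℕ) i ≤ k := by
      intro β' a hβ ha i
      refine Fin.lastCases ?_ (fun i => ?_) i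
      · simpa using ha
      · simpa using hβ i
    -- induction hypothesis for the slice of `D` at last order `a` and last coordinate `s`
    have ihs : ∀ a ≤ k, ∀ s ∈ Icc (0:ℝ) 1, D (Fin.snoc 0 a) (Fin.snoc x' s)
        = ∑ β : Fin d → Fin (k + 1), ∫ t, D (Fin.snoc (fun i => (β i : ℕ)) a) (Fin.snoc t s)
          * ∏ i, tker k (β i) (x' i) (t i) ∂cubeMeas d := by
      intro a ha s hs
      refine ih (fun β' t' => D (Fin.snoc β' a) (Fin.snoc t' s)) ?_ ?_ x' hx'
      · intro β' hβ'
        refine (hc _ (hle β' a hβ' ha)).comp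
          ((snoc_continuous d).comp (by fun_prop : Continuous fun t : Fin d → ℝ => (s, t))).continuousOn ?_
        intro t ht
        exact snoc_mem_cube ht hs
      · intro β' i hβ' hi hj t ht
        have := hD (Fin.snoc β' a) i.castSucc (hle β' a hβ' ha) (by simpa using hi) ?_
          (Fin.snoc t s) (snoc_mem_cube ht hs)
        · simpa [Fin.snoc_update] using this
        · intro j hj'
          refine Fin.lastCases (motive := fun j => j < i.castSucc → (Fin.snoc β' a : Fin (d + 1) → ℕ) j = 0)
            ?_ (fun j hj' => ?_) j hj'
          · intro h
            exact absurd h (not_lt.2 (Fin.le_last _))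
          · simpa using hj j (by simpa using hj')
    have T := taylor_avg k hk (fun a s => D (Fin.snoc 0 a) (Fin.snoc x' s)) ?_ ?_ s' hs'
    · have h0 : (Fin.snoc 0 0 : Fin (d + 1) → ℕ) = 0 := by
        ext i
        refine Fin.lastCases ?_ (fun i => ?_) i <;> simp
      simp only [h0] at T
      rw [T, ← Fin.sum_univ_eq_sum_range
        (fun a => ∫ t, D (Fin.snoc 0 a) (Fin.snoc x' t) * tker k a s' t ∂unitMeas),
        ← (Fin.snocEquiv (fun _ => Fin (k + 1))).sum_comp, Fintype.sum_prod_type]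
      refine Finset.sum_congr rfl fun a _ => ?_
      have hcoe : ∀ β : Fin d → Fin (k + 1),
          (fun i => (((Fin.snocEquiv fun _ => Fin (k + 1)) (a, β) i : Fin (k + 1)) : ℕ))
            = (Fin.snoc (fun i => (β i : ℕ)) (a : ℕ) : Fin (d + 1) → ℕ) := by
        intro β
        ext i
        refine Fin.lastCases ?_ (fun i => ?_) i <;> simp [Fin.snocEquiv]
      have hInt : ∀ β : Fin d → Fin (k + 1), Integrable (fun t =>
          D (Fin.snoc (fun i => (β i : ℕ)) a) t * ∏ i, tker k
            ((Fin.snoc (fun i => (β i : ℕ)) (a : ℕ) : Fin (d + 1) → ℕ) i)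
            ((Fin.snoc x' s' : Fin (d + 1) → ℝ) i) (t i)) (cubeMeas (d + 1)) := by
        intro β
        exact rep_integrable k _ (hc _ (hle _ _ (fun i => by omega) (by omega))) hx
      have hR : ∀ β : Fin d → Fin (k + 1), (∫ t, D (fun i =>
          (((Fin.snocEquiv fun _ => Fin (k + 1)) (a, β) i : Fin (k + 1)) : ℕ)) t *
          ∏ i, tker k ((Fin.snocEquiv fun _ => Fin (k + 1)) (a, β) i : Fin (k + 1))
            ((Fin.snoc x' s' : Fin (d + 1) → ℝ) i) (t i) ∂cubeMeas (d + 1))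
          = ∫ t, D (Fin.snoc (fun i => (β i : ℕ)) a) t * ∏ i, tker k
            ((Fin.snoc (fun i => (β i : ℕ)) (a : ℕ) : Fin (d + 1) → ℕ) i)
            ((Fin.snoc x' s' : Fin (d + 1) → ℝ) i) (t i) ∂cubeMeas (d + 1) := by
        intro β
        rw [hcoe β]
        congr 1
        ext t
        congr 1
        refine Finset.prod_congr rfl fun i _ => ?_
        rw [← congrFun (hcoe β) i]
      simp_rw [hR, fun β => (integral_snoc _ (hInt β)).2]
      rw [← integral_finsetSum _ (fun β _ => (integral_snoc _ (hInt β)).1)]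
      refine integral_congr_ae ?_
      filter_upwards [ae_unit] with s hs
      rw [ihs a (by omega) s hs, Finset.sum_mul]
      refine Finset.sum_congr rfl fun β _ => ?_
      rw [← integral_mul_const]
      congr 1
      ext t
      simp only [Fin.prod_univ_castSucc, Fin.snoc_castSucc, Fin.snoc_last]
      ring
    · intro a ha s hs
      have := hD (Fin.snoc 0 a) (Fin.last d) (hle 0 a (fun i => Nat.zero_le _) ha.le)
        (by simpa using ha) ?_ (Fin.snoc x' s) (snoc_mem_cube hx' hs)
      · simpa [Fin.update_snoc_last] using this
      · intro j
        refine Fin.lastCases (fun h => absurd h (lt_irrefl _)) (fun j _ => ?_) j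
        simp
    · intro a ha
      refine (hc _ (hle 0 a (fun i => Nat.zero_le _) ha)).comp
        ((snoc_continuous d).comp (by fun_prop : Continuous fun s : ℝ => (s, x'))).continuousOn ?_
      intro s hs
      exact snoc_mem_cube hx' hs

/-! ### Representation of functions of mixed smoothness -/

lemma cube_uniqueDiff (d : ℕ) : UniqueDiffOn ℝ (Icc (0 : Fin d → ℝ) 1) := by
  refine uniqueDiffOn_convex (convex_Icc _ _) ?_
  rw [← pi_univ_Icc, interior_pi_set finite_univ]
  refine ⟨fun _ => 1 / 2, fun i _ => ?_⟩
  simp only [Pi.zero_apply, Pi.one_apply, interior_Icc]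
  constructor <;> norm_num

lemma pd_contDiffOn {d : ℕ} (i : Fin d) {g : (Fin d → ℝ) → ℝ} {n : ℕ}
    (hg : ContDiffOn ℝ (n + 1 : ℕ) g (Icc 0 1)) : ContDiffOn ℝ n (pd d i g) (Icc 0 1) := by
  have := hg.fderivWithin (m := n) (cube_uniqueDiff d) (by norm_cast)
  exact this.clm_apply contDiffOn_const

lemma pdIter_contDiffOn {d : ℕ} (i : Fin d) (m : ℕ) {g : (Fin d → ℝ) → ℝ} {n : ℕ}
    (hg : ContDiffOn ℝ (n + m : ℕ) g (Icc 0 1)) : ContDiffOn ℝ n (pdIter d i m g) (Icc 0 1) := by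
  induction m generalizing n with
  | zero => simpa [pdIter] using hg
  | succ m ih => exact pd_contDiffOn i (ih (n := n + 1) (by convert hg using 2; ring))

lemma foldr_contDiffOn {d : ℕ} (α : Fin d → ℕ) {f : (Fin d → ℝ) → ℝ} (l : List (Fin d)) (n : ℕ)
    (hf : ContDiffOn ℝ (n + (l.map α).sum : ℕ) f (Icc 0 1)) :
    ContDiffOn ℝ n (l.foldr (fun i g => pdIter d i (α i) g) f) (Icc 0 1) := by
  induction l generalizing n with
  | nil => simpa using hf
  | cons a l ih =>
    refine pdIter_contDiffOn a (α a) (ih _ ?_)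
    convert hf using 2
    simp; ring

lemma foldr_congr_notMem {d : ℕ} (α : Fin d → ℕ) (i : Fin d) (b : ℕ) (f : (Fin d → ℝ) → ℝ)
    (l : List (Fin d)) (hi : i ∉ l) :
    l.foldr (fun j g => pdIter d j (Function.update α i b j) g) f
      = l.foldr (fun j g => pdIter d j (α j) g) f := by
  induction l with
  | nil => rfl
  | cons a l ih =>
    simp only [List.mem_cons, not_or] at hi
    simp only [List.foldr_cons]
    rw [ih hi.2, Function.update_of_ne (Ne.symm hi.1)]

/-- Raising the order in coordinate `i` differentiates once more in direction `i`, provided that no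
derivative in an earlier coordinate has been taken: `mDeriv` applies the earlier coordinates last,
so no interchange of derivatives is involved. -/
lemma foldr_update {d : ℕ} (α : Fin d → ℕ) (i : Fin d) (f : (Fin d → ℝ) → ℝ)
    (hα : ∀ j < i, α j = 0) (l : List (Fin d)) (hl : l.Pairwise (· < ·)) (hi : i ∈ l) :
    l.foldr (fun j g => pdIter d j (Function.update α i (α i + 1) j) g) f
      = pd d i (l.foldr (fun j g => pdIter d j (α j) g) f) := by
  induction l with
  | nil => simp at hi
  | cons a l ih =>
    simp only [List.foldr_cons]
    rw [List.pairwise_cons] at hl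
    by_cases hai : a = i
    · subst hai
      rw [foldr_congr_notMem α a _ f l (fun h => lt_irrefl _ (hl.1 a h)), Function.update_self]
      rfl
    · have hil : i ∈ l := (List.mem_cons.1 hi).resolve_left (Ne.symm hai)
      rw [ih hl.2 hil, Function.update_of_ne hai, hα a (hl.1 i hil)]
      rfl

/-- Every `f` in the class is the sum over `β ∈ {0,…,k}^d` of the pairings of `D^β f` with products of
Taylor kernels. -/
lemma mDeriv_rep (k d : ℕ) (hk : 1 ≤ k) {f : (Fin d → ℝ) → ℝ} (hf : memWMix2 d k f)
    {x : Fin d → ℝ} (hx : x ∈ Icc (0 : Fin d → ℝ) 1) :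
    f x = ∑ β : Fin d → Fin (k + 1), ∫ t, mDeriv (fun i => (β i : ℕ)) f t *
      ∏ i, tker k (β i) (x i) (t i) ∂cubeMeas d := by
  have h0 : mDeriv (0 : Fin d → ℕ) f = f := by
    unfold mDeriv
    generalize List.finRange d = l
    induction l with
    | nil => rfl
    | cons a l ih => simpa [pdIter] using ih
  conv_lhs => rw [← h0]
  refine rep k hk d (fun β => mDeriv β f) (fun β hβ => (hf.2 β hβ).1) ?_ x hx
  intro β i hβ hi hj t ht
  -- one more derivative is available since the order of `β` is below `k * d`
  have hsum : 1 + ((List.finRange d).map β).sum ≤ k * d := by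
    rw [← List.ofFn_eq_map, List.sum_ofFn]
    have : ∑ i, β i < ∑ _i : Fin d, k :=
      Finset.sum_lt_sum (fun i _ => hβ i) ⟨i, Finset.mem_univ _, hi⟩
    simp at this
    nlinarith
  have hC : ContDiffOn ℝ 1 (mDeriv β f) (Icc 0 1) := by
    have := foldr_contDiffOn β (f := f) (List.finRange d) 1 (hf.1.of_le (by exact_mod_cast hsum))
    exact_mod_cast this
  have hu : mDeriv (Function.update β i (β i + 1)) f = pd d i (mDeriv β f) :=
    foldr_update β i f hj (List.finRange d) (List.pairwise_lt_finRange d) (List.mem_finRange i)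
  rw [hu]
  have hdiff : HasFDerivWithinAt (mDeriv β f) (fderivWithin ℝ (mDeriv β f) (Icc 0 1) t)
      (Icc 0 1) t := ((hC.differentiableOn (by simp)) t ht).hasFDerivWithinAt
  have hup : HasDerivWithinAt (fun s => Function.update t i s) (Pi.single i 1) (Icc 0 1) (t i) :=
    (hasDerivAt_update t i (t i)).hasDerivWithinAt
  have ht' : Function.update t i (t i) = t := Function.update_eq_self i t
  rw [← ht'] at hdiff
  have := HasFDerivWithinAt.comp_hasDerivWithinAt (t := Icc 0 1) (t i) hdiff hup ?_
  · rw [ht'] at this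
    exact this
  · intro s hs
    rw [mem_cube] at ht ⊢
    intro j
    by_cases h : j = i
    · subst h; simpa using hs
    · simpa [h] using ht j

/-! ### Composite quadrature rules -/

/-- The weights `ω` at the equidistant nodes `i / (2k)`, `0 ≤ i ≤ 2k`, integrate polynomials of degree
at most `2k` exactly over `[0,1]`. -/
def IsExactRule (k : ℕ) (ω : Fin (2 * k + 1) → ℝ) : Prop :=
  ∀ P : Polynomial ℝ, P.natDegree ≤ 2 * k →
    ∑ i, ω i * P.eval ((i : ℝ) / (2 * k : ℕ)) = ∫ x in (0:ℝ)..1, P.eval x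

/-- The weights are the integrals of the Lagrange basis polynomials (Newton–Cotes rule). -/
lemma exists_exactRule (k : ℕ) (hk : 1 ≤ k) : ∃ ω, IsExactRule k ω := by
  set v : Fin (2 * k + 1) → ℝ := fun i => (i : ℝ) / (2 * k : ℕ) with hv
  have hinj : Function.Injective v := by
    intro i j hij
    have hpos : (0:ℝ) < (2 * k : ℕ) := by exact_mod_cast (by omega)
    simp only [hv] at hij
    rw [div_left_inj' hpos.ne'] at hij
    exact Fin.ext (by exact_mod_cast hij)
  refine ⟨fun i => ∫ x in (0:ℝ)..1, (Lagrange.basis Finset.univ v i).eval x, fun P hP => ?_⟩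
  have hdeg : P.degree < (Finset.univ : Finset (Fin (2 * k + 1))).card := by
    rw [Finset.card_univ, Fintype.card_fin]
    exact (Polynomial.degree_le_natDegree).trans_lt (by exact_mod_cast Nat.lt_succ_of_le hP)
  have hL := Lagrange.eq_interpolate (hinj.injOn) hdeg
  conv_rhs => rw [hL]
  simp only [Lagrange.interpolate_apply, Polynomial.eval_finsetSum, Polynomial.eval_mul,
    Polynomial.eval_C]
  rw [intervalIntegral.integral_finsetSum]
  · refine Finset.sum_congr rfl fun i _ => ?_
    rw [intervalIntegral.integral_const_mul, mul_comm]
  · intro i _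
    exact (by fun_prop : Continuous fun x => Polynomial.eval (v i) P *
      Polynomial.eval x (Lagrange.basis Finset.univ v i)).intervalIntegrable _ _

/-- The composite rule: `[0,1]` is cut into `N` equal cells and the rule with weights `ω` at the nodes
`i / (2k)` is transplanted to each of them. -/
noncomputable def cquad (k : ℕ) (ω : Fin (2 * k + 1) → ℝ) (N : ℕ) (φ : ℝ → ℝ) : ℝ :=
  ∑ c : Fin N, ∑ i, ω i / N * φ (((c : ℝ) + (i : ℝ) / (2 * k : ℕ)) / N)

/-- The rule on a single cell is exact for polynomials of degree at most `2k`. -/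
lemma exact_cell {k : ℕ} {ω : Fin (2 * k + 1) → ℝ} (hω : IsExactRule k ω) {N : ℕ} (hN : 1 ≤ N)
    (c : ℕ) (P : Polynomial ℝ) (hP : P.natDegree ≤ 2 * k) :
    ∑ i, ω i / N * P.eval (((c : ℝ) + (i : ℝ) / (2 * k : ℕ)) / N)
      = ∫ x in ((c:ℝ) / N)..((c + 1 : ℝ) / N), P.eval x := by
  have hN0 : (N : ℝ) ≠ 0 := by positivity
  set A : Polynomial ℝ := Polynomial.C ((N : ℝ)⁻¹) * Polynomial.X + Polynomial.C ((c : ℝ) / N)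
  have hA : ∀ x, (P.comp A).eval x = P.eval ((N : ℝ)⁻¹ * x + c / N) := by
    intro x; simp [A]
  have hdeg : (P.comp A).natDegree ≤ 2 * k := by
    have h1 : A.natDegree ≤ 1 := Polynomial.natDegree_linear_le
    calc (P.comp A).natDegree ≤ P.natDegree * A.natDegree := Polynomial.natDegree_comp_le
      _ ≤ (2 * k) * 1 := Nat.mul_le_mul hP h1
      _ = 2 * k := by ring
  have h := hω (P.comp A) hdeg
  simp only [hA] at h
  rw [intervalIntegral.integral_comp_mul_add (fun x => P.eval x) (inv_ne_zero hN0), inv_inv,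
    smul_eq_mul] at h
  have e1 : (N : ℝ)⁻¹ * 0 + c / N = c / N := by ring
  have e2 : (N : ℝ)⁻¹ * 1 + c / N = (c + 1) / N := by field_simp; ring
  rw [e1, e2] at h
  have e3 : ∀ i : Fin (2 * k + 1), (N : ℝ)⁻¹ * ((i : ℝ) / (2 * k : ℕ)) + c / N
      = ((c : ℝ) + (i : ℝ) / (2 * k : ℕ)) / N := by intro i; ring
  simp only [e3] at h
  have e4 : ∀ i : Fin (2 * k + 1), ω i / N * P.eval (((c : ℝ) + (i : ℝ) / (2 * k : ℕ)) / N)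
      = (ω i * P.eval (((c : ℝ) + (i : ℝ) / (2 * k : ℕ)) / N)) / N := by intro i; ring
  simp only [e4]
  rw [← Finset.sum_div, h]
  field_simp

lemma node_mem (k : ℕ) (c : ℝ) {N : ℕ} (i : Fin (2 * k + 1)) :
    (c + (i : ℝ) / (2 * k : ℕ)) / N ∈ Icc (c / N) ((c + 1) / N) := by
  have h1 : (i : ℝ) / (2 * k : ℕ) ≤ 1 := by
    apply div_le_one_of_le₀ _ (by positivity)
    exact_mod_cast Nat.lt_succ_iff.1 i.2
  have h0 : 0 ≤ (i : ℝ) / (2 * k : ℕ) := by positivity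
  constructor
  · gcongr; linarith
  · gcongr

/-- Error of the composite rule for a function that is polynomial on every cell except possibly the
cell `c₀`, where only a bound is known. -/
lemma cquad_error {k : ℕ} {ω : Fin (2 * k + 1) → ℝ} (hω : IsExactRule k ω) {N : ℕ} (hN : 1 ≤ N)
    (φ : ℝ → ℝ) (hφ : IntervalIntegrable φ volume 0 1) (c₀ : ℕ) (M : ℝ) (hM : 0 ≤ M)
    (hpoly : ∀ c < N, c ≠ c₀ → ∃ P : Polynomial ℝ, P.natDegree ≤ 2 * k ∧
      ∀ x ∈ Icc ((c:ℝ) / N) ((c + 1 : ℝ) / N), φ x = P.eval x)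
    (hbd : c₀ < N → ∀ x ∈ Icc ((c₀:ℝ) / N) ((c₀ + 1 : ℝ) / N), |φ x| ≤ M) :
    |cquad k ω N φ - ∫ x in (0:ℝ)..1, φ x| ≤ M * (1 + ∑ i, |ω i|) / N := by
  have hN0 : (0 : ℝ) < N := by positivity
  have hle : ∀ c : ℕ, (c : ℝ) / N ≤ (c + 1 : ℝ) / N := fun c => by gcongr; linarith
  have hsplit : ∫ x in (0:ℝ)..1, φ x
      = ∑ c ∈ Finset.range N, ∫ x in ((c:ℝ) / N)..((c + 1 : ℝ) / N), φ x := by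
    have := intervalIntegral.sum_integral_adjacent_intervals (f := φ) (μ := volume)
      (a := fun c : ℕ => (c : ℝ) / N) (n := N) ?_
    · simp only [Nat.cast_add, Nat.cast_one] at this
      rw [this]
      simp [hN0.ne']
    · intro c hc
      apply hφ.mono_set
      rw [uIcc_of_le zero_le_one, uIcc_of_le (by simpa using hle c)]
      refine Icc_subset_Icc (by positivity) ?_
      rw [div_le_one hN0]
      exact_mod_cast hc
  have hq : cquad k ω N φ = ∑ c ∈ Finset.range N, ∑ i, ω i / N *
      φ (((c : ℝ) + (i : ℝ) / (2 * k : ℕ)) / N) := by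
    rw [cquad, Finset.sum_range]
  rw [hsplit, hq, ← Finset.sum_sub_distrib]
  have hcell : ∀ c ∈ Finset.range N, |∑ i, ω i / N * φ (((c : ℝ) + (i : ℝ) / (2 * k : ℕ)) / N)
      - ∫ x in ((c:ℝ) / N)..((c + 1 : ℝ) / N), φ x|
      ≤ if c = c₀ then M * (1 + ∑ i, |ω i|) / N else 0 := by
    intro c hc
    split_ifs with h
    · subst h
      have hb := hbd (Finset.mem_range.1 hc)
      have h1 : |∑ i, ω i / N * φ (((c : ℝ) + (i : ℝ) / (2 * k : ℕ)) / N)|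
          ≤ ∑ i, |ω i| / N * M := by
        refine (Finset.abs_sum_le_sum_abs _ _).trans (Finset.sum_le_sum fun i _ => ?_)
        rw [abs_mul, abs_div, Nat.abs_cast]
        gcongr
        exact hb _ (node_mem k c i)
      have h2 : |∫ x in ((c:ℝ) / N)..((c + 1 : ℝ) / N), φ x| ≤ M * (1 / N) := by
        have := intervalIntegral.norm_integral_le_of_norm_le_const (f := φ) (C := M)
          (a := (c:ℝ) / N) (b := (c + 1 : ℝ) / N) ?_
        · rw [Real.norm_eq_abs] at this
          refine this.trans_eq ?_
          rw [← sub_div, add_sub_cancel_left, abs_of_pos (by positivity)]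
        · intro x hx
          rw [uIoc_of_le (hle c)] at hx
          exact hb x (Ioc_subset_Icc_self hx)
      refine (abs_sub _ _).trans ((add_le_add h1 h2).trans_eq ?_)
      rw [← Finset.sum_mul, ← Finset.sum_div]
      ring
    · obtain ⟨P, hP, hPx⟩ := hpoly c (Finset.mem_range.1 hc) h
      have h1 := exact_cell hω hN c P hP
      have h2 : ∫ x in ((c:ℝ) / N)..((c + 1 : ℝ) / N), φ x
          = ∫ x in ((c:ℝ) / N)..((c + 1 : ℝ) / N), P.eval x := by
        apply intervalIntegral.integral_congr
        intro x hx
        rw [uIcc_of_le (hle c)] at hx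
        exact hPx x hx
      have h3 : ∀ i : Fin (2 * k + 1), φ (((c : ℝ) + (i : ℝ) / (2 * k : ℕ)) / N)
          = P.eval (((c : ℝ) + (i : ℝ) / (2 * k : ℕ)) / N) := fun i => hPx _ (node_mem k c i)
      simp_rw [h3]
      rw [h1, h2, sub_self, abs_zero]
  refine (Finset.abs_sum_le_sum_abs _ _).trans ((Finset.sum_le_sum hcell).trans ?_)
  rw [Finset.sum_ite_eq']
  split_ifs
  · exact le_rfl
  · have : 0 ≤ ∑ i, |ω i| := Finset.sum_nonneg fun i _ => abs_nonneg _
    positivity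

lemma cquad_exact {k : ℕ} {ω : Fin (2 * k + 1) → ℝ} (hω : IsExactRule k ω) {N : ℕ} (hN : 1 ≤ N)
    (φ : ℝ → ℝ) (hφ : IntervalIntegrable φ volume 0 1)
    (hpoly : ∀ c < N, ∃ P : Polynomial ℝ, P.natDegree ≤ 2 * k ∧
      ∀ x ∈ Icc ((c:ℝ) / N) ((c + 1 : ℝ) / N), φ x = P.eval x) :
    cquad k ω N φ = ∫ x in (0:ℝ)..1, φ x := by
  have := cquad_error hω hN φ hφ N 0 le_rfl (fun c hc _ => hpoly c hc)
    (fun h => absurd h (lt_irrefl _))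
  rw [zero_mul, zero_div] at this
  exact sub_eq_zero.1 (abs_nonpos_iff.1 this)

lemma poly_shift_pow (a : ℕ) (t r : ℝ) : ∃ P : Polynomial ℝ, P.natDegree ≤ a ∧
    ∀ x, (x - t) ^ a / a.factorial * r = P.eval x := by
  refine ⟨(Polynomial.X - Polynomial.C t) ^ a * Polynomial.C (r / a.factorial), ?_, fun x => ?_⟩
  · refine (Polynomial.natDegree_mul_C_le _ _).trans ?_
    refine Polynomial.natDegree_pow_le.trans ?_
    rw [Polynomial.natDegree_X_sub_C, mul_one]
  · simp; ring

lemma tker_left_measurable (k a : ℕ) (t : ℝ) : Measurable (fun x => tker k a x t) :=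
  (tker_measurable k a).comp (measurable_id.prodMk measurable_const)

lemma intervalIntegrable_of_bdd {φ : ℝ → ℝ} (hm : Measurable φ) {C : ℝ}
    (hb : ∀ x ∈ Icc (0:ℝ) 1, |φ x| ≤ C) : IntervalIntegrable φ volume 0 1 := by
  rw [intervalIntegrable_iff_integrableOn_Icc_of_le zero_le_one]
  refine Measure.integrableOn_of_bounded (M := C) (by simp) hm.aestronglyMeasurable ?_
  filter_upwards [ae_restrict_mem measurableSet_Icc] with x hx
  exact hb x hx

/-- The composite rule in `x` integrates the Taylor kernel up to `O(N^{-k})`: the kernel is polynomial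
in `x` off the cell containing the break point `t`, and on that cell it is at most `N^{-(k-1)}`. -/
lemma cquad_tker_error {k : ℕ} (hk : 1 ≤ k) {ω : Fin (2 * k + 1) → ℝ} (hω : IsExactRule k ω)
    {N : ℕ} (hN : 1 ≤ N) (a : ℕ) {t : ℝ} (ht : t ∈ Icc (0:ℝ) 1) :
    |cquad k ω N (fun x => tker k a x t) - ∫ x in (0:ℝ)..1, tker k a x t|
      ≤ (1 + ∑ i, |ω i|) / (N : ℝ) ^ k := by
  have hN0 : (0 : ℝ) < N := by positivity
  have hW : 0 ≤ ∑ i, |ω i| := Finset.sum_nonneg fun i _ => abs_nonneg _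
  have hInt : IntervalIntegrable (fun x => tker k a x t) volume 0 1 :=
    intervalIntegrable_of_bdd (tker_left_measurable k a t) (fun x hx => tker_bound k a hx ht)
  by_cases ha : a < k
  · rw [cquad_exact hω hN _ hInt, sub_self, abs_zero]
    · positivity
    · intro c _
      obtain ⟨P, hP, hPx⟩ := poly_shift_pow a t 1
      refine ⟨P, by omega, fun x _ => ?_⟩
      rw [← hPx]
      simp [tker, ha]
  -- `c` is the cell containing the break point `t`, the left one if `t` is a grid point
  · have hc : ∃ c : ℕ, (c : ℝ) / N ≤ t ∧ t ≤ (c + 1) / N ∧ (∀ c' : ℕ, c' < c → (c' + 1 : ℝ) / N < t) := by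
      refine ⟨⌈N * t⌉₊ - 1, ?_, ?_, ?_⟩
      · rw [div_le_iff₀ hN0]
        rcases Nat.eq_zero_or_pos ⌈N * t⌉₊ with h | h
        · rw [h]; simpa using mul_nonneg ht.1 hN0.le
        · rw [Nat.cast_sub h]
          have := Nat.ceil_lt_add_one (mul_nonneg hN0.le ht.1)
          push_cast; linarith
      · rw [le_div_iff₀ hN0]
        have h1 := Nat.le_ceil (N * t)
        have h2 : (⌈N * t⌉₊ : ℝ) ≤ ((⌈N * t⌉₊ - 1 : ℕ) : ℝ) + 1 := by
          exact_mod_cast (by omega)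
        linarith
      · intro c' hc'
        rw [div_lt_iff₀ hN0]
        have : c' + 1 < ⌈N * t⌉₊ := by omega
        have := Nat.lt_ceil.1 this
        push_cast at this
        linarith
    obtain ⟨c, hc1, hc2, hc3⟩ := hc
    have := cquad_error hω hN _ hInt c ((1 / (N:ℝ)) ^ (k - 1)) (by positivity) ?_ ?_
    · refine this.trans_eq ?_
      obtain ⟨l, rfl⟩ : ∃ l, k = l + 1 := ⟨k - 1, by omega⟩
      simp only [Nat.add_sub_cancel]
      rw [div_pow, one_pow, pow_succ]
      field_simp
    · intro c' _ hne
      rcases lt_or_gt_of_ne hne with h | h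
      · obtain ⟨P, hP, hPx⟩ := poly_shift_pow (k - 1) t (t - 1)
        refine ⟨P, by omega, fun x hx => ?_⟩
        have : x < t := hx.2.trans_lt (hc3 c' h)
        rw [← hPx]
        simp [tker, ha, this]
      · obtain ⟨P, hP, hPx⟩ := poly_shift_pow (k - 1) t t
        refine ⟨P, by omega, fun x hx => ?_⟩
        have h1 : (c + 1 : ℝ) / N ≤ c' / N := by
          gcongr; exact_mod_cast h
        have : ¬ x < t := not_lt.2 (hc2.trans (h1.trans hx.1))
        rw [← hPx]
        simp [tker, ha, this]
    · intro _ x hx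
      have hxt : |x - t| ≤ 1 / N := by
        have : (c + 1 : ℝ) / N = c / N + 1 / N := by ring
        rw [abs_le]; constructor <;> linarith [hx.1, hx.2]
      simp only [tker, ha, if_false]
      rw [abs_mul, abs_div, abs_pow, Nat.abs_cast]
      have h1 : (1:ℝ) ≤ (k - 1).factorial := by exact_mod_cast Nat.factorial_pos _
      have h2 : |t - if x < t then 1 else 0| ≤ 1 := by
        split_ifs <;> rw [abs_le] <;> constructor <;> linarith [ht.1, ht.2]
      calc |x - t| ^ (k - 1) / (k - 1).factorial * |t - if x < t then 1 else 0|
          ≤ |x - t| ^ (k - 1) / 1 * 1 := by gcongr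
        _ = |x - t| ^ (k - 1) := by ring
        _ ≤ _ := by gcongr

/-! ### Gram function of the Taylor kernel -/

/-- Averaging `(x - t)^a / a!` over `t` against an integrable density gives a polynomial in `x`. -/
lemma poly_integral_unit (a : ℕ) (v : ℝ → ℝ) (hv : Integrable v unitMeas) :
    ∃ P : Polynomial ℝ, P.natDegree ≤ a ∧
      ∀ x, ∫ t, (x - t) ^ a / a.factorial * v t ∂unitMeas = P.eval x := by
  refine ⟨∑ m ∈ Finset.range (a + 1), Polynomial.C
    (∫ t, (-t) ^ (a - m) * (a.choose m) / a.factorial * v t ∂unitMeas) * Polynomial.X ^ m, ?_,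
    fun x => ?_⟩
  · refine Polynomial.natDegree_sum_le_of_forall_le _ _ fun m hm => ?_
    exact (Polynomial.natDegree_C_mul_X_pow_le _ _).trans (by simpa [Nat.lt_succ_iff] using hm)
  · have hi : ∀ m, Integrable (fun t => (-t) ^ (a - m) * (a.choose m) / a.factorial * v t)
        unitMeas := by
      intro m
      refine hv.bdd_mul (c := (a.choose m)) (by fun_prop) ?_
      filter_upwards [ae_unit] with t ht
      have h1 : (1:ℝ) ≤ a.factorial := by exact_mod_cast Nat.factorial_pos _
      have h2 : |t| ≤ 1 := by rw [abs_le]; constructor <;> linarith [ht.1, ht.2]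
      rw [Real.norm_eq_abs, abs_div, abs_mul, abs_pow, abs_neg, Nat.abs_cast, Nat.abs_cast]
      have h3 : |t| ^ (a - m) ≤ 1 := pow_le_one₀ (abs_nonneg _) h2
      calc |t| ^ (a - m) * (a.choose m) / a.factorial ≤ 1 * (a.choose m) / 1 := by gcongr
        _ = _ := by ring
    simp only [Polynomial.eval_finsetSum, Polynomial.eval_mul, Polynomial.eval_C,
      Polynomial.eval_pow, Polynomial.eval_X]
    simp_rw [← integral_mul_const]
    rw [← integral_finsetSum _ (fun m _ => (hi m).mul_const _)]
    congr 1
    ext t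
    rw [sub_eq_add_neg, add_pow, Finset.sum_div, Finset.sum_mul]
    refine Finset.sum_congr rfl fun m _ => ?_
    ring

/-- The primitive-type integral over `[x,1]` of a polynomial density against `(x - t)^(k-1)` is a
polynomial of degree at most `2k` in `x`. -/
lemma poly_integral_tail (k : ℕ) (hk : 1 ≤ k) (q : Polynomial ℝ) (hq : q.natDegree ≤ k) :
    ∃ P : Polynomial ℝ, P.natDegree ≤ 2 * k ∧
      ∀ x, ∫ t in x..1, (x - t) ^ (k - 1) / (k - 1).factorial * q.eval t = P.eval x := by
  refine ⟨∑ m ∈ Finset.range (k - 1 + 1), ∑ l ∈ Finset.range (k + 1), Polynomial.C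
    ((-1) ^ (k - 1 - m) * ((k - 1).choose m) / (k - 1).factorial * q.coeff l
      / ((k - 1 - m + l : ℕ) + 1 : ℝ)) * (Polynomial.X ^ m *
      (Polynomial.C 1 - Polynomial.X ^ (k - 1 - m + l + 1))), ?_, fun x => ?_⟩
  · refine Polynomial.natDegree_sum_le_of_forall_le _ _ fun m hm => ?_
    refine Polynomial.natDegree_sum_le_of_forall_le _ _ fun l hl => ?_
    rw [Finset.mem_range] at hm hl
    refine (Polynomial.natDegree_C_mul_le _ _).trans (Polynomial.natDegree_mul_le.trans ?_)
    rw [Polynomial.natDegree_X_pow]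
    have : (Polynomial.C (1:ℝ) - Polynomial.X ^ (k - 1 - m + l + 1)).natDegree
        ≤ k - 1 - m + l + 1 := by
      refine (Polynomial.natDegree_sub_le _ _).trans ?_
      simp
    omega
  · simp only [Polynomial.eval_finsetSum, Polynomial.eval_mul, Polynomial.eval_C,
      Polynomial.eval_pow, Polynomial.eval_X, Polynomial.eval_sub]
    have hexp : ∀ t, (x - t) ^ (k - 1) / (k - 1).factorial * q.eval t
        = ∑ m ∈ Finset.range (k - 1 + 1), ∑ l ∈ Finset.range (k + 1),
          ((-1) ^ (k - 1 - m) * ((k - 1).choose m) / (k - 1).factorial * q.coeff l * x ^ m)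
            * t ^ (k - 1 - m + l) := by
      intro t
      rw [Polynomial.eval_eq_sum_range' (Nat.lt_succ_of_le hq), sub_eq_add_neg, add_pow,
        Finset.sum_div, Finset.sum_mul]
      refine Finset.sum_congr rfl fun m _ => ?_
      rw [Finset.mul_sum]
      refine Finset.sum_congr rfl fun l _ => ?_
      rw [neg_pow t]
      ring
    simp_rw [hexp]
    rw [intervalIntegral.integral_finsetSum
      (fun m _ => (by fun_prop : Continuous _).intervalIntegrable _ _)]
    refine Finset.sum_congr rfl fun m _ => ?_
    rw [intervalIntegral.integral_finsetSum
      (fun m _ => (by fun_prop : Continuous _).intervalIntegrable _ _)]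
    refine Finset.sum_congr rfl fun l _ => ?_
    rw [intervalIntegral.integral_const_mul, integral_pow, one_pow]
    ring

lemma integral_ind_tail {x : ℝ} (hx : x ∈ Icc (0:ℝ) 1) (u : ℝ → ℝ) :
    ∫ t, (if x < t then u t else 0) ∂unitMeas = ∫ t in x..1, u t := by
  have : (fun t => if x < t then u t else 0) = (Ioi x).indicator u := by
    ext t; simp [indicator]
  rw [this, unitMeas, integral_indicator measurableSet_Ioi, Measure.restrict_restrict
    measurableSet_Ioi, intervalIntegral.integral_of_le hx.2]
  congr 2
  ext t
  simp only [mem_inter_iff, mem_Ioi, mem_Icc, mem_Ioc]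
  constructor
  · rintro ⟨h1, _, h2⟩; exact ⟨h1, h2⟩
  · rintro ⟨h1, h2⟩; exact ⟨h1, by linarith [hx.1], h2⟩

lemma integrable_of_bdd {φ : ℝ → ℝ} (hm : Measurable φ) {C : ℝ}
    (hb : ∀ x ∈ Icc (0:ℝ) 1, |φ x| ≤ C) : Integrable φ unitMeas := by
  refine Integrable.of_bound hm.aestronglyMeasurable C ?_
  filter_upwards [ae_unit] with x hx
  exact hb x hx

/-- The Gram function `⟨tker k a x, tker k a y⟩` in `L²([0,1])`. -/
noncomputable def tgram (k a : ℕ) (x y : ℝ) : ℝ := ∫ t, tker k a x t * tker k a y t ∂unitMeas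

/-- A kernel integral consisting of a smooth part with density `v` and a part supported in `t > x`
with polynomial density is a polynomial of degree at most `2k` in `x`. -/
lemma tgram_of_split {k : ℕ} (hk : 1 ≤ k) (v : ℝ → ℝ) (hv : Integrable v unitMeas)
    (q : Polynomial ℝ) (hq : q.natDegree ≤ k) :
    ∃ P : Polynomial ℝ, P.natDegree ≤ 2 * k ∧ ∀ x ∈ Icc (0:ℝ) 1,
      ∫ t, ((x - t) ^ (k - 1) / (k - 1).factorial * v t
        - if x < t then (x - t) ^ (k - 1) / (k - 1).factorial * q.eval t else 0) ∂unitMeas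
        = P.eval x := by
  obtain ⟨P, hP, hPx⟩ := poly_integral_unit (k - 1) v hv
  obtain ⟨P', hP', hPx'⟩ := poly_integral_tail k hk q hq
  refine ⟨P - P', (Polynomial.natDegree_sub_le _ _).trans (max_le (by omega) hP'), fun x hx => ?_⟩
  rw [integral_sub, integral_ind_tail hx, hPx, hPx', Polynomial.eval_sub]
  · refine hv.bdd_mul (c := 1) (by fun_prop) ?_
    filter_upwards [ae_unit] with t ht
    refine pow_div_fact_le ?_ _
    rw [abs_le]; constructor <;> linarith [hx.1, hx.2, ht.1, ht.2]
  · have hc : Continuous fun t => (x - t) ^ (k - 1) / (k - 1).factorial * q.eval t := by fun_prop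
    have hi : Integrable (fun t => (x - t) ^ (k - 1) / (k - 1).factorial * q.eval t) unitMeas :=
      hc.continuousOn.integrableOn_compact isCompact_Icc
    have : (fun t => if x < t then (x - t) ^ (k - 1) / (k - 1).factorial * q.eval t else 0)
        = (Ioi x).indicator (fun t => (x - t) ^ (k - 1) / (k - 1).factorial * q.eval t) := by
      ext t; simp [indicator]
    rw [this]
    exact hi.indicator measurableSet_Ioi

/-- For fixed `y` the Gram function is polynomial of degree at most `2k` on each side of `y`. -/
lemma tgram_poly {k : ℕ} (hk : 1 ≤ k) (a : ℕ) {y : ℝ} (hy : y ∈ Icc (0:ℝ) 1) :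
    (∃ P : Polynomial ℝ, P.natDegree ≤ 2 * k ∧ ∀ x ∈ Icc y 1, tgram k a x y = P.eval x) ∧
    (∃ P : Polynomial ℝ, P.natDegree ≤ 2 * k ∧ ∀ x ∈ Icc 0 y, tgram k a x y = P.eval x) := by
  have hky : Integrable (tker k a y) unitMeas :=
    integrable_of_bdd (tker_measurable_right k a y) (fun t ht => tker_bound k a hy ht)
  by_cases ha : a < k
  · obtain ⟨P, hP, hPx⟩ := poly_integral_unit a (tker k a y) hky
    have : ∀ x, tgram k a x y = P.eval x := by
      intro x
      rw [← hPx, tgram]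
      simp [tker, ha]
    exact ⟨⟨P, by omega, fun x _ => this x⟩, ⟨P, by omega, fun x _ => this x⟩⟩
  have hv1 : Integrable (fun t => t * tker k a y t) unitMeas :=
    integrable_of_bdd (measurable_id.mul (tker_measurable_right k a y)) (C := 1) fun t ht => by
      rw [abs_mul]
      refine mul_le_one₀ ?_ (abs_nonneg _) (tker_bound k a hy ht)
      rw [abs_le]; constructor <;> linarith [ht.1, ht.2]
  have hv2 : Integrable (fun t => if y < t then (y - t) ^ (k - 1) / (k - 1).factorial else 0)
      unitMeas := by
    refine integrable_of_bdd (C := 1) ?_ fun t ht => ?_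
    · exact Measurable.ite measurableSet_Ioi (by fun_prop) measurable_const
    · split_ifs
      · refine pow_div_fact_le ?_ _
        rw [abs_le]; constructor <;> linarith [hy.1, hy.2, ht.1, ht.2]
      · simp
  have hdeg : ∀ r : ℝ, (Polynomial.C (1 / ((k - 1).factorial : ℝ)) *
      ((Polynomial.C y - Polynomial.X) ^ (k - 1) * (Polynomial.X - Polynomial.C r))).natDegree
      ≤ k := by
    intro r
    refine (Polynomial.natDegree_C_mul_le _ _).trans (Polynomial.natDegree_mul_le.trans ?_)
    have h1 : ((Polynomial.C y - Polynomial.X : Polynomial ℝ) ^ (k - 1)).natDegree ≤ k - 1 := by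
      refine Polynomial.natDegree_pow_le.trans ?_
      have : (Polynomial.C y - Polynomial.X : Polynomial ℝ).natDegree ≤ 1 := by
        refine (Polynomial.natDegree_sub_le _ _).trans ?_
        simp
      calc (k - 1) * _ ≤ (k - 1) * 1 := Nat.mul_le_mul le_rfl this
        _ = k - 1 := by ring
    rw [Polynomial.natDegree_X_sub_C]
    omega
  constructor
  · obtain ⟨P, hP, hPx⟩ := tgram_of_split hk _ hv1 _ (hdeg 1)
    refine ⟨P, hP, fun x hx => ?_⟩
    rw [← hPx x ⟨hy.1.trans hx.1, hx.2⟩, tgram]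
    congr 1
    ext t
    simp only [tker, ha, if_false]
    by_cases hxt : x < t
    · have : y < t := hx.1.trans_lt hxt
      simp [hxt, this]
      ring
    · simp [hxt]
      ring
  · obtain ⟨P, hP, hPx⟩ := tgram_of_split hk _ (hv1.add hv2) _ (hdeg 0)
    refine ⟨P, hP, fun x hx => ?_⟩
    rw [← hPx x ⟨hx.1, hx.2.trans hy.2⟩, tgram]
    congr 1
    ext t
    simp only [tker, ha, if_false, Pi.add_apply]
    by_cases hyt : y < t
    · have : x < t := hx.2.trans_lt hyt
      simp [hyt, this]
      ring
    · by_cases hxt : x < t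
      · simp [hxt, hyt]; ring
      · simp [hxt, hyt]; ring

/-- If `y` is a point of the grid `ℤ / N`, the composite rule with `N` cells is exact for the Gram
function `tgram k a · y`, since its only break point lies between two cells. -/
lemma tgram_cquad {k : ℕ} (hk : 1 ≤ k) {ω : Fin (2 * k + 1) → ℝ} (hω : IsExactRule k ω)
    {N : ℕ} (hN : 1 ≤ N) (a : ℕ) {y : ℝ} (hy : y ∈ Icc (0:ℝ) 1) (r : ℕ) (hr : y = r / N) :
    cquad k ω N (fun x => tgram k a x y) = ∫ x in (0:ℝ)..1, tgram k a x y := by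
  obtain ⟨⟨P, hP, hPx⟩, ⟨P', hP', hPx'⟩⟩ := tgram_poly hk a hy
  have hN0 : (0 : ℝ) < N := by positivity
  refine cquad_exact hω hN _ ?_ ?_
  · have i1 : IntervalIntegrable (fun x => tgram k a x y) volume 0 y := by
      refine IntervalIntegrable.congr (f := fun x => P'.eval x) ?_
        (P'.continuous.intervalIntegrable _ _)
      intro x hx
      rw [uIoc_of_le hy.1] at hx
      exact (hPx' x (Ioc_subset_Icc_self hx)).symm
    have i2 : IntervalIntegrable (fun x => tgram k a x y) volume y 1 := by
      refine IntervalIntegrable.congr (f := fun x => P.eval x) ?_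
        (P.continuous.intervalIntegrable _ _)
      intro x hx
      rw [uIoc_of_le hy.2] at hx
      exact (hPx x (Ioc_subset_Icc_self hx)).symm
    exact i1.trans i2
  · intro c hc
    rcases le_or_gt r c with h | h
    · refine ⟨P, hP, fun x hx => hPx x ⟨?_, hx.2.trans ?_⟩⟩
      · rw [hr]; refine le_trans ?_ hx.1; gcongr
      · rw [div_le_one hN0]; exact_mod_cast hc
    · refine ⟨P', hP', fun x hx => hPx' x ⟨le_trans (by positivity) hx.1, hx.2.trans ?_⟩⟩
      rw [hr]; gcongr; exact_mod_cast h

/-! ### One-dimensional increments -/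

/-- The increment between the composite rules with `(2k)^j` and `(2k)^(j-1)` cells; for `j = 0` it is
the rule with one cell. -/
noncomputable def dquad (k : ℕ) (ω : Fin (2 * k + 1) → ℝ) (j : ℕ) (φ : ℝ → ℝ) : ℝ :=
  cquad k ω ((2 * k) ^ j) φ - if j = 0 then 0 else cquad k ω ((2 * k) ^ (j - 1)) φ

lemma sum_dquad (k : ℕ) (ω : Fin (2 * k + 1) → ℝ) (φ : ℝ → ℝ) (M : ℕ) :
    ∑ j ∈ Finset.range (M + 1), dquad k ω j φ = cquad k ω ((2 * k) ^ M) φ := by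
  induction M with
  | zero => simp [dquad]
  | succ M ih => rw [Finset.sum_range_succ, ih]; simp [dquad]

/-- The increment of level `j` as an explicit quadrature rule. All nodes lie on the grid of mesh
`(2k)^{-(j+1)}`; this is why the number of cells is refined by the factor `2k`. -/
lemma dquad_rule {k : ℕ} (hk : 1 ≤ k) (ω : Fin (2 * k + 1) → ℝ) (j : ℕ) :
    ∃ (n : ℕ) (y w : Fin n → ℝ), n ≤ 2 * (2 * k + 1) * (2 * k) ^ j ∧
      (∀ i, y i ∈ Icc (0:ℝ) 1) ∧ (∀ i, ∃ r : ℕ, y i = r / ((2 * k) ^ (j + 1) : ℕ)) ∧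
      ∀ φ : ℝ → ℝ, ∑ i, w i * φ (y i) = dquad k ω j φ := by
  have hb : 0 < 2 * k := by omega
  let ι := (Fin ((2 * k) ^ j) × Fin (2 * k + 1)) ⊕ (Fin ((2 * k) ^ (j - 1)) × Fin (2 * k + 1))
  let nd : ℕ → ℕ → ℕ → ℝ := fun N c i => ((c : ℝ) + (i : ℝ) / (2 * k : ℕ)) / N
  let Y : ι → ℝ := Sum.elim (fun p => nd ((2 * k) ^ j) p.1 p.2)
    (fun p => nd ((2 * k) ^ (j - 1)) p.1 p.2)
  let V : ι → ℝ := Sum.elim (fun p => ω p.2 / ((2 * k) ^ j : ℕ))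
    (fun p => if j = 0 then 0 else -(ω p.2 / ((2 * k) ^ (j - 1) : ℕ)))
  let e := (Fintype.equivFin ι).symm
  have hmem : ∀ (N : ℕ), 1 ≤ N → ∀ (c : Fin N) (i : Fin (2 * k + 1)), nd N c i ∈ Icc (0:ℝ) 1 := by
    intro N hN c i
    have := node_mem k (c : ℝ) (N := N) i
    have hN0 : (0 : ℝ) < N := by positivity
    refine ⟨le_trans (by positivity) this.1, this.2.trans ?_⟩
    rw [div_le_one hN0]; exact_mod_cast c.2
  have hgrid : ∀ (l : ℕ) (c i : ℕ), nd ((2 * k) ^ l) c i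
      = ((c * (2 * k) + i : ℕ) : ℝ) / ((2 * k) ^ (l + 1) : ℕ) := by
    intro l c i
    have h2 : ((2 * k : ℕ) : ℝ) ≠ 0 := by exact_mod_cast hb.ne'
    simp only [nd]
    rw [Nat.cast_pow, Nat.cast_pow, pow_succ, Nat.cast_add, Nat.cast_mul]
    field_simp
    push_cast
    ring
  refine ⟨Fintype.card ι, Y ∘ e, V ∘ e, ?_, ?_, ?_, ?_⟩
  · simp only [ι, Fintype.card_sum, Fintype.card_prod, Fintype.card_fin]
    have : (2 * k) ^ (j - 1) ≤ (2 * k) ^ j := Nat.pow_le_pow_right hb (by omega)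
    nlinarith
  · intro i
    simp only [Function.comp]
    rcases e i with p | p
    · exact hmem _ (Nat.one_le_pow _ _ hb) p.1 p.2
    · exact hmem _ (Nat.one_le_pow _ _ hb) p.1 p.2
  · intro i
    simp only [Function.comp]
    rcases e i with p | p
    · exact ⟨_, hgrid _ _ _⟩
    · rcases Nat.eq_zero_or_pos j with h | h
      · subst h
        exact ⟨_, hgrid 0 _ _⟩
      · refine ⟨((p.1 : ℕ) * (2 * k) + (p.2 : ℕ)) * (2 * k), (hgrid (j - 1) p.1 p.2).trans ?_⟩
        have h2 : ((2 * k : ℕ) : ℝ) ≠ 0 := by exact_mod_cast hb.ne'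
        rw [Nat.sub_add_cancel h, pow_succ, Nat.cast_mul, Nat.cast_mul _ (2 * k),
          mul_div_mul_right _ _ h2]
  · intro φ
    simp only [Function.comp]
    rw [e.sum_comp (fun i => V i * φ (Y i)), Fintype.sum_sum_type, Fintype.sum_prod_type,
      Fintype.sum_prod_type, dquad, cquad]
    simp only [V, Y, Sum.elim_inl, Sum.elim_inr, nd]
    rw [sub_eq_add_neg]
    congr 1
    split_ifs
    · simp
    · simp [cquad]

/-- Everything needed from one dimension. The kernels `h_j = ∑ i, w j i * tker k a (y j i)` of the
increments decay like `b^{-kj}`, are orthogonal in `L²` as soon as the levels differ by at least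
two, and sum up to the kernel of the exact integral. -/
theorem oneD (k : ℕ) (hk : 1 ≤ k) : ∃ (b : ℕ) (C : ℝ) (nn : ℕ → ℕ) (y w : ∀ j, Fin (nn j) → ℝ),
    2 ≤ b ∧ 0 < C ∧ (∀ j, (nn j : ℝ) ≤ C * (b : ℝ) ^ j) ∧ (∀ j i, y j i ∈ Icc (0:ℝ) 1) ∧
    (∀ j a, ∀ t ∈ Icc (0:ℝ) 1,
      |∑ i, w j i * tker k a (y j i) t| ≤ C * ((b : ℝ) ^ (k * j))⁻¹) ∧
    (∀ j j' a, j + 2 ≤ j' → ∫ t, (∑ i, w j i * tker k a (y j i) t) *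
      (∑ i, w j' i * tker k a (y j' i) t) ∂unitMeas = 0) ∧
    (∀ a, ∀ t ∈ Icc (0:ℝ) 1, Filter.Tendsto
      (fun M => ∑ j ∈ Finset.range M, ∑ i, w j i * tker k a (y j i) t) Filter.atTop
      (nhds (∫ x, tker k a x t ∂unitMeas))) := by
  obtain ⟨ω, hω⟩ := exists_exactRule k hk
  choose nn y w hn hy hgrid hrule using fun j => dquad_rule hk ω j
  set W := ∑ i, |ω i| with hW
  have hW0 : 0 ≤ W := Finset.sum_nonneg fun i _ => abs_nonneg _
  have hb : 2 ≤ 2 * k := by omega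
  obtain ⟨b, hbdef⟩ : ∃ b, b = 2 * k := ⟨_, rfl⟩
  simp only [← hbdef] at hn hgrid hb
  have hbR : (2:ℝ) ≤ (b : ℝ) := by exact_mod_cast hb
  have hb0 : (0:ℝ) < b := by linarith
  have hb1 : ∀ j, 1 ≤ b ^ j := fun j => Nat.one_le_pow _ _ (by omega)
  have hC1 : 0 ≤ (1 + W) * (1 + (b : ℝ) ^ k) := by positivity
  refine ⟨b, (1 + (1 + W) * (1 + (b : ℝ) ^ k)) + 2 * (b + 1), nn, y, w, hb, by positivity,
    ?_, hy, ?_, ?_, ?_⟩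
  · intro j
    have h1 : (nn j : ℝ) ≤ 2 * (b + 1) * (b : ℝ) ^ j := by exact_mod_cast hn j
    refine h1.trans ?_
    gcongr
    linarith
  · intro j a t ht
    rw [hrule j (fun x => tker k a x t)]
    have herr := fun l => cquad_tker_error hk hω (hb1 l) a ht
    have hsuff : |dquad k ω j fun x => tker k a x t|
        ≤ (1 + (1 + W) * (1 + (b : ℝ) ^ k)) * ((b : ℝ) ^ (k * j))⁻¹ := by
      rw [dquad, ← hbdef]
      rcases Nat.eq_zero_or_pos j with h | h
      · subst h
        have h1 := herr 0
        have h2 : |∫ x in (0:ℝ)..1, tker k a x t| ≤ 1 := by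
          have := intervalIntegral.norm_integral_le_of_norm_le_const (C := 1)
            (f := fun x => tker k a x t) (a := (0:ℝ)) (b := 1) (fun x hx => by
              rw [uIoc_of_le zero_le_one] at hx
              exact tker_bound k a (Ioc_subset_Icc_self hx) ht)
          simpa using this
        have h3 := abs_sub_abs_le_abs_sub (cquad k ω (b ^ 0) fun x => tker k a x t)
          (∫ x in (0:ℝ)..1, tker k a x t)
        simp only [if_true, sub_zero, mul_zero, pow_zero, inv_one, mul_one, Nat.cast_one, one_pow,
          div_one] at h1 h3 ⊢
        have h4 : (1 + W) * 1 ≤ (1 + W) * (1 + (b : ℝ) ^ k) := by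
          gcongr
          have : 0 ≤ (b : ℝ) ^ k := by positivity
          linarith
        linarith
      · have h1 := herr j
        have h2 := herr (j - 1)
        rw [if_neg (by omega)]
        have h3 := abs_sub (cquad k ω (b ^ j) (fun x => tker k a x t)
          - ∫ x in (0:ℝ)..1, tker k a x t) (cquad k ω (b ^ (j - 1)) (fun x => tker k a x t)
          - ∫ x in (0:ℝ)..1, tker k a x t)
        rw [sub_sub_sub_cancel_right] at h3
        refine h3.trans ((add_le_add h1 h2).trans ?_)
        obtain ⟨l, rfl⟩ : ∃ l, j = l + 1 := ⟨j - 1, by omega⟩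
        simp only [Nat.add_sub_cancel]
        have e1 : ((b ^ (l + 1) : ℕ) : ℝ) ^ k = (b : ℝ) ^ (k * l) * (b : ℝ) ^ k := by
          push_cast; rw [← pow_mul, ← pow_add]; congr 1; ring
        have e2 : ((b ^ l : ℕ) : ℝ) ^ k = (b : ℝ) ^ (k * l) := by
          push_cast; rw [← pow_mul]; congr 1; ring
        have e3 : (b : ℝ) ^ (k * (l + 1)) = (b : ℝ) ^ (k * l) * (b : ℝ) ^ k := by
          rw [← pow_add]; congr 1
        rw [e1, e2, e3]
        have p1 : (b : ℝ) ^ (k * l) ≠ 0 := by positivity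
        have p2 : (b : ℝ) ^ k ≠ 0 := by positivity
        have : (1 + W) / ((b : ℝ) ^ (k * l) * (b : ℝ) ^ k) + (1 + W) / (b : ℝ) ^ (k * l)
            = ((1 + W) * (1 + (b : ℝ) ^ k)) * ((b : ℝ) ^ (k * l) * (b : ℝ) ^ k)⁻¹ := by
          field_simp
        rw [this]
        gcongr
        linarith
    refine hsuff.trans (mul_le_mul_of_nonneg_right ?_ (by positivity))
    linarith
  · intro j j' a hjj
    have hInt : ∀ (x x' : ℝ), x ∈ Icc (0:ℝ) 1 → x' ∈ Icc (0:ℝ) 1 →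
        Integrable (fun t => tker k a x t * tker k a x' t) unitMeas := by
      intro x x' hx hx'
      refine integrable_of_bdd ((tker_measurable_right k a x).mul (tker_measurable_right k a x'))
        (C := 1) fun t ht => ?_
      rw [abs_mul]
      exact mul_le_one₀ (tker_bound k a hx ht) (abs_nonneg _) (tker_bound k a hx' ht)
    -- the nodes of level `j` lie on the grids of both composite rules forming the increment of the
    -- higher level, and these are exact for the Gram function
    have hz : ∀ i, dquad k ω j' (fun x => tgram k a x (y j i)) = 0 := by
      intro i
      obtain ⟨r, hr⟩ := hgrid j i
      have hex : ∀ l, j + 1 ≤ l → cquad k ω (b ^ l) (fun x => tgram k a x (y j i))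
          = ∫ x in (0:ℝ)..1, tgram k a x (y j i) := by
        intro l hl
        refine tgram_cquad hk hω (hb1 l) a (hy j i) (r * b ^ (l - (j + 1))) ?_
        rw [hr]
        have hne : ((b ^ (l - (j + 1)) : ℕ) : ℝ) ≠ 0 := by
          exact_mod_cast (Nat.one_le_iff_ne_zero.1 (hb1 _))
        rw [← mul_div_mul_right _ _ hne, ← Nat.cast_mul, ← Nat.cast_mul, ← pow_add,
          Nat.add_sub_cancel' hl]
      rw [dquad, ← hbdef, if_neg (by omega), hex j' (by omega), hex (j' - 1) (by omega), sub_self]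
    have hexp : ∀ t, (∑ i, w j i * tker k a (y j i) t) * (∑ i, w j' i * tker k a (y j' i) t)
        = ∑ i, ∑ i', w j i * w j' i' * (tker k a (y j' i') t * tker k a (y j i) t) := by
      intro t
      rw [Finset.sum_mul_sum]
      refine Finset.sum_congr rfl fun i _ => Finset.sum_congr rfl fun i' _ => ?_
      ring
    simp_rw [hexp]
    rw [integral_finsetSum _ fun i _ => integrable_finsetSum _ fun i' _ =>
      (hInt _ _ (hy j' i') (hy j i)).const_mul _]
    refine Finset.sum_eq_zero fun i _ => ?_
    rw [integral_finsetSum _ fun i' _ => (hInt _ _ (hy j' i') (hy j i)).const_mul _]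
    simp_rw [integral_const_mul]
    have := hz i
    rw [← hrule j'] at this
    calc _ = w j i * ∑ i', w j' i' * tgram k a (y j' i') (y j i) := by
          rw [Finset.mul_sum]
          refine Finset.sum_congr rfl fun i' _ => ?_
          rw [tgram]; ring
      _ = 0 := by rw [this, mul_zero]
  · intro a t ht
    rw [integral_unitMeas, ← Filter.tendsto_add_atTop_iff_nat 1]
    simp_rw [fun j => hrule j (fun x => tker k a x t), sum_dquad, ← hbdef]
    rw [tendsto_iff_norm_sub_tendsto_zero]
    have hlim : Filter.Tendsto (fun M : ℕ => (1 + W) * (((b : ℝ) ^ k)⁻¹) ^ M) Filter.atTop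
        (nhds 0) := by
      have := tendsto_pow_atTop_nhds_zero_of_lt_one (r := ((b : ℝ) ^ k)⁻¹) (by positivity)
        (inv_lt_one_of_one_lt₀ (one_lt_pow₀ (by linarith) (by omega)))
      simpa using this.const_mul (1 + W)
    refine squeeze_zero (fun M => norm_nonneg _) (fun M => ?_) hlim
    refine (cquad_tker_error hk hω (hb1 M) a ht).trans_eq ?_
    rw [div_eq_mul_inv, inv_pow]
    congr 2
    push_cast
    rw [← pow_mul, ← pow_mul, mul_comm]

/-! ### Counting multi-indices -/

/-- A multi-index with given sum is determined by all but its first entry. -/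
lemma card_fiber_le (e s : ℕ) (S : Finset (Fin (e + 1) → ℕ)) :
    (S.filter fun j => ∑ i, j i = s).card ≤ (s + 1) ^ e := by
  have h : (Fintype.piFinset fun _ : Fin e => Finset.range (s + 1)).card = (s + 1) ^ e := by
    simp
  rw [← h]
  refine Finset.card_le_card_of_injOn Fin.tail ?_ ?_
  · intro j hj
    have hj := (Finset.mem_filter.1 hj).2
    refine Finset.mem_coe.2 (Fintype.mem_piFinset.2 fun i => Finset.mem_range.2 ?_)
    have : j i.succ ≤ ∑ i, j i := Finset.single_le_sum (f := j) (fun _ _ => Nat.zero_le _)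
      (Finset.mem_univ _)
    simp only [Fin.tail]
    omega
  · intro j hj j' hj' hjj
    have h1 := (Finset.mem_filter.1 hj).2
    have h2 := (Finset.mem_filter.1 hj').2
    rw [Fin.sum_univ_succ] at h1 h2
    have h3 : ∀ i : Fin e, j i.succ = j' i.succ := fun i => congrFun hjj i
    simp only [h3] at h1
    funext i
    refine Fin.cases ?_ h3 i
    omega

lemma sum_by_level (e : ℕ) (S : Finset (Fin (e + 1) → ℕ)) (T : Finset ℕ)
    (hT : ∀ j ∈ S, ∑ i, j i ∈ T) (g : ℕ → ℝ) (hg : ∀ s, 0 ≤ g s) :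
    ∑ j ∈ S, g (∑ i, j i) ≤ ∑ s ∈ T, ((s : ℝ) + 1) ^ e * g s := by
  rw [← Finset.sum_fiberwise_of_maps_to hT]
  refine Finset.sum_le_sum fun s _ => ?_
  rw [Finset.sum_congr rfl (g := fun _ => g s) fun j hj => by rw [(Finset.mem_filter.1 hj).2],
    Finset.sum_const, nsmul_eq_mul]
  refine mul_le_mul_of_nonneg_right ?_ (hg s)
  exact_mod_cast card_fiber_le e s S

lemma geom_sum_le_two_mul {b : ℝ} (hb : 2 ≤ b) (m : ℕ) : ∑ s ∈ Finset.range (m + 1), b ^ s ≤ 2 * b ^ m := by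
  induction m with
  | zero => simp
  | succ m ih =>
    rw [Finset.sum_range_succ]
    have : 0 ≤ b ^ m := by positivity
    rw [pow_succ]
    nlinarith

/-- Summation over the Smolyak index set; this counts the points of the rule. -/
lemma sum_low (e : ℕ) {b : ℝ} (hb : 2 ≤ b) (m : ℕ) (S : Finset (Fin (e + 1) → ℕ))
    (hS : ∀ j ∈ S, ∑ i, j i ≤ m) :
    ∑ j ∈ S, b ^ (∑ i, j i) ≤ 2 * b ^ m * ((m : ℝ) + 1) ^ e := by
  refine (sum_by_level e S (Finset.range (m + 1))
    (fun j hj => Finset.mem_range.2 (Nat.lt_succ_of_le (hS j hj))) (fun s => b ^ s)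
    (fun s => by positivity)).trans ?_
  calc _ ≤ ∑ s ∈ Finset.range (m + 1), ((m : ℝ) + 1) ^ e * b ^ s := by
        refine Finset.sum_le_sum fun s hs => ?_
        have : (s : ℝ) ≤ m := by exact_mod_cast Nat.lt_succ_iff.1 (Finset.mem_range.1 hs)
        gcongr
    _ ≤ ((m : ℝ) + 1) ^ e * (2 * b ^ m) := by
        rw [← Finset.mul_sum]
        gcongr
        exact geom_sum_le_two_mul hb m
    _ = _ := by ring

lemma summable_level (e : ℕ) : Summable fun r : ℕ => ((r : ℝ) + 2) ^ e * (1 / 2 : ℝ) ^ r := by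
  have h := summable_pow_mul_geometric_of_norm_lt_one (R := ℝ) e (r := (1/2 : ℝ)) (by norm_num)
  have h2 := ((summable_nat_add_iff 2).2 h).mul_left 4
  refine h2.congr fun r => ?_
  push_cast
  rw [pow_add]
  ring

/-- Summation over multi-indices beyond the Smolyak index set, uniformly in the finite set `S`. -/
lemma sum_high (e : ℕ) : ∃ K : ℝ, 0 < K ∧ ∀ (q : ℝ), 0 ≤ q → q ≤ 1 / 2 → ∀ (m : ℕ)
    (S : Finset (Fin (e + 1) → ℕ)), (∀ j ∈ S, m < ∑ i, j i) →
    ∑ j ∈ S, q ^ (∑ i, j i) ≤ K * q ^ m * ((m : ℝ) + 1) ^ e := by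
  have hs := summable_level e
  have hK : 0 ≤ ∑' r : ℕ, ((r : ℝ) + 2) ^ e * (1 / 2 : ℝ) ^ r := tsum_nonneg fun r => by positivity
  refine ⟨(∑' r : ℕ, ((r : ℝ) + 2) ^ e * (1 / 2 : ℝ) ^ r) + 1, by positivity, ?_⟩
  intro q hq0 hq m S hS
  set N := S.sup fun j => ∑ i, j i with hN
  refine (sum_by_level e S (Finset.Ico (m + 1) (m + 1 + N))
    (fun j hj => Finset.mem_Ico.2 ⟨hS j hj, ?_⟩) (fun s => q ^ s)
    (fun s => by positivity)).trans ?_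
  · have : ∑ i, j i ≤ N := Finset.le_sup (f := fun j : Fin (e + 1) → ℕ => ∑ i, j i) hj
    omega
  · rw [Finset.sum_Ico_eq_sum_range, Nat.add_sub_cancel_left]
    calc _ ≤ ∑ r ∈ Finset.range N, (((r : ℝ) + 2) ^ e * (1 / 2 : ℝ) ^ r)
            * (q ^ m * ((m : ℝ) + 1) ^ e) := by
          refine Finset.sum_le_sum fun r _ => ?_
          have h1 : ((m + 1 + r : ℕ) : ℝ) + 1 ≤ ((m : ℝ) + 1) * (r + 2) := by
            push_cast
            have : 0 ≤ (m : ℝ) * r := by positivity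
            have : 0 ≤ (m : ℝ) := by positivity
            nlinarith
          have h2 : q ^ (m + 1 + r) ≤ q ^ m * (1 / 2) ^ r := by
            rw [pow_add, pow_succ, mul_assoc]
            gcongr
            calc q * q ^ r ≤ 1 * (1/2) ^ r := by gcongr; linarith
              _ = _ := one_mul _
          calc _ ≤ (((m : ℝ) + 1) * (r + 2)) ^ e * (q ^ m * (1 / 2) ^ r) := by gcongr
            _ = _ := by rw [mul_pow]; ring
      _ ≤ (∑' r : ℕ, ((r : ℝ) + 2) ^ e * (1 / 2 : ℝ) ^ r) * (q ^ m * ((m : ℝ) + 1) ^ e) := by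
          rw [← Finset.sum_mul]
          gcongr
          exact hs.sum_le_tsum _ fun r _ => by positivity
      _ ≤ _ := by
          have : 0 ≤ q ^ m * ((m : ℝ) + 1) ^ e := by positivity
          nlinarith

/-! ### The tail kernel in `L²` -/

/-- The inner product of two tensor kernels vanishes unless the multi-indices differ by at most one in
every coordinate; otherwise it is bounded by means of `2uv ≤ u² + v²`. -/
lemma gram_prod_bound {d : ℕ} {C ρ : ℝ} (hC : 0 ≤ C) (hρ : 0 ≤ ρ) (h : Fin d → ℕ → ℝ → ℝ)
    (hb : ∀ i j, ∀ t ∈ Icc (0:ℝ) 1, |h i j t| ≤ C * ρ ^ j)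
    (ho : ∀ i j j', j + 2 ≤ j' → ∫ t, h i j t * h i j' t ∂unitMeas = 0) (j j' : Fin d → ℕ) :
    ∏ i, ∫ t, h i (j i) t * h i (j' i) t ∂unitMeas
      ≤ if ∀ i, j i ≤ j' i + 1 ∧ j' i ≤ j i + 1 then
          (C ^ 2) ^ d * (((ρ ^ 2) ^ (∑ i, j i) + (ρ ^ 2) ^ (∑ i, j' i)) / 2) else 0 := by
  split_ifs with hn
  · have h1 : ∀ i, |∫ t, h i (j i) t * h i (j' i) t ∂unitMeas| ≤ C ^ 2 * (ρ ^ (j i) * ρ ^ (j' i)) := by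
      intro i
      have := norm_integral_le_of_norm_le_const (μ := unitMeas)
        (f := fun t => h i (j i) t * h i (j' i) t) (C := C ^ 2 * (ρ ^ (j i) * ρ ^ (j' i))) (by
          filter_upwards [ae_unit] with t ht
          rw [norm_mul]
          calc _ ≤ (C * ρ ^ (j i)) * (C * ρ ^ (j' i)) :=
                mul_le_mul (hb i _ t ht) (hb i _ t ht) (abs_nonneg _) (by positivity)
            _ = _ := by ring)
      simpa using this
    calc _ ≤ |∏ i, ∫ t, h i (j i) t * h i (j' i) t ∂unitMeas| := le_abs_self _
      _ = ∏ i, |∫ t, h i (j i) t * h i (j' i) t ∂unitMeas| := Finset.abs_prod _ _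
      _ ≤ ∏ i, C ^ 2 * (ρ ^ (j i) * ρ ^ (j' i)) :=
          Finset.prod_le_prod (fun _ _ => abs_nonneg _) fun i _ => h1 i
      _ = (C ^ 2) ^ d * (ρ ^ (∑ i, j i) * ρ ^ (∑ i, j' i)) := by
          rw [Finset.prod_mul_distrib, Finset.prod_mul_distrib, Finset.prod_const,
            Finset.card_univ, Fintype.card_fin, Finset.prod_pow_eq_pow_sum,
            Finset.prod_pow_eq_pow_sum]
      _ ≤ _ := by
          gcongr
          rw [← pow_mul, ← pow_mul, mul_comm 2, mul_comm 2, pow_mul, pow_mul]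
          nlinarith [sq_nonneg (ρ ^ (∑ i, j i) - ρ ^ (∑ i, j' i))]
  · push Not at hn
    obtain ⟨i, hi⟩ := hn
    refine (Finset.prod_eq_zero (Finset.mem_univ i) ?_).le
    by_cases h1 : j i ≤ j' i + 1
    · exact ho i _ _ (by have := hi h1; omega)
    · simp_rw [mul_comm (h i (j i) _)]
      exact ho i _ _ (by omega)

lemma card_neighbours_le {d : ℕ} (S : Finset (Fin d → ℕ)) (j : Fin d → ℕ) :
    (S.filter fun j' => ∀ i, j i ≤ j' i + 1 ∧ j' i ≤ j i + 1).card ≤ 3 ^ d := by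
  calc _ ≤ (Fintype.piFinset fun i => Finset.Icc (j i - 1) (j i + 1)).card := by
        refine Finset.card_le_card fun j' hj' => Fintype.mem_piFinset.2 fun i => ?_
        have := (Finset.mem_filter.1 hj').2 i
        rw [Finset.mem_Icc]; omega
    _ = ∏ i, (Finset.Icc (j i - 1) (j i + 1)).card := Fintype.card_piFinset _
    _ ≤ ∏ _i : Fin d, 3 := Finset.prod_le_prod' fun i _ => by rw [Nat.card_Icc]; omega
    _ = 3 ^ d := by simp

/-- A multi-index has at most `3^d` neighbours, so the nearly diagonal double sum is a single sum. -/
lemma sum_neighbours_le {d : ℕ} (S : Finset (Fin d → ℕ)) (A : ℝ) (hA : 0 ≤ A)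
    (v : (Fin d → ℕ) → ℝ) (hv : ∀ j, 0 ≤ v j) :
    ∑ j ∈ S, ∑ j' ∈ S, (if ∀ i, j i ≤ j' i + 1 ∧ j' i ≤ j i + 1 then
      A * ((v j + v j') / 2) else 0) ≤ 3 ^ d * A * ∑ j ∈ S, v j := by
  have key : ∀ j, ∑ j' ∈ S, (if ∀ i, j i ≤ j' i + 1 ∧ j' i ≤ j i + 1 then v j else 0)
      ≤ 3 ^ d * v j := by
    intro j
    rw [← Finset.sum_filter, Finset.sum_const, nsmul_eq_mul]
    refine mul_le_mul_of_nonneg_right ?_ (hv j)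
    exact_mod_cast card_neighbours_le S j
  have hswap : ∑ j ∈ S, ∑ j' ∈ S, (if ∀ i, j i ≤ j' i + 1 ∧ j' i ≤ j i + 1 then v j' else 0)
      = ∑ j ∈ S, ∑ j' ∈ S, (if ∀ i, j i ≤ j' i + 1 ∧ j' i ≤ j i + 1 then v j else 0) := by
    rw [Finset.sum_comm]
    refine Finset.sum_congr rfl fun j _ => Finset.sum_congr rfl fun j' _ => ?_
    congr 1
    simp only [and_comm]
  calc _ = A / 2 * (∑ j ∈ S, ∑ j' ∈ S,
          (if ∀ i, j i ≤ j' i + 1 ∧ j' i ≤ j i + 1 then v j else 0) +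
        ∑ j ∈ S, ∑ j' ∈ S, (if ∀ i, j i ≤ j' i + 1 ∧ j' i ≤ j i + 1 then v j' else 0)) := by
        rw [← Finset.sum_add_distrib, Finset.mul_sum]
        refine Finset.sum_congr rfl fun j _ => ?_
        rw [← Finset.sum_add_distrib, Finset.mul_sum]
        refine Finset.sum_congr rfl fun j' _ => ?_
        split_ifs <;> ring
    _ = A * ∑ j ∈ S, ∑ j' ∈ S, (if ∀ i, j i ≤ j' i + 1 ∧ j' i ≤ j i + 1 then v j else 0) := by
        rw [hswap]; ring
    _ ≤ A * ∑ j ∈ S, 3 ^ d * v j := by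
        gcongr with j
        exact key j
    _ = _ := by rw [← Finset.mul_sum]; ring

/-- Almost orthogonality: up to a constant, the squared `L²` norm of a sum of tensor kernels is at most
the sum of the squares of their sizes. -/
lemma sq_bound {d : ℕ} {C ρ : ℝ} (hC : 0 ≤ C) (hρ : 0 ≤ ρ) (h : Fin d → ℕ → ℝ → ℝ)
    (hm : ∀ i j, Measurable (h i j))
    (hb : ∀ i j, ∀ t ∈ Icc (0:ℝ) 1, |h i j t| ≤ C * ρ ^ j)
    (ho : ∀ i j j', j + 2 ≤ j' → ∫ t, h i j t * h i j' t ∂unitMeas = 0)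
    (S : Finset (Fin d → ℕ)) :
    ∫ t, (∑ j ∈ S, ∏ i, h i (j i) (t i)) ^ 2 ∂cubeMeas d
      ≤ 3 ^ d * (C ^ 2) ^ d * ∑ j ∈ S, (ρ ^ 2) ^ (∑ i, j i) := by
  have hexp : ∀ t : Fin d → ℝ, (∑ j ∈ S, ∏ i, h i (j i) (t i)) ^ 2
      = ∑ j ∈ S, ∑ j' ∈ S, ∏ i, (h i (j i) (t i) * h i (j' i) (t i)) := by
    intro t
    rw [sq, Finset.sum_mul_sum]
    simp_rw [Finset.prod_mul_distrib]
  have hInt : ∀ j j' : Fin d → ℕ, Integrable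
      (fun t : Fin d → ℝ => ∏ i, (h i (j i) (t i) * h i (j' i) (t i))) (cubeMeas d) := by
    intro j j'
    refine Integrable.fintype_prod (f := fun i t => h i (j i) t * h i (j' i) t) fun i => ?_
    refine integrable_of_bdd ((hm i _).mul (hm i _)) (C := (C * ρ ^ (j i)) * (C * ρ ^ (j' i)))
      fun t ht => ?_
    rw [abs_mul]
    exact mul_le_mul (hb i _ t ht) (hb i _ t ht) (abs_nonneg _) (by positivity)
  simp_rw [hexp]
  rw [integral_finsetSum _ fun j _ => integrable_finsetSum _ fun j' _ => hInt j j']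
  refine le_trans (Finset.sum_le_sum fun j _ => ?_) (sum_neighbours_le S ((C ^ 2) ^ d)
    (by positivity) (fun j => (ρ ^ 2) ^ (∑ i, j i)) fun j => by positivity)
  rw [integral_finsetSum _ fun j' _ => hInt j j']
  refine Finset.sum_le_sum fun j' _ => ?_
  rw [integral_fintype_prod_eq_prod (fun i t => h i (j i) t * h i (j' i) t)]
  exact gram_prod_bound hC hρ h hb ho j j'

/-- The Cauchy–Schwarz inequality on the cube, for a factor in the unit ball of `L²`. -/
lemma cauchy_schwarz_cube {d : ℕ} {g s : (Fin d → ℝ) → ℝ} {B : ℝ} (hB : 0 < B)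
    (hg : Integrable (fun t => g t ^ 2) (cubeMeas d)) (hg1 : ∫ t, g t ^ 2 ∂cubeMeas d ≤ 1)
    (hs : Integrable (fun t => s t ^ 2) (cubeMeas d)) (hs1 : ∫ t, s t ^ 2 ∂cubeMeas d ≤ B) :
    |∫ t, g t * s t ∂cubeMeas d| ≤ √B := by
  have hr : 0 < √B := Real.sqrt_pos.2 hB
  have hrr : √B * √B = B := Real.mul_self_sqrt hB.le
  have hInt : Integrable (fun t => (√B / 2) * g t ^ 2 + (1 / (2 * √B)) * s t ^ 2) (cubeMeas d) :=
    (hg.const_mul _).add (hs.const_mul _)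
  have h1 : ‖∫ t, g t * s t ∂cubeMeas d‖
      ≤ ∫ t, (√B / 2) * g t ^ 2 + (1 / (2 * √B)) * s t ^ 2 ∂cubeMeas d := by
    refine norm_integral_le_of_norm_le hInt (Filter.Eventually.of_forall fun t => ?_)
    rw [norm_mul, Real.norm_eq_abs, Real.norm_eq_abs, ← sq_abs (g t), ← sq_abs (s t)]
    have : (√B / 2) * |g t| ^ 2 + (1 / (2 * √B)) * |s t| ^ 2 - |g t| * |s t|
        = (1 / (2 * √B)) * (√B * |g t| - |s t|) ^ 2 := by
      field_simp; ring
    have h0 : 0 ≤ (1 / (2 * √B)) * (√B * |g t| - |s t|) ^ 2 := by positivity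
    linarith
  rw [integral_add (hg.const_mul _) (hs.const_mul _), integral_const_mul, integral_const_mul] at h1
  refine h1.trans ?_
  calc _ ≤ √B / 2 * 1 + 1 / (2 * √B) * B := by gcongr
    _ = √B := by
      nth_rewrite 3 [← hrr]
      field_simp; ring

/-- The Smolyak index set `{j : |j|₁ ≤ m}`; the box in the definition is no restriction, see
`mem_lowSet`. -/
noncomputable def lowSet (d m : ℕ) : Finset (Fin d → ℕ) :=
  (Fintype.piFinset fun _ => Finset.range (m + 1)).filter fun j => ∑ i, j i ≤ m

lemma mem_lowSet {d m : ℕ} {j : Fin d → ℕ} : j ∈ lowSet d m ↔ ∑ i, j i ≤ m := by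
  rw [lowSet, Finset.mem_filter, Fintype.mem_piFinset, and_iff_right_iff_imp]
  intro hj i
  have : j i ≤ ∑ i, j i := Finset.single_le_sum (fun _ _ => Nat.zero_le _) (Finset.mem_univ _)
  rw [Finset.mem_range]; omega

/-- The multi-indices in the box `{0,…,M-1}^d` outside the Smolyak index set. -/
noncomputable def highSet (d m M : ℕ) : Finset (Fin d → ℕ) :=
  (Fintype.piFinset fun _ => Finset.range M).filter fun j => ¬ ∑ i, j i ≤ m

lemma sum_low_add_high {d m M : ℕ} (hM : m < M) (u : (Fin d → ℕ) → ℝ) :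
    ∑ j ∈ lowSet d m, u j + ∑ j ∈ highSet d m M, u j
      = ∑ j ∈ Fintype.piFinset fun _ => Finset.range M, u j := by
  rw [← Finset.sum_filter_add_sum_filter_not (Fintype.piFinset fun _ => Finset.range M)
    (fun j => ∑ i, j i ≤ m) u, highSet]
  congr 2
  ext j
  rw [mem_lowSet, Finset.mem_filter, Fintype.mem_piFinset, iff_and_self]
  intro hj i
  have : j i ≤ ∑ i, j i := Finset.single_le_sum (fun _ _ => Nat.zero_le _) (Finset.mem_univ _)
  rw [Finset.mem_range]; omega

lemma prod_bound {d : ℕ} {h : Fin d → ℕ → ℝ → ℝ} {C ρ : ℝ} (hC : 0 ≤ C) (hρ : 0 ≤ ρ)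
    (hρ1 : ρ ≤ 1) (hb : ∀ i j, ∀ t ∈ Icc (0:ℝ) 1, |h i j t| ≤ C * ρ ^ j) (j : Fin d → ℕ)
    {t : Fin d → ℝ} (ht : t ∈ Icc (0 : Fin d → ℝ) 1) : |∏ i, h i (j i) (t i)| ≤ C ^ d := by
  rw [Finset.abs_prod]
  calc _ ≤ ∏ _i : Fin d, C := Finset.prod_le_prod (fun _ _ => abs_nonneg _) fun i _ =>
        (hb i _ _ (mem_cube.1 ht i)).trans (mul_le_of_le_one_right hC (pow_le_one₀ hρ hρ1))
    _ = C ^ d := by simp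

lemma sum_prod_measurable {d : ℕ} {h : Fin d → ℕ → ℝ → ℝ} (hm : ∀ i j, Measurable (h i j))
    (S : Finset (Fin d → ℕ)) :
    Measurable fun t : Fin d → ℝ => ∑ j ∈ S, ∏ i, h i (j i) (t i) :=
  Finset.measurable_sum _ fun _ _ => Finset.measurable_prod _ fun i _ =>
    (hm i _).comp (measurable_pi_apply i)

lemma sum_prod_bound {d : ℕ} {h : Fin d → ℕ → ℝ → ℝ} {C ρ : ℝ} (hC : 0 ≤ C) (hρ : 0 ≤ ρ)
    (hρ1 : ρ ≤ 1) (hb : ∀ i j, ∀ t ∈ Icc (0:ℝ) 1, |h i j t| ≤ C * ρ ^ j)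
    (S : Finset (Fin d → ℕ)) {t : Fin d → ℝ} (ht : t ∈ Icc (0 : Fin d → ℝ) 1) :
    |∑ j ∈ S, ∏ i, h i (j i) (t i)| ≤ S.card * C ^ d := by
  refine (Finset.abs_sum_le_sum_abs _ _).trans ?_
  rw [← nsmul_eq_mul]
  exact Finset.sum_le_card_nsmul _ _ _ fun _ _ => prod_bound hC hρ hρ1 hb _ ht

/-- The pairing of `g` with the difference of the full tensor kernel `∏ G i` and the Smolyak sum. The
difference is the limit of the sums over `highSet d m M`, each of which has squared `L²` norm at
most `B`. -/
theorem tail_error {d : ℕ} {C ρ : ℝ} (hC : 0 ≤ C) (hρ : 0 ≤ ρ) (hρ1 : ρ ≤ 1 / 2)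
    (h : Fin d → ℕ → ℝ → ℝ) (G : Fin d → ℝ → ℝ)
    (hm : ∀ i j, Measurable (h i j))
    (hb : ∀ i j, ∀ t ∈ Icc (0:ℝ) 1, |h i j t| ≤ C * ρ ^ j)
    (ho : ∀ i j j', j + 2 ≤ j' → ∫ t, h i j t * h i j' t ∂unitMeas = 0)
    (hG : ∀ i, ∀ t ∈ Icc (0:ℝ) 1, Filter.Tendsto (fun M => ∑ j ∈ Finset.range M, h i j t)
      Filter.atTop (nhds (G i t)))
    (m : ℕ) {B : ℝ} (hB : 0 < B)
    (hBS : ∀ M, 3 ^ d * (C ^ 2) ^ d * ∑ j ∈ highSet d m M, (ρ ^ 2) ^ (∑ i, j i) ≤ B)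
    {g : (Fin d → ℝ) → ℝ} (hg : ContinuousOn g (Icc 0 1)) (hg1 : ∫ t, g t ^ 2 ∂cubeMeas d ≤ 1) :
    |∫ t, g t * (∏ i, G i (t i) - ∑ j ∈ lowSet d m, ∏ i, h i (j i) (t i)) ∂cubeMeas d| ≤ √B := by
  have hgi := cont_integrable hg
  have hlim : Filter.Tendsto (fun M => ∫ t, g t * ∑ j ∈ highSet d m M, ∏ i, h i (j i) (t i)
      ∂cubeMeas d) Filter.atTop (nhds (∫ t, g t * (∏ i, G i (t i)
        - ∑ j ∈ lowSet d m, ∏ i, h i (j i) (t i)) ∂cubeMeas d)) := by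
    have hev : ∀ M, m < M → ∀ t : Fin d → ℝ, ∑ j ∈ highSet d m M, ∏ i, h i (j i) (t i)
        = ∏ i, ∑ j ∈ Finset.range M, h i j (t i) - ∑ j ∈ lowSet d m, ∏ i, h i (j i) (t i) := by
      intro M hM t
      rw [Finset.prod_univ_sum, ← sum_low_add_high hM]
      ring
    refine tendsto_integral_filter_of_dominated_convergence
      (fun t => ‖g t‖ * ((2 * C) ^ d + (lowSet d m).card * C ^ d)) ?_ ?_ ?_ ?_
    · exact Filter.Eventually.of_forall fun M =>
        hgi.1.mul (sum_prod_measurable hm _).aestronglyMeasurable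
    · filter_upwards [Filter.eventually_gt_atTop m] with M hM
      filter_upwards [ae_cube d] with t ht
      rw [norm_mul]
      gcongr
      rw [hev M hM]
      refine (abs_sub _ _).trans (add_le_add ?_ (sum_prod_bound hC hρ (by linarith) hb _ ht))
      rw [Finset.abs_prod]
      calc _ ≤ ∏ _i : Fin d, (2 * C) := by
            refine Finset.prod_le_prod (fun _ _ => abs_nonneg _) fun i _ => ?_
            refine (Finset.abs_sum_le_sum_abs _ _).trans ?_
            calc _ ≤ ∑ j ∈ Finset.range M, C * ((1:ℝ) / 2) ^ j :=
                  Finset.sum_le_sum fun j _ => (hb i j _ (mem_cube.1 ht i)).trans (by gcongr)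
              _ ≤ C * 2 := by
                  rw [← Finset.mul_sum]
                  gcongr
                  exact sum_geometric_two_le M
              _ = 2 * C := mul_comm _ _
        _ = _ := by simp
    · exact hgi.norm.mul_const _
    · filter_upwards [ae_cube d] with t ht
      refine Filter.Tendsto.const_mul _ ?_
      have h1 : Filter.Tendsto (fun M => ∏ i, ∑ j ∈ Finset.range M, h i j (t i)
          - ∑ j ∈ lowSet d m, ∏ i, h i (j i) (t i)) Filter.atTop (nhds (∏ i, G i (t i)
          - ∑ j ∈ lowSet d m, ∏ i, h i (j i) (t i))) :=
        (tendsto_finsetProd _ fun i _ => hG i _ (mem_cube.1 ht i)).sub_const _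
      refine h1.congr' ?_
      filter_upwards [Filter.eventually_gt_atTop m] with M hM
      exact (hev M hM t).symm
  refine le_of_tendsto hlim.abs (Filter.Eventually.of_forall fun M => ?_)
  refine cauchy_schwarz_cube hB (cont_integrable (hg.pow 2)) hg1 ?_
    ((sq_bound hC hρ h hm hb ho _).trans (hBS M))
  refine Integrable.mono' (integrable_const (((highSet d m M).card * C ^ d) ^ 2))
    ((sum_prod_measurable hm _).pow_const 2).aestronglyMeasurable ?_
  filter_upwards [ae_cube d] with t ht
  rw [norm_pow]
  gcongr
  exact sum_prod_bound hC hρ (by linarith) hb _ ht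

/-! ### The Smolyak rule -/

lemma mDeriv_cont {k d : ℕ} {f : (Fin d → ℝ) → ℝ} (hf : memWMix2 d k f)
    (β : Fin d → Fin (k + 1)) : ContinuousOn (mDeriv (fun i => (β i : ℕ)) f) (Icc 0 1) :=
  (hf.2 _ fun i => Nat.lt_succ_iff.1 (β i).2).1

lemma mDeriv_sq {k d : ℕ} {f : (Fin d → ℝ) → ℝ} (hf : memWMix2 d k f)
    (β : Fin d → Fin (k + 1)) : ∫ t, mDeriv (fun i => (β i : ℕ)) f t ^ 2 ∂cubeMeas d ≤ 1 := by
  have h := (hf.2 _ fun i => Nat.lt_succ_iff.1 (β i).2).2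
  rw [integral_eq_lintegral_of_nonneg_ae (Filter.Eventually.of_forall fun t => sq_nonneg _)
    (cont_integrable ((mDeriv_cont hf β).pow 2)).1, cubeMeas_eq]
  refine ENNReal.toReal_le_of_le_ofReal zero_le_one ?_
  rw [ENNReal.ofReal_one]
  refine le_trans (le_of_eq ?_) h
  refine lintegral_congr fun t => ?_
  rw [← sq_abs, Real.rpow_ofNat]

/-- The integral of `f` in terms of its mixed derivatives: `mDeriv_rep` integrated in `x`. -/
lemma integral_rep {k d : ℕ} (hk : 1 ≤ k) {f : (Fin d → ℝ) → ℝ} (hf : memWMix2 d k f) :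
    ∫ x, f x ∂cubeMeas d = ∑ β : Fin d → Fin (k + 1),
      ∫ t, mDeriv (fun i => (β i : ℕ)) f t * ∏ i, ∫ x, tker k (β i) x (t i) ∂unitMeas
        ∂cubeMeas d := by
  have hInt : ∀ β : Fin d → Fin (k + 1), Integrable (Function.uncurry fun x t : Fin d → ℝ =>
      mDeriv (fun i => (β i : ℕ)) f t * ∏ i, tker k (β i) (x i) (t i))
      ((cubeMeas d).prod (cubeMeas d)) := by
    intro β
    refine ((cont_integrable (mDeriv_cont hf β)).comp_snd (cubeMeas d)).mul_bdd (c := 1)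
      (prod_tker_measurable k fun i => (β i : ℕ)).aestronglyMeasurable ?_
    filter_upwards [Measure.quasiMeasurePreserving_fst.ae (ae_cube d),
      Measure.quasiMeasurePreserving_snd.ae (ae_cube d)] with p h1 h2
    exact prod_tker_bound k _ h1 h2
  have h1 : ∫ x, f x ∂cubeMeas d = ∫ x, ∑ β : Fin d → Fin (k + 1),
      ∫ t, mDeriv (fun i => (β i : ℕ)) f t * ∏ i, tker k (β i) (x i) (t i) ∂cubeMeas d
        ∂cubeMeas d := by
    refine integral_congr_ae ?_
    filter_upwards [ae_cube d] with x hx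
    exact mDeriv_rep k d hk hf hx
  have hint1 : ∀ β : Fin d → Fin (k + 1), Integrable (fun x : Fin d → ℝ => ∫ t,
      mDeriv (fun i => (β i : ℕ)) f t * ∏ i, tker k (β i) (x i) (t i) ∂cubeMeas d)
      (cubeMeas d) := fun β => (hInt β).integral_prod_left
  rw [h1, integral_finsetSum _ fun β _ => hint1 β]
  refine Finset.sum_congr rfl fun β _ => ?_
  rw [integral_integral_swap (hInt β)]
  refine integral_congr_ae (Filter.Eventually.of_forall fun t => ?_)
  simp only
  rw [integral_const_mul, integral_fintype_prod_eq_prod (fun i x => tker k (β i) x (t i))]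

/-- A quadrature rule applied to `f` in terms of the mixed derivatives of `f`. -/
lemma rule_rep {k d : ℕ} (hk : 1 ≤ k) {f : (Fin d → ℝ) → ℝ} (hf : memWMix2 d k f)
    {ι : Type*} [Fintype ι] (X : ι → Fin d → ℝ) (V : ι → ℝ) (hX : ∀ p, X p ∈ Icc 0 1) :
    ∑ p, V p * f (X p) = ∑ β : Fin d → Fin (k + 1),
      ∫ t, mDeriv (fun i => (β i : ℕ)) f t * ∑ p, V p * ∏ i, tker k (β i) (X p i) (t i)
        ∂cubeMeas d := by
  have h1 : ∀ p, V p * f (X p) = ∑ β : Fin d → Fin (k + 1),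
      ∫ t, V p * (mDeriv (fun i => (β i : ℕ)) f t * ∏ i, tker k (β i) (X p i) (t i))
        ∂cubeMeas d := by
    intro p
    simp_rw [integral_const_mul]
    rw [← Finset.mul_sum, ← mDeriv_rep k d hk hf (hX p)]
  simp_rw [h1]
  rw [Finset.sum_comm]
  refine Finset.sum_congr rfl fun β _ => ?_
  rw [← integral_finsetSum _ fun p _ =>
    (rep_integrable k (fun i => (β i : ℕ)) (mDeriv_cont hf β) (hX p)).const_mul _]
  refine integral_congr_ae (Filter.Eventually.of_forall fun t => ?_)
  simp only [Finset.mul_sum]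
  refine Finset.sum_congr rfl fun p _ => ?_
  ring

/-- The Smolyak rule of level `m` in dimension `e + 1`: its number of points is `O(b^m (m+1)^e)`, and
its worst case error is `O(b^{-km} (m+1)^{e/2})`. -/
theorem smolyak (k e : ℕ) (hk : 1 ≤ k) : ∃ (b : ℕ) (C : ℝ), 2 ≤ b ∧ 1 ≤ C ∧ ∀ m : ℕ,
    ∃ (N : ℕ) (X : Fin N → Fin (e + 1) → ℝ) (V : Fin N → ℝ),
      (N : ℝ) ≤ C * (b : ℝ) ^ m * ((m : ℝ) + 1) ^ e ∧
      (∀ p, X p ∈ Icc (0 : Fin (e + 1) → ℝ) 1) ∧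
      ∀ f, memWMix2 (e + 1) k f → |∫ x, f x ∂cubeMeas (e + 1) - ∑ p, V p * f (X p)|
        ≤ C * √(((((b : ℝ) ^ k)⁻¹) ^ 2) ^ m * ((m : ℝ) + 1) ^ e) := by
  obtain ⟨b, C, nn, y, w, hb, hC, hnn, hy, hbd, horth, hlim⟩ := oneD k hk
  obtain ⟨K, hK, hhigh⟩ := sum_high e
  set ρ : ℝ := ((b : ℝ) ^ k)⁻¹ with hρdef
  have hbR : (2:ℝ) ≤ b := by exact_mod_cast hb
  have hρ0 : 0 < ρ := by positivity
  have hρ1 : ρ ≤ 1 / 2 := by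
    rw [hρdef, one_div]
    refine inv_anti₀ (by norm_num) ?_
    calc (2:ℝ) ≤ b := hbR
      _ = (b : ℝ) ^ 1 := (pow_one _).symm
      _ ≤ (b : ℝ) ^ k := pow_le_pow_right₀ (by linarith) hk
  set A : ℝ := 3 ^ (e + 1) * (C ^ 2) ^ (e + 1) * K with hA
  have hA0 : 0 < A := by positivity
  set C' : ℝ := 1 + 2 * C ^ (e + 1) + ((k : ℝ) + 1) ^ (e + 1) * √A with hC'
  have hr0 : 0 ≤ ((k : ℝ) + 1) ^ (e + 1) * √A := by positivity
  have hc0 : 0 ≤ 2 * C ^ (e + 1) := by positivity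
  refine ⟨b, C', hb, by linarith, fun m => ?_⟩
  -- points of the sparse grid, listed level by level with multiplicity
  let ι := Σ j : lowSet (e + 1) m, ∀ l : Fin (e + 1), Fin (nn (j.1 l))
  let X : ι → Fin (e + 1) → ℝ := fun p l => y (p.1.1 l) (p.2 l)
  let V : ι → ℝ := fun p => ∏ l, w (p.1.1 l) (p.2 l)
  let E := (Fintype.equivFin ι).symm
  have hX : ∀ p, X p ∈ Icc (0 : Fin (e + 1) → ℝ) 1 := fun p => mem_cube.2 fun l => hy _ _
  refine ⟨Fintype.card ι, X ∘ E, V ∘ E, ?_, fun p => hX _, ?_⟩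
  · have h1 : ((Fintype.card ι : ℕ) : ℝ)
        = ∑ j ∈ lowSet (e + 1) m, ∏ l, (nn (j l) : ℝ) := by
      rw [Fintype.card_sigma, Nat.cast_sum, ← Finset.sum_coe_sort (lowSet (e + 1) m)]
      refine Finset.sum_congr rfl fun j _ => ?_
      rw [Fintype.card_pi, Nat.cast_prod]
      simp
    rw [h1]
    calc _ ≤ ∑ j ∈ lowSet (e + 1) m, C ^ (e + 1) * (b : ℝ) ^ (∑ l, j l) := by
          refine Finset.sum_le_sum fun j _ => ?_
          calc _ ≤ ∏ l, C * (b : ℝ) ^ (j l) :=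
                Finset.prod_le_prod (fun _ _ => by positivity) fun l _ => hnn _
            _ = _ := by
                rw [Finset.prod_mul_distrib, Finset.prod_const, Finset.card_univ,
                  Fintype.card_fin, Finset.prod_pow_eq_pow_sum]
      _ ≤ C ^ (e + 1) * (2 * (b : ℝ) ^ m * ((m : ℝ) + 1) ^ e) := by
          rw [← Finset.mul_sum]
          gcongr
          exact sum_low e hbR m _ fun j hj => mem_lowSet.1 hj
      _ = (2 * C ^ (e + 1)) * (b : ℝ) ^ m * ((m : ℝ) + 1) ^ e := by ring
      _ ≤ C' * (b : ℝ) ^ m * ((m : ℝ) + 1) ^ e := by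
          gcongr
          linarith
  · intro f hf
    have hsum : ∑ p, (V ∘ E) p * f ((X ∘ E) p) = ∑ p, V p * f (X p) :=
      E.sum_comp fun p => V p * f (X p)
    rw [hsum, rule_rep hk hf X V hX, integral_rep hk hf, ← Finset.sum_sub_distrib]
    set B : ℝ := A * (((ρ ^ 2) ^ m) * ((m : ℝ) + 1) ^ e) with hBdef
    have hB : 0 < B := by positivity
    let h : ∀ β : Fin (e + 1) → Fin (k + 1), Fin (e + 1) → ℕ → ℝ → ℝ :=
      fun β l j t => ∑ i, w j i * tker k (β l) (y j i) t
    have hhm : ∀ β l j, Measurable (h β l j) := fun β l j =>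
      Finset.measurable_sum _ fun i _ => (tker_measurable_right k _ _).const_mul _
    have hhb : ∀ β l j, ∀ t ∈ Icc (0:ℝ) 1, |h β l j t| ≤ C * ρ ^ j := by
      intro β l j t ht
      refine (hbd j (β l) t ht).trans_eq ?_
      rw [hρdef, inv_pow, pow_mul]
    have hBS : ∀ M, 3 ^ (e + 1) * (C ^ 2) ^ (e + 1) *
        ∑ j ∈ highSet (e + 1) m M, (ρ ^ 2) ^ (∑ i, j i) ≤ B := by
      intro M
      have := hhigh (ρ ^ 2) (by positivity) (by nlinarith) m (highSet (e + 1) m M)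
        fun j hj => not_le.1 (Finset.mem_filter.1 hj).2
      calc _ ≤ 3 ^ (e + 1) * (C ^ 2) ^ (e + 1) * (K * (ρ ^ 2) ^ m * ((m : ℝ) + 1) ^ e) := by
            gcongr
        _ = B := by rw [hBdef, hA]; ring
    have hker : ∀ (β : Fin (e + 1) → Fin (k + 1)) (t : Fin (e + 1) → ℝ),
        ∑ p, V p * ∏ i, tker k (β i) (X p i) (t i)
          = ∑ j ∈ lowSet (e + 1) m, ∏ l, h β l (j l) (t l) := by
      intro β t
      rw [Fintype.sum_sigma, ← Finset.sum_coe_sort (lowSet (e + 1) m)]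
      refine Finset.sum_congr rfl fun j _ => ?_
      simp only [h, V, X]
      rw [Finset.prod_univ_sum, Fintype.piFinset_univ]
      refine Finset.sum_congr rfl fun i _ => ?_
      rw [Finset.prod_mul_distrib]
    have hterm : ∀ β : Fin (e + 1) → Fin (k + 1),
        |∫ t, mDeriv (fun i => (β i : ℕ)) f t * ∏ i, ∫ x, tker k (β i) x (t i) ∂unitMeas
            ∂cubeMeas (e + 1) -
          ∫ t, mDeriv (fun i => (β i : ℕ)) f t * ∑ p, V p * ∏ i, tker k (β i) (X p i) (t i)
            ∂cubeMeas (e + 1)| ≤ √B := by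
      intro β
      have hmain := tail_error hC.le hρ0.le hρ1 (h β) (fun l t => ∫ x, tker k (β l) x t ∂unitMeas)
        (hhm β) (hhb β) (fun l j j' hjj => horth j j' (β l) hjj)
        (fun l t ht => hlim (β l) t ht) m hB hBS (mDeriv_cont hf β) (mDeriv_sq hf β)
      have hi := cont_integrable (mDeriv_cont hf β)
      rw [← integral_sub]
      · simp_rw [hker]
        simpa only [mul_sub] using hmain
      · refine hi.mul_bdd (c := 1) ?_ ?_
        · refine (Finset.measurable_prod _ fun i _ => ?_).aestronglyMeasurable
          have : Measurable fun t : ℝ => ∫ x, tker k (β i) x t ∂unitMeas := by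
            have hsm : StronglyMeasurable fun t : ℝ => ∫ x, tker k (β i) x t ∂unitMeas :=
              StronglyMeasurable.integral_prod_left' (μ := unitMeas)
                (tker_measurable k (β i)).stronglyMeasurable
            exact hsm.measurable
          exact this.comp (measurable_pi_apply i)
        · filter_upwards [ae_cube (e + 1)] with t ht
          rw [Real.norm_eq_abs, Finset.abs_prod]
          refine Finset.prod_le_one (fun _ _ => abs_nonneg _) fun i _ => ?_
          have := norm_integral_le_of_norm_le_const (μ := unitMeas)
            (f := fun x => tker k (β i) x (t i)) (C := 1) (by
              filter_upwards [ae_unit] with x hx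
              exact tker_bound k _ hx (mem_cube.1 ht i))
          simpa using this
      · simp_rw [hker]
        refine hi.mul_bdd (c := (lowSet (e + 1) m).card * C ^ (e + 1))
          (sum_prod_measurable (hhm β) _).aestronglyMeasurable ?_
        filter_upwards [ae_cube (e + 1)] with t ht
        exact sum_prod_bound hC.le hρ0.le (by linarith) (hhb β) _ ht
    refine (Finset.abs_sum_le_sum_abs _ _).trans ?_
    refine (Finset.sum_le_card_nsmul _ _ _ fun β _ => hterm β).trans ?_
    rw [nsmul_eq_mul, hBdef, Real.sqrt_mul hA0.le]
    simp only [Finset.card_univ, Fintype.card_pi, Fintype.card_fin, Finset.prod_const,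
      Nat.cast_pow, Nat.cast_add, Nat.cast_one]
    rw [← mul_assoc]
    gcongr
    linarith

/-! ### Choice of the level and the rate -/

lemma mDeriv_zero {d : ℕ} (f : (Fin d → ℝ) → ℝ) : mDeriv (fun _ => 0) f = f := by
  unfold mDeriv
  induction List.finRange d with
  | nil => rfl
  | cons i l ih => rw [List.foldr_cons, ih]; rfl

lemma abs_integral_le_one {k d : ℕ} {f : (Fin d → ℝ) → ℝ} (hf : memWMix2 d k f) :
    |∫ x, f x ∂cubeMeas d| ≤ 1 := by
  have h1 := mDeriv_cont hf 0
  have h2 := mDeriv_sq hf 0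
  simp only [Pi.zero_apply, Fin.val_zero, mDeriv_zero] at h1 h2
  have := cauchy_schwarz_cube (g := f) (s := fun _ => 1) one_pos (cont_integrable (h1.pow 2)) h2
    (by simp) (by simp)
  simpa using this

/-- A rule with `N ≤ n` points becomes a rule with `n` points by adding zero weights. -/
lemma pad_rule {d N n : ℕ} (hNn : N ≤ n) (X : Fin N → Fin d → ℝ) (V : Fin N → ℝ)
    (hX : ∀ p, X p ∈ Icc (0 : Fin d → ℝ) 1) :
    ∃ (x : Fin n → Fin d → ℝ) (a : Fin n → ℝ), (∀ i, x i ∈ Icc (0 : Fin d → ℝ) 1) ∧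
      ∀ f : (Fin d → ℝ) → ℝ, ∑ i, a i * f (x i) = ∑ p, V p * f (X p) := by
  obtain ⟨r, rfl⟩ := Nat.exists_eq_add_of_le hNn
  refine ⟨Fin.append X fun _ => 0, Fin.append V fun _ => 0, fun i => ?_, fun f => ?_⟩
  · refine Fin.addCases (fun p => ?_) (fun p => ?_) i
    · simpa using hX p
    · simp
  · simp [Fin.sum_univ_add]

/-- The largest level whose Smolyak rule is guaranteed to use at most `n` points. -/
lemma exists_level {b n : ℕ} {C : ℝ} (hb : 2 ≤ b) (hC : 1 ≤ C) (e : ℕ) (hn : C ≤ n) :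
    ∃ m : ℕ, C * (b : ℝ) ^ m * ((m : ℝ) + 1) ^ e ≤ n ∧
      (n : ℝ) < C * (b : ℝ) ^ (m + 1) * ((m : ℝ) + 2) ^ e := by
  classical
  have hbR : (2:ℝ) ≤ b := by exact_mod_cast hb
  let P : ℕ → Prop := fun m => (n : ℝ) < C * (b : ℝ) ^ m * ((m : ℝ) + 1) ^ e
  have hex : ∃ m, P m := by
    refine ⟨n, ?_⟩
    have h1 : (n : ℝ) < (b : ℝ) ^ n := by exact_mod_cast Nat.lt_pow_self (by omega)
    have h2 : (1:ℝ) ≤ ((n : ℝ) + 1) ^ e := one_le_pow₀ (by linarith [Nat.cast_nonneg (α := ℝ) n])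
    have h3 : (0:ℝ) ≤ (b : ℝ) ^ n := by positivity
    calc (n : ℝ) < (b : ℝ) ^ n := h1
      _ = 1 * (b : ℝ) ^ n * 1 := by ring
      _ ≤ C * (b : ℝ) ^ n * ((n : ℝ) + 1) ^ e := by gcongr
  have hpos : Nat.find hex ≠ 0 := by
    intro h0
    have := Nat.find_spec hex
    rw [h0] at this
    simp only [P, pow_zero, mul_one, Nat.cast_zero, zero_add, one_pow] at this
    linarith
  obtain ⟨m, hm⟩ := Nat.exists_eq_succ_of_ne_zero hpos
  refine ⟨m, ?_, ?_⟩
  · exact not_lt.1 (Nat.find_min hex (m := m) (by omega))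
  · have := Nat.find_spec hex
    rw [hm] at this
    simp only [P, Nat.succ_eq_add_one, Nat.cast_add, Nat.cast_one] at this
    have h2 : (m : ℝ) + 1 + 1 = m + 2 := by ring
    rwa [h2] at this

/-- Conversion of the error in terms of the level `m` into the error in terms of `n`. Since
`b^{-m} ≲ (m+2)^e / n` and `m + 2 ≲ log n`, the exponent of the logarithm is
`e * k + e / 2 = e * (k + 1/2)`. -/
lemma rate_bound {b n m e k : ℕ} {C : ℝ} (hb : 2 ≤ b) (hC : 1 ≤ C) (hn : 2 ≤ n)
    (h1 : C * (b : ℝ) ^ m * ((m : ℝ) + 1) ^ e ≤ n)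
    (h2 : (n : ℝ) < C * (b : ℝ) ^ (m + 1) * ((m : ℝ) + 2) ^ e) :
    C * √(((((b : ℝ) ^ k)⁻¹) ^ 2) ^ m * ((m : ℝ) + 1) ^ e)
      ≤ C * (C * b) ^ k * (3 / Real.log 2) ^ ((e : ℝ) * ((k : ℝ) + 1 / 2)) *
        (n : ℝ) ^ (-(k : ℝ)) * Real.log n ^ ((e : ℝ) * ((k : ℝ) + 1 / 2)) := by
  have hbR : (2:ℝ) ≤ b := by exact_mod_cast hb
  have hnR : (2:ℝ) ≤ n := by exact_mod_cast hn
  have hm0 : (0:ℝ) ≤ m := Nat.cast_nonneg _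
  have hl2 : 0 < Real.log 2 := Real.log_pos (by norm_num)
  have hl2n : Real.log 2 ≤ Real.log n := Real.log_le_log (by norm_num) hnR
  -- the level grows at most logarithmically in the number of points
  have hmlog : (m : ℝ) + 2 ≤ 3 / Real.log 2 * Real.log n := by
    have h3 : (2:ℝ) ^ m ≤ n := by
      have h4 : (1:ℝ) ≤ ((m : ℝ) + 1) ^ e := one_le_pow₀ (by linarith)
      calc (2:ℝ) ^ m = 1 * 2 ^ m * 1 := by ring
        _ ≤ C * (b : ℝ) ^ m * ((m : ℝ) + 1) ^ e := by gcongr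
        _ ≤ n := h1
    have h5 := Real.log_le_log (by positivity) h3
    rw [Real.log_pow] at h5
    rw [div_mul_eq_mul_div, le_div_iff₀ hl2]
    linarith
  have hroot : √(((((b : ℝ) ^ k)⁻¹) ^ 2) ^ m * ((m : ℝ) + 1) ^ e)
      = (((b : ℝ) ^ m)⁻¹) ^ k * ((m : ℝ) + 1) ^ ((e : ℝ) / 2) := by
    rw [Real.sqrt_mul (by positivity), ← pow_mul, mul_comm 2 m, pow_mul,
      Real.sqrt_sq (by positivity), Real.sqrt_eq_rpow, ← Real.rpow_natCast _ e,
      ← Real.rpow_mul (by positivity), inv_pow, inv_pow, ← pow_mul, ← pow_mul, mul_comm k m]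
    congr 2
    ring
  have hbm : ((b : ℝ) ^ m)⁻¹ ≤ (C * b) * (((m : ℝ) + 2) ^ e) * (n : ℝ)⁻¹ := by
    rw [← div_eq_mul_inv, le_div_iff₀ (by linarith), inv_mul_le_iff₀ (by positivity)]
    refine h2.le.trans_eq ?_
    ring
  have hE : (((m : ℝ) + 2) ^ e) ^ k * ((m : ℝ) + 2) ^ ((e : ℝ) / 2)
      = ((m : ℝ) + 2) ^ ((e : ℝ) * ((k : ℝ) + 1 / 2)) := by
    rw [← pow_mul, ← Real.rpow_natCast, ← Real.rpow_add (by positivity)]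
    congr 1
    push_cast
    ring
  rw [hroot]
  calc _ ≤ C * (((C * b) * (((m : ℝ) + 2) ^ e) * (n : ℝ)⁻¹) ^ k
          * ((m : ℝ) + 2) ^ ((e : ℝ) / 2)) := by
        gcongr
        linarith
    _ = C * (C * b) ^ k * (n : ℝ) ^ (-(k : ℝ)) *
          ((((m : ℝ) + 2) ^ e) ^ k * ((m : ℝ) + 2) ^ ((e : ℝ) / 2)) := by
        rw [Real.rpow_neg (by positivity), Real.rpow_natCast, mul_pow, mul_pow _ (((m : ℝ) + 2) ^ e),
          inv_pow]
        ring
    _ ≤ C * (C * b) ^ k * (n : ℝ) ^ (-(k : ℝ)) *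
          (3 / Real.log 2 * Real.log n) ^ ((e : ℝ) * ((k : ℝ) + 1 / 2)) := by
        rw [hE]
        gcongr
    _ = _ := by
        rw [Real.mul_rpow (by positivity) (by linarith)]
        ring

/-- Sickel and T. Ullrich: there is a quadrature formula (a Smolyak algorithm)
`f ↦ ∑ a_i f(x_i)` with `n` points whose worst case error on the unit ball of the
Sobolev space of dominating mixed smoothness `k` in `L₂` is at most
`C n^{-k} (log n)^{(d-1)(k+1/2)}`. -/
theorem stmt10 (k d : ℕ) (hk : 1 ≤ k) (hd : 1 ≤ d) :
    ∃ C : ℝ, 0 < C ∧ ∀ n : ℕ, 2 ≤ n →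
      ∃ (x : Fin n → Fin d → ℝ) (a : Fin n → ℝ),
        (∀ i, x i ∈ Set.Icc (0 : Fin d → ℝ) 1) ∧
        ∀ f : (Fin d → ℝ) → ℝ, memWMix2 d k f →
          |(∫ z in Set.Icc (0 : Fin d → ℝ) 1, f z) - ∑ i, a i * f (x i)|
            ≤ C * (n : ℝ) ^ (-(k : ℝ)) *
              Real.log n ^ (((d : ℝ) - 1) * ((k : ℝ) + 1 / 2)) := by
  obtain ⟨e, rfl⟩ : ∃ e, d = e + 1 := ⟨d - 1, by omega⟩
  obtain ⟨b, C, hb, hC, hS⟩ := smolyak k e hk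
  rw [show (((e + 1 : ℕ) : ℝ) - 1) = (e : ℝ) by push_cast; ring]
  simp only [← cubeMeas_eq]
  set E : ℝ := (e : ℝ) * ((k : ℝ) + 1 / 2) with hEdef
  have hE : 0 ≤ E := by positivity
  have hl2 : 0 < Real.log 2 := Real.log_pos (by norm_num)
  have hb0 : (0:ℝ) < b := by exact_mod_cast (by omega : 0 < b)
  set K₁ : ℝ := C * (C * b) ^ k * (3 / Real.log 2) ^ E with hK₁
  set K₂ : ℝ := C ^ k * ((Real.log 2) ^ E)⁻¹ with hK₂
  have h1 : 0 < K₁ := by positivity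
  have h2 : 0 < K₂ := by positivity
  refine ⟨K₁ + K₂, by positivity, fun n hn => ?_⟩
  have hnR : (2:ℝ) ≤ n := by exact_mod_cast hn
  have hl2n : Real.log 2 ≤ Real.log n := Real.log_le_log (by norm_num) hnR
  have hl0 : 0 ≤ Real.log n := by linarith
  have hsplit : ∀ K, K ≤ K₁ + K₂ → K * (n : ℝ) ^ (-(k : ℝ)) * Real.log n ^ E
      ≤ (K₁ + K₂) * (n : ℝ) ^ (-(k : ℝ)) * Real.log n ^ E := fun K hK => by gcongr
  rcases le_or_gt C n with hCn | hCn
  · obtain ⟨m, hm1, hm2⟩ := exists_level hb hC e hCn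
    obtain ⟨N, X, V, hN, hX, herr⟩ := hS m
    obtain ⟨x, a, hx, hxa⟩ := pad_rule (by exact_mod_cast hN.trans hm1 : N ≤ n) X V hX
    refine ⟨x, a, hx, fun f hf => ?_⟩
    rw [hxa]
    exact ((herr f hf).trans (rate_bound hb hC hn hm1 hm2)).trans (hsplit K₁ (by linarith))
  -- for the finitely many `n < C` the zero rule suffices, as the integral is bounded by `1`
  · refine ⟨0, 0, fun i => by simp, fun f hf => ?_⟩
    refine le_trans ?_ (hsplit K₂ (by linarith))
    simp only [Pi.zero_apply, zero_mul, Finset.sum_const_zero, sub_zero]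
    refine (abs_integral_le_one hf).trans ?_
    rw [Real.rpow_neg (by positivity), Real.rpow_natCast]
    have h3 : (C ^ k)⁻¹ ≤ ((n : ℝ) ^ k)⁻¹ := by gcongr
    calc (1:ℝ) = K₂ * (C ^ k)⁻¹ * Real.log 2 ^ E := by
          have : Real.log 2 ^ E ≠ 0 := by positivity
          have : C ^ k ≠ 0 := by positivity
          rw [hK₂]; field_simp
      _ ≤ K₂ * ((n : ℝ) ^ k)⁻¹ * Real.log n ^ E := by gcongr
end

section
/- Let H be a Hilbert space of real-valued functions on [0,1]^d with reproducing kernel K : [0,1]^d × [0,1]^d → ℝ (that is, K(·,y) ∈ H and ⟨f, K(·,y)⟩_H = f(y) for all f ∈ H, y ∈ [0,1]^d), such that K is integrable on [0,1]^d × [0,1]^d, x ↦ K(x,x) is integrable on [0,1]^d, and the functional S(f) = ∫_{[0,1]^d} f(x) dx is continuous on H. For points x_1,…,x_n ∈ [0,1]^d let e(x_1,…,x_n) = sup_{f∈H, ‖f‖_H ≤ 1} | S(f) − (1/n) Σ_{i=1}^n f(x_i) | denote the worst-case error of the quasi-Monte Carlo rule with these points. Then the average of the squared worst-case error over all point sets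 satisfies ∫_{([0,1]^d)^n} e(x_1,…,x_n)² dx_1 ⋯ dx_n = (1/n) ( ∫_{[0,1]^d} K(x,x) dx − ∫_{[0,1]^d} ∫_{[0,1]^d} K(x,y) dx dy ). In particular, there exist points x_1,…,x_n ∈ [0,1]^d with e(x_1,…,x_n)² ≤ (1/n) ( ∫ K(x,x) dx − ∫∫ K(x,y) dx dy ). -/
open MeasureTheory Set

/-!
The space `H` need not be complete, so the argument takes place in its completion `Ĥ`.
By Riesz, the integration functional is `f ↦ ⟪h, f⟫` for some `h : Ĥ`, and the worst-case error
is the norm of `h - (1/n) ∑ KH (x i)` (`sSup_abs_inner_eq_norm`). Expanding the square gives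
`‖h‖² - (2/n) ∑ s (x i) + (1/n²) ∑ ∑ K (x i) (x j)` with `s x = ⟪h, KH x⟫ = ∫ K(y, x) dy`.
Under the product measure the mean of `s (x i)` is `I = ∫∫ K`, the mean of `K (x i) (x j)` is `I`
for `i ≠ j` and `D = ∫ K(x, x) dx` for `i = j`. Moreover `‖h‖² = ∫ s = I`: the function `s` is the
limit of functions `T (f k)` with `f k → h` in `Ĥ`, dominated by a multiple of `1 + K(x, x)`
(`inner_riesz_eq_integral`). Hence the mean is
`I - 2 I + (n D + n (n - 1) I) / n² = (D - I) / n`. The existence statement holds because a function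
is somewhere (outside any null set) at most its mean.
-/

open UniformSpace Filter Topology

/-- A vector `g` of the completion has the norm of the functional it induces on the dense
subspace `H`. -/
lemma sSup_abs_inner_eq_norm {H : Type*} [NormedAddCommGroup H] [InnerProductSpace ℝ H]
    (g : Completion H) :
    sSup {E : ℝ | ∃ f : H, ‖f‖ ≤ 1 ∧ E = |inner ℝ g (f : Completion H)|} = ‖g‖ := by
  set φ : H →L[ℝ] ℝ := (innerSL ℝ g).comp (Completion.toComplL (𝕜 := ℝ)) with hφ
  have hval : ∀ f : H, φ f = inner ℝ g (f : Completion H) := fun f => rfl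
  have hset : {E : ℝ | ∃ f : H, ‖f‖ ≤ 1 ∧ E = |inner ℝ g (f : Completion H)|}
      = (fun f => ‖φ f‖) '' Metric.closedBall 0 1 := by
    ext E
    simp only [mem_ofPred_eq, mem_image, mem_closedBall_zero_iff, hval, Real.norm_eq_abs]
    exact ⟨fun ⟨f, h1, h2⟩ => ⟨f, h1, h2.symm⟩, fun ⟨f, h1, h2⟩ => ⟨f, h1, h2.symm⟩⟩
  rw [hset, ContinuousLinearMap.sSup_unitClosedBall_eq_norm]
  apply le_antisymm
  · refine ContinuousLinearMap.opNorm_le_bound _ (norm_nonneg _) fun f => ?_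
    rw [hval, ← Completion.norm_coe f]
    exact norm_inner_le_norm _ _
  · have key : ∀ u : Completion H, ‖inner ℝ g u‖ ≤ ‖φ‖ * ‖u‖ := by
      intro u
      induction u using Completion.induction_on with
      | hp => exact isClosed_le (by fun_prop) (by fun_prop)
      | ih f =>
        rw [Completion.norm_coe, ← hval]
        exact φ.le_opNorm f
    have h1 := key g
    rw [real_inner_self_eq_norm_sq, Real.norm_of_nonneg (sq_nonneg _), sq] at h1
    rcases (norm_nonneg g).eq_or_lt with h0 | h0
    · rw [← h0]; exact norm_nonneg _
    · exact le_of_mul_le_mul_right h1 h0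

/-- Riesz representation, in the completion, of a continuous functional on `H`. -/
lemma exists_riesz_completion {H : Type*} [NormedAddCommGroup H] [InnerProductSpace ℝ H]
    (φ : H →L[ℝ] ℝ) : ∃ h : Completion H, ∀ f : H, inner ℝ h (f : Completion H) = φ f := by
  refine ⟨(InnerProductSpace.toDual ℝ (Completion H)).symm
    (φ.extend (Completion.toComplL (𝕜 := ℝ))), fun f => ?_⟩
  rw [InnerProductSpace.toDual_symm_apply]
  exact ContinuousLinearMap.extend_eq φ Completion.denseRange_coe
    (Completion.isUniformInducing_coe H) f

/-- If `h` represents integration on `H`, then it represents integration on the completion, where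
a vector `g` is viewed as the function `x ↦ ⟪g, k x⟫`. -/
lemma inner_riesz_eq_integral {H α : Type*} [NormedAddCommGroup H] [InnerProductSpace ℝ H]
    [MeasurableSpace α] (μ : Measure α) [IsFiniteMeasure μ] (k : α → H)
    (hk : Integrable (fun x => ‖k x‖ ^ 2) μ)
    (hint : ∀ f : H, Integrable (fun x => inner ℝ f (k x)) μ)
    (h : Completion H)
    (hh : ∀ f : H, inner ℝ h (f : Completion H) = ∫ x, inner ℝ f (k x) ∂μ)
    (g : Completion H) :
    inner ℝ h g = ∫ x, inner ℝ g (k x : Completion H) ∂μ := by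
  obtain ⟨u, hu, hug⟩ :=
    mem_closure_iff_seq_limit.1 ((Completion.denseRange_coe (α := H)) g)
  choose f hf using hu
  obtain rfl : (fun n => (f n : Completion H)) = u := funext hf
  obtain ⟨M, hM⟩ := hug.norm.bddAbove_range
  have hM' : ∀ n, ‖f n‖ ≤ M := fun n => by
    rw [← Completion.norm_coe]; exact hM ⟨n, rfl⟩
  have hM0 : 0 ≤ M := (norm_nonneg _).trans (hM' 0)
  have l1 : Tendsto (fun n => ∫ x, inner ℝ (f n) (k x) ∂μ) atTop
      (𝓝 (∫ x, inner ℝ g (k x : Completion H) ∂μ)) := by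
    refine tendsto_integral_of_dominated_convergence (fun x => M * (1 + ‖k x‖ ^ 2))
      (fun n => (hint _).aestronglyMeasurable) (((integrable_const _).add hk).const_mul M) ?_ ?_
    · refine fun n => ae_of_all _ fun x => (norm_inner_le_norm _ _).trans ?_
      have : ‖k x‖ ≤ 1 + ‖k x‖ ^ 2 := by nlinarith [sq_nonneg (‖k x‖ - 1), norm_nonneg (k x)]
      exact mul_le_mul (hM' n) this (norm_nonneg _) hM0
    · refine ae_of_all _ fun x => ?_
      have hx : Tendsto (fun n => inner ℝ (f n : Completion H) (k x : Completion H)) atTop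
          (𝓝 (inner ℝ g (k x : Completion H))) := hug.inner tendsto_const_nhds
      exact hx.congr fun n => Completion.inner_coe _ _
  have l2 : Tendsto (fun n => inner ℝ h (f n : Completion H)) atTop (𝓝 (inner ℝ h g)) :=
    tendsto_const_nhds.inner hug
  exact tendsto_nhds_unique (l2.congr fun n => hh (f n)) l1

/-- Two distinct coordinates of a product probability measure are jointly distributed as
`μ ⊗ μ`. -/
lemma measurePreserving_eval_pair {α : Type*} [MeasurableSpace α] (μ : Measure α)
    [IsProbabilityMeasure μ] {n : ℕ} {i j : Fin n} (hij : i ≠ j) :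
    MeasurePreserving (fun X : Fin n → α => (X i, X j)) (Measure.pi fun _ => μ) (μ.prod μ) := by
  refine ⟨by fun_prop, ?_⟩
  have hind := ProbabilityTheory.iIndepFun_pi (μ := fun _ : Fin n => μ)
    (X := fun _ => (id : α → α)) (fun _ => aemeasurable_id)
  have h2 := (ProbabilityTheory.indepFun_iff_map_prod_eq_prod_map_map
    (measurable_pi_apply i).aemeasurable (measurable_pi_apply j).aemeasurable).1 (hind.indepFun hij)
  have e : ∀ i, Measure.map (fun X : Fin n → α => X i) (Measure.pi fun _ => μ) = μ :=
    fun i => (measurePreserving_eval (fun _ : Fin n => μ) i).map_eq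
  rw [e, e] at h2
  exact h2

/-- The mean of the squared worst case error of QMC rules over all point sets:
for a reproducing kernel Hilbert space `H` of real functions on `[0,1]^d` (realized
by a linear embedding `T`, kernel sections `KH y` and the reproducing property),
with integrable kernel `K` and integrable diagonal, and continuous integration
functional `S f = ∫_{[0,1]^d} T f`, the average over `(x_1,…,x_n) ∈ ([0,1]^d)^n` of
`e(x_1,…,x_n)² = (sup_{‖f‖ ≤ 1} |S f - (1/n) ∑ f(x_i)|)²` equals
`(1/n) (∫ K(x,x) dx - ∫∫ K(x,y) dx dy)`; in particular some point set achieves a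
squared worst case error at most this value. -/
theorem stmt11 (d n : ℕ) (hd : 1 ≤ d) (hn : 1 ≤ n)
    (H : Type) [NormedAddCommGroup H] [InnerProductSpace ℝ H]
    (T : H →ₗ[ℝ] ((Fin d → ℝ) → ℝ))
    (K : (Fin d → ℝ) → (Fin d → ℝ) → ℝ) (KH : (Fin d → ℝ) → H)
    (hKH : ∀ y ∈ Set.Icc (0 : Fin d → ℝ) 1, ∀ x ∈ Set.Icc (0 : Fin d → ℝ) 1,
      T (KH y) x = K x y)
    (hrepr : ∀ (f : H), ∀ y ∈ Set.Icc (0 : Fin d → ℝ) 1,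
      inner (𝕜 := ℝ) f (KH y) = T f y)
    (hKint : IntegrableOn (fun z : (Fin d → ℝ) × (Fin d → ℝ) => K z.1 z.2)
      (Set.Icc (0 : Fin d → ℝ) 1 ×ˢ Set.Icc (0 : Fin d → ℝ) 1))
    (hKdiag : IntegrableOn (fun x => K x x) (Set.Icc (0 : Fin d → ℝ) 1))
    (hSint : ∀ f : H, IntegrableOn (T f) (Set.Icc (0 : Fin d → ℝ) 1))
    (hScont : Continuous fun f : H => ∫ x in Set.Icc (0 : Fin d → ℝ) 1, T f x) :
    (∫ X : Fin n → Fin d → ℝ,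
        (sSup {E : ℝ | ∃ f : H, ‖f‖ ≤ 1 ∧
          E = |(∫ x in Set.Icc (0 : Fin d → ℝ) 1, T f x) -
                (1 / n : ℝ) * ∑ i, T f (X i)|}) ^ 2
        ∂(Measure.pi fun _ : Fin n => volume.restrict (Set.Icc (0 : Fin d → ℝ) 1)))
      = (1 / n : ℝ) *
        ((∫ x in Set.Icc (0 : Fin d → ℝ) 1, K x x) -
          ∫ x in Set.Icc (0 : Fin d → ℝ) 1, ∫ y in Set.Icc (0 : Fin d → ℝ) 1, K x y) ∧
    ∃ X : Fin n → Fin d → ℝ, (∀ i, X i ∈ Set.Icc (0 : Fin d → ℝ) 1) ∧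
      (sSup {E : ℝ | ∃ f : H, ‖f‖ ≤ 1 ∧
          E = |(∫ x in Set.Icc (0 : Fin d → ℝ) 1, T f x) -
                (1 / n : ℝ) * ∑ i, T f (X i)|}) ^ 2
        ≤ (1 / n : ℝ) *
          ((∫ x in Set.Icc (0 : Fin d → ℝ) 1, K x x) -
            ∫ x in Set.Icc (0 : Fin d → ℝ) 1, ∫ y in Set.Icc (0 : Fin d → ℝ) 1, K x y) := by
  set Q : Set (Fin d → ℝ) := Set.Icc (0 : Fin d → ℝ) 1 with hQ
  set μ : Measure (Fin d → ℝ) := volume.restrict Q with hμ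
  have hQm : MeasurableSet Q := measurableSet_Icc
  have hprob : IsProbabilityMeasure μ := by
    refine ⟨?_⟩
    rw [hμ, Measure.restrict_apply_univ, hQ, Real.volume_Icc_pi]
    simp
  have hQae : ∀ᵐ x ∂μ, x ∈ Q := ae_restrict_mem hQm
  have hn0 : (n : ℝ) ≠ 0 := by exact_mod_cast (by omega : n ≠ 0)
  have hKinner : ∀ x ∈ Q, ∀ y ∈ Q, K x y = inner ℝ (KH x) (KH y) := fun x hx y hy => by
    rw [← hKH y hy x hx, ← hrepr _ x hx, real_inner_comm]
  have hKsymm : ∀ x ∈ Q, ∀ y ∈ Q, K x y = K y x := fun x hx y hy => by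
    rw [hKinner x hx y hy, hKinner y hy x hx, real_inner_comm]
  have hKprod : Integrable (fun z : (Fin d → ℝ) × (Fin d → ℝ) => K z.1 z.2) (μ.prod μ) := by
    rw [hμ, Measure.prod_restrict]
    exact hKint
  -- the Riesz representer `h` of integration
  let S : H →L[ℝ] ℝ :=
    { toFun := fun f => ∫ x in Q, T f x
      map_add' := fun f g => by
        simp only [map_add, Pi.add_apply]
        exact integral_add (hSint f) (hSint g)
      map_smul' := fun c f => by
        simp only [map_smul, Pi.smul_apply, smul_eq_mul, RingHom.id_apply]
        exact integral_const_mul _ _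
      cont := hScont }
  obtain ⟨h, hh⟩ := exists_riesz_completion S
  have hh : ∀ f : H, inner ℝ h (f : Completion H) = ∫ x, T f x ∂μ := hh
  set D : ℝ := ∫ x in Q, K x x with hD
  set I : ℝ := ∫ x in Q, ∫ y in Q, K x y with hI
  have hIprod : ∫ z, K z.1 z.2 ∂(μ.prod μ) = I := integral_prod _ hKprod
  -- `s x = ⟪h, KH x⟫` is the partial integral of the kernel
  have hs : ∀ x ∈ Q, inner ℝ h (KH x : Completion H) = ∫ y, K x y ∂μ := fun x hx => by
    rw [hh]
    refine integral_congr_ae ?_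
    filter_upwards [hQae] with y hy
    rw [hKH x hx y hy, hKsymm y hy x hx]
  have hsae : (fun x => ∫ y, K x y ∂μ) =ᵐ[μ] fun x => inner ℝ h (KH x : Completion H) := by
    filter_upwards [hQae] with x hx
    rw [hs x hx]
  have hsint : Integrable (fun x => inner ℝ h (KH x : Completion H)) μ :=
    hKprod.integral_prod_left.congr hsae
  have hsI : ∫ x, inner ℝ h (KH x : Completion H) ∂μ = I := (integral_congr_ae hsae).symm
  have hT : ∀ f : H, T f =ᵐ[μ] fun x => inner ℝ f (KH x) := fun f => by
    filter_upwards [hQae] with x hx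
    rw [hrepr f x hx]
  have hhI : ‖h‖ ^ 2 = I := by
    rw [← real_inner_self_eq_norm_sq, ← hsI]
    refine inner_riesz_eq_integral μ KH ?_ ?_ h ?_ h
    · refine Integrable.congr hKdiag ?_
      filter_upwards [hQae] with x hx
      rw [hKinner x hx x hx, real_inner_self_eq_norm_sq]
    · exact fun f => Integrable.congr (hSint f) (hT f)
    · exact fun f => (hh f).trans (integral_congr_ae (hT f))
  set ν : Measure (Fin n → Fin d → ℝ) := Measure.pi fun _ : Fin n => μ with hν
  have hνQ : ∀ᵐ X ∂ν, ∀ i, X i ∈ Q := ae_all_iff.2 fun i =>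
    (measurePreserving_eval (fun _ : Fin n => μ) i).quasiMeasurePreserving.ae hQae
  set e : (Fin n → Fin d → ℝ) → ℝ := fun X => (sSup {E : ℝ | ∃ f : H, ‖f‖ ≤ 1 ∧
    E = |(∫ x in Q, T f x) - (1 / n : ℝ) * ∑ i, T f (X i)|}) ^ 2 with he
  set F : (Fin n → Fin d → ℝ) → ℝ := fun X =>
    I - (2 / n : ℝ) * ∑ i, inner ℝ h (KH (X i) : Completion H)
      + (1 / n : ℝ) ^ 2 * ∑ i, ∑ j, K (X i) (X j) with hF
  have heF : ∀ X, (∀ i, X i ∈ Q) → e X = F X := by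
    intro X hX
    set w : H := ∑ i, KH (X i) with hw
    have h1 : {E : ℝ | ∃ f : H, ‖f‖ ≤ 1 ∧
        E = |(∫ x in Q, T f x) - (1 / n : ℝ) * ∑ i, T f (X i)|} =
        {E : ℝ | ∃ f : H, ‖f‖ ≤ 1 ∧
        E = |inner ℝ (h - (((1 / n : ℝ) • w : H) : Completion H)) (f : Completion H)|} := by
      ext E
      have : ∀ f : H, (∫ x in Q, T f x) - (1 / n : ℝ) * ∑ i, T f (X i) =
          inner ℝ (h - (((1 / n : ℝ) • w : H) : Completion H)) (f : Completion H) := by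
        intro f
        rw [inner_sub_left, hh, Completion.inner_coe, real_inner_smul_left, hw, sum_inner]
        congr 2
        exact Finset.sum_congr rfl fun i _ => by rw [← hrepr f _ (hX i), real_inner_comm]
      simp only [this]
    have hw1 : inner ℝ h (w : Completion H) = ∑ i, inner ℝ h (KH (X i) : Completion H) := by
      have : (w : Completion H) = ∑ i, (KH (X i) : Completion H) :=
        map_sum (Completion.toCompl (α := H)) _ _
      rw [this, inner_sum]
    have hw2 : ‖w‖ ^ 2 = ∑ i, ∑ j, K (X i) (X j) := by
      rw [← real_inner_self_eq_norm_sq, hw, sum_inner]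
      refine Finset.sum_congr rfl fun i _ => ?_
      rw [inner_sum]
      exact Finset.sum_congr rfl fun j _ => (hKinner _ (hX i) _ (hX j)).symm
    simp only [he, hF]
    rw [h1, sSup_abs_inner_eq_norm, norm_sub_sq_real, Completion.norm_coe, norm_smul, mul_pow,
      hw2, Completion.coe_smul, real_inner_smul_right, hw1, hhI, Real.norm_eq_abs, sq_abs]
    ring
  have heFae : e =ᵐ[ν] F := hνQ.mono heF
  have hs1 : ∀ i, Integrable (fun X : Fin n → Fin d → ℝ =>
      inner ℝ h (KH (X i) : Completion H)) ν := fun i =>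
    (measurePreserving_eval (fun _ : Fin n => μ) i).integrable_comp_of_integrable hsint
  have hs2 : ∀ i, ∫ X : Fin n → Fin d → ℝ, inner ℝ h (KH (X i) : Completion H) ∂ν = I := fun i => by
    rw [← hsI]
    exact integral_comp_eval (μ := fun _ : Fin n => μ) (i := i) hsint.aestronglyMeasurable
  have hK1 : ∀ i j, Integrable (fun X : Fin n → Fin d → ℝ => K (X i) (X j)) ν := fun i j => by
    by_cases hij : i = j
    · subst hij
      exact (measurePreserving_eval (fun _ : Fin n => μ) i).integrable_comp_of_integrable
        (g := fun x => K x x) hKdiag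
    · exact (measurePreserving_eval_pair μ hij).integrable_comp_of_integrable hKprod
  have hK2 : ∀ i j, ∫ X : Fin n → Fin d → ℝ, K (X i) (X j) ∂ν = I + if i = j then D - I else 0 :=
    fun i j => by
    by_cases hij : i = j
    · subst hij
      rw [if_pos rfl, add_sub_cancel]
      exact integral_comp_eval (μ := fun _ : Fin n => μ) (i := i) (f := fun x => K x x)
        hKdiag.aestronglyMeasurable
    · have hmp := measurePreserving_eval_pair μ hij
      rw [if_neg hij, add_zero, ← hIprod, ← hmp.map_eq,
        integral_map hmp.measurable.aemeasurable
          (by rw [hmp.map_eq]; exact hKprod.aestronglyMeasurable)]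
  have hS1 : Integrable (fun X : Fin n → Fin d → ℝ =>
      ∑ i, inner ℝ h (KH (X i) : Completion H)) ν := integrable_finsetSum _ fun i _ => hs1 i
  have hS2 : Integrable (fun X : Fin n → Fin d → ℝ => ∑ i, ∑ j, K (X i) (X j)) ν :=
    integrable_finsetSum _ fun i _ => integrable_finsetSum _ fun j _ => hK1 i j
  have hFint1 : Integrable (fun X : Fin n → Fin d → ℝ =>
      I - (2 / n : ℝ) * ∑ i, inner ℝ h (KH (X i) : Completion H)) ν :=
    (integrable_const _).sub (hS1.const_mul _)
  have hFint : Integrable F ν := hFint1.add (hS2.const_mul _)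
  have hmean : ∫ X, e X ∂ν = (1 / n : ℝ) * (D - I) := by
    rw [integral_congr_ae heFae]
    simp only [hF]
    rw [integral_add hFint1 (hS2.const_mul _), integral_sub (integrable_const _) (hS1.const_mul _),
      integral_const_mul, integral_const_mul, integral_finsetSum _ fun i _ => hs1 i,
      integral_finsetSum _ fun i _ => integrable_finsetSum _ fun j _ => hK1 i j]
    simp_rw [integral_finsetSum _ fun j _ => hK1 _ j, hs2, hK2]
    simp only [Finset.sum_add_distrib, Finset.sum_ite_eq, Finset.mem_univ, if_true,
      Finset.sum_const, Finset.card_univ, Fintype.card_fin, nsmul_eq_mul, integral_const,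
      probReal_univ, one_smul]
    field_simp
    ring
  refine ⟨hmean, ?_⟩
  obtain ⟨X, hX, hle⟩ := exists_notMem_null_le_integral (hFint.congr heFae.symm)
    (ae_iff.1 hνQ)
  rw [hmean] at hle
  exact ⟨X, by simpa using hX, hle⟩
end
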